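/- arXiv:math/0303312 — 2 statements merged into one kernel-verified Lean document; each statement's English description precedes it below -/
import Mathlib

section
/- Let n be a positive integer, let γ₀ = (1,2,...,n) be the forward cycle on [n], and let τ be a permutation of [n]. Then τ ∉ S_disc-nc(n) if and only if τ satisfies at least one of the following two conditions: (DNS) there exist 3 distinct elements a,b,c ∈ [n] such that γ₀|{a,b,c} = (a,b,c) and τ|{a,b,c} = (a,c,b); (DC) there exist 4 distinct elements a,b,c,d ∈ [n] such that γ₀|{a,b,c,d} = (a,b,c,d) and τ|{a,b,c,d} = (a,c)(b,d). -/
/-- The permutation induced by `f` on the subset `B`: an element `b` is sent to the first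
element of the sequence `f b, f (f b), f (f (f b)), ...` that lies in `B`
(and is left fixed if no iterate ever returns to `B`). -/
noncomputable def induced {α : Type*} (f : α → α) (B : Set α) (b : α) : α := by
  classical
  exact if h : ∃ k, 0 < k ∧ f^[k] b ∈ B then f^[Nat.find h] b else b

/-- `A` is an orbit of the permutation `τ`. -/
def IsOrbit {α : Type*} (τ : Equiv.Perm α) (A : Set α) : Prop :=
  ∃ a, A = {b | τ.SameCycle a b}

/-- The number of orbits of `τ` (fixed points count as orbits). -/
noncomputable def numOrbits {α : Type*} (τ : Equiv.Perm α) : ℕ :=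
  Set.ncard {A : Set α | IsOrbit τ A}

/-- `induced f S` acts on `a, b, c` as the 3-cycle `(a, b, c)`. -/
def MapsCyc3 {α : Type*} (f : α → α) (S : Set α) (a b c : α) : Prop :=
  induced f S a = b ∧ induced f S b = c ∧ induced f S c = a

/-- `induced f S` acts on `a, b, c, d` as the 4-cycle `(a, b, c, d)`. -/
def MapsCyc4 {α : Type*} (f : α → α) (S : Set α) (a b c d : α) : Prop :=
  induced f S a = b ∧ induced f S b = c ∧ induced f S c = d ∧ induced f S d = a

/-- `induced f S` acts on `a, b, c, d` as the product of transpositions `(a, c)(b, d)`. -/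
def MapsSwap2 {α : Type*} (f : α → α) (S : Set α) (a b c d : α) : Prop :=
  induced f S a = c ∧ induced f S c = a ∧ induced f S b = d ∧ induced f S d = b

/-- `induced f S` acts on `x, y` as the transposition `(x, y)`. -/
def MapsSwap {α : Type*} (f : α → α) (S : Set α) (x y : α) : Prop :=
  induced f S x = y ∧ induced f S y = x

/-- `σ` is standard with respect to the "forward cycle" `γ₀`, i.e. `σ∣B = γ₀∣B` for
every orbit `B` of `σ`. -/
def DiscStandardRel {n : ℕ} (γ₀ σ : Equiv.Perm (Fin n)) : Prop :=
  ∀ A : Set (Fin n), IsOrbit σ A → ∀ b ∈ A, induced (⇑σ) A b = induced (⇑γ₀) A b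

/-- The orbit partition of `σ` has no crossing: there are no `a < b < c < d` with
`a, c` in one orbit and `b, d` in a different orbit. -/
def OrbitsNoCrossing {n : ℕ} (σ : Equiv.Perm (Fin n)) : Prop :=
  ¬ ∃ a b c d : Fin n, a < b ∧ b < c ∧ c < d ∧
      σ.SameCycle a c ∧ σ.SameCycle b d ∧ ¬ σ.SameCycle a b

/-- Disc non-crossing relative to a given forward cycle `γ₀`. -/
def DiscNCRel {n : ℕ} (γ₀ σ : Equiv.Perm (Fin n)) : Prop :=
  DiscStandardRel γ₀ σ ∧ OrbitsNoCrossing σ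

/-- The set `S_disc-nc(n)` of disc non-crossing permutations of `[n]`
(here `[n] = {1, …, n}` is modelled by `Fin n`, and the forward cycle
`γ₀ = (1, 2, …, n)` is `finRotate n`). -/
def DiscNC {n : ℕ} (σ : Equiv.Perm (Fin n)) : Prop :=
  DiscNCRel (finRotate n) σ

/-- The external points `{1, …, p}` (0-indexed: values `< p`). -/
def extSet (p q : ℕ) : Set (Fin (p + q)) := {i | (i : ℕ) < p}

/-- The internal points `{p+1, …, p+q}` (0-indexed: values `≥ p`). -/
def intSet (p q : ℕ) : Set (Fin (p + q)) := {i | p ≤ (i : ℕ)}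

/-- `γ_ext = (1, 2, …, p)`, the forward cycle on the external points. -/
def gammaExt (p q : ℕ) : Equiv.Perm (Fin (p + q)) :=
  ((List.finRange (p + q)).take p).formPerm

/-- `γ_int = (p+1, p+2, …, p+q)`, the forward cycle on the internal points. -/
def gammaInt (p q : ℕ) : Equiv.Perm (Fin (p + q)) :=
  ((List.finRange (p + q)).drop p).formPerm

/-- `γ = γ_ext · γ_int`. -/
def gammaAnn (p q : ℕ) : Equiv.Perm (Fin (p + q)) := gammaExt p q * gammaInt p q

/-- `λ_{x,y}`: the permutation fixing `x` and `y` and cycling the remaining points as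
`(γ_ext(x), γ_ext²(x), …, γ_ext^{p-1}(x), γ_int(y), γ_int²(y), …, γ_int^{q-1}(y))`. -/
def lamPerm (p q : ℕ) (x y : Fin (p + q)) : Equiv.Perm (Fin (p + q)) :=
  (((List.range (p - 1)).map fun k => (gammaExt p q ^ (k + 1)) x) ++
    ((List.range (q - 1)).map fun k => (gammaInt p q ^ (k + 1)) y)).formPerm

/-- `τ` is standard in `(p,q)`-annular sense. -/
def AnnStandard (p q : ℕ) (τ : Equiv.Perm (Fin (p + q))) : Prop :=
  (∀ A : Set (Fin (p + q)), IsOrbit τ A →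
    (∀ b ∈ A ∩ extSet p q,
        induced (⇑τ) (A ∩ extSet p q) b = induced (⇑(gammaExt p q)) (A ∩ extSet p q) b) ∧
    (∀ b ∈ A ∩ intSet p q,
        induced (⇑τ) (A ∩ intSet p q) b = induced (⇑(gammaInt p q)) (A ∩ intSet p q) b)) ∧
  (∀ A : Set (Fin (p + q)), IsOrbit τ A →
    (A ∩ extSet p q).Nonempty → (A ∩ intSet p q).Nonempty →
    (∃! a, a ∈ A ∩ extSet p q ∧ τ a ∈ intSet p q) ∧
    (∃! a, a ∈ A ∩ intSet p q ∧ τ a ∈ extSet p q))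

/-- The annular crossing pattern (AC-1). -/
def AC1 (p q : ℕ) (τ : Equiv.Perm (Fin (p + q))) : Prop :=
  ∃ a b c d : Fin (p + q), List.Pairwise (· ≠ ·) [a, b, c, d] ∧
    MapsCyc4 (⇑(gammaAnn p q)) {a, b, c, d} a b c d ∧
    MapsSwap2 (⇑τ) {a, b, c, d} a b c d

/-- The annular crossing pattern (AC-2). -/
def AC2 (p q : ℕ) (τ : Equiv.Perm (Fin (p + q))) : Prop :=
  ∃ a b c x y : Fin (p + q), List.Pairwise (· ≠ ·) [a, b, c, x, y] ∧
    x ∈ extSet p q ∧ y ∈ intSet p q ∧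
    MapsCyc3 (⇑(lamPerm p q x y)) {a, b, c} a b c ∧
    MapsCyc3 (⇑τ) {a, b, c, x, y} a c b ∧
    MapsSwap (⇑τ) {a, b, c, x, y} x y

/-- The annular crossing pattern (AC-3). -/
def AC3 (p q : ℕ) (τ : Equiv.Perm (Fin (p + q))) : Prop :=
  ∃ a b c d x y : Fin (p + q), List.Pairwise (· ≠ ·) [a, b, c, d, x, y] ∧
    x ∈ extSet p q ∧ y ∈ intSet p q ∧
    MapsCyc4 (⇑(lamPerm p q x y)) {a, b, c, d} a b c d ∧
    MapsSwap2 (⇑τ) {a, b, c, d, x, y} a b c d ∧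
    MapsSwap (⇑τ) {a, b, c, d, x, y} x y

/-- The set `S_ann-nc(p,q)` of `(p,q)`-annular non-crossing permutations. -/
def AnnNC (p q : ℕ) (τ : Equiv.Perm (Fin (p + q))) : Prop :=
  AnnStandard p q τ ∧ ¬ AC1 p q τ ∧ ¬ AC2 p q τ ∧ ¬ AC3 p q τ

/-- A `(p,q)`-connecting set: meets both the external and internal points. -/
def ConnectingBlock (p q : ℕ) (B : Set (Fin (p + q))) : Prop :=
  (B ∩ extSet p q).Nonempty ∧ (B ∩ intSet p q).Nonempty

/-- `τ` is `(p,q)`-connected: it has a `(p,q)`-connecting orbit. -/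
def AnnConnected (p q : ℕ) (τ : Equiv.Perm (Fin (p + q))) : Prop :=
  ∃ A : Set (Fin (p + q)), IsOrbit τ A ∧ ConnectingBlock p q A

/-- A family of blocks has no crossing: no `a < b < c < d` with `a, c` in one block and
`b, d` in a different block. -/
def NoCrossing {n : ℕ} (ρ : Set (Set (Fin n))) : Prop :=
  ¬ ∃ (a b c d : Fin n) (B C : Set (Fin n)), B ∈ ρ ∧ C ∈ ρ ∧ B ≠ C ∧
      a < b ∧ b < c ∧ c < d ∧ a ∈ B ∧ c ∈ B ∧ b ∈ C ∧ d ∈ C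

/-- Condition (DNS): there are 3 distinct elements `a, b, c` with
`γ₀∣{a,b,c} = (a,b,c)` and `τ∣{a,b,c} = (a,c,b)`. -/
def DNS {n : ℕ} (τ : Equiv.Perm (Fin n)) : Prop :=
  ∃ a b c : Fin n, List.Pairwise (· ≠ ·) [a, b, c] ∧
    MapsCyc3 (⇑(finRotate n)) {a, b, c} a b c ∧ MapsCyc3 (⇑τ) {a, b, c} a c b

/-- Condition (DC): there are 4 distinct elements `a, b, c, d` with
`γ₀∣{a,b,c,d} = (a,b,c,d)` and `τ∣{a,b,c,d} = (a,c)(b,d)`. -/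
def DC {n : ℕ} (τ : Equiv.Perm (Fin n)) : Prop :=
  ∃ a b c d : Fin n, List.Pairwise (· ≠ ·) [a, b, c, d] ∧
    MapsCyc4 (⇑(finRotate n)) {a, b, c, d} a b c d ∧
    MapsSwap2 (⇑τ) {a, b, c, d} a b c d

theorem induced_eq_of {α : Type*} {f : α → α} {B : Set α} {b : α} {k : ℕ} (hk : 0 < k)
    (hB : f^[k] b ∈ B) (hmin : ∀ j, 0 < j → j < k → f^[j] b ∉ B) :
    induced f B b = f^[k] b := by
  classical
  have h : ∃ k, 0 < k ∧ f^[k] b ∈ B := ⟨k, hk, hB⟩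
  have e : Nat.find h = k := by
    rw [Nat.find_eq_iff]
    exact ⟨⟨hk, hB⟩, fun j hj hc => hmin j hc.1 hj hc.2⟩
  unfold induced
  rw [dif_pos h]
  convert rfl using 2
  rw [← e]

theorem exists_first {α : Type*} {f : α → α} {B : Set α} {b : α}
    (h : ∃ k, 0 < k ∧ f^[k] b ∈ B) :
    ∃ k, 0 < k ∧ f^[k] b ∈ B ∧ (∀ j, 0 < j → j < k → f^[j] b ∉ B) ∧
      induced f B b = f^[k] b := by
  classical
  have h1 := Nat.find_spec h
  have h2 : ∀ j, 0 < j → j < Nat.find h → f^[j] b ∉ B :=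
    fun j h0 hj hc => Nat.find_min h hj ⟨h0, hc⟩
  exact ⟨_, h1.1, h1.2, h2, induced_eq_of h1.1 h1.2 h2⟩

/-- If `b` is in `B`, a permutation of a finite type returns. -/
theorem exists_return {n : ℕ} (f : Equiv.Perm (Fin n)) {B : Set (Fin n)} {b : Fin n}
    (hb : b ∈ B) : ∃ k, 0 < k ∧ (⇑f)^[k] b ∈ B := by
  refine ⟨orderOf f, orderOf_pos f, ?_⟩
  rw [Equiv.Perm.iterate_eq_pow, pow_orderOf_eq_one]
  exact hb

theorem first_perm {n : ℕ} (f : Equiv.Perm (Fin n)) {B : Set (Fin n)} {b : Fin n}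
    (hb : b ∈ B) : ∃ k, 0 < k ∧ (⇑f)^[k] b ∈ B ∧ (∀ j, 0 < j → j < k → (⇑f)^[j] b ∉ B) ∧
      induced f B b = (⇑f)^[k] b := exists_first (exists_return f hb)

theorem induced_mem {n : ℕ} (f : Equiv.Perm (Fin n)) {B : Set (Fin n)} {b : Fin n}
    (hb : b ∈ B) : induced f B b ∈ B := by
  obtain ⟨k, -, h, -, e⟩ := first_perm f hb
  rw [e]; exact h

theorem sameCycle_iterate {n : ℕ} (f : Equiv.Perm (Fin n)) (b : Fin n) (k : ℕ) :
    f.SameCycle b ((⇑f)^[k] b) := by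
  rw [Equiv.Perm.iterate_eq_pow]
  exact ⟨k, by simp⟩

theorem induced_sameCycle {n : ℕ} (f : Equiv.Perm (Fin n)) {B : Set (Fin n)} {b : Fin n}
    (hb : b ∈ B) : f.SameCycle b (induced f B b) := by
  obtain ⟨k, -, -, -, e⟩ := first_perm f hb
  rw [e]; exact sameCycle_iterate f b k

theorem induced_ne_self {n : ℕ} (f : Equiv.Perm (Fin n)) {B : Set (Fin n)} {b c : Fin n}
    (hb : b ∈ B) (hc : c ∈ B) (hbc : b ≠ c) (hs : f.SameCycle b c) : induced f B b ≠ b := by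
  obtain ⟨k, hk, h, hmin, e⟩ := first_perm f hb
  rw [e]
  intro hper
  obtain ⟨i, hi⟩ := hs.exists_nat_pow_eq
  rw [← Equiv.Perm.iterate_eq_pow] at hi
  have hp : Function.IsPeriodicPt (⇑f) k b := hper
  have h2 := hp.iterate_mod_apply i
  rw [hi] at h2
  rcases Nat.eq_zero_or_pos (i % k) with h0 | h0
  · rw [h0] at h2; exact hbc h2
  · exact hmin _ h0 (Nat.mod_lt _ hk) (h2 ▸ hc)

theorem induced_inj {n : ℕ} (f : Equiv.Perm (Fin n)) {B : Set (Fin n)} {a b : Fin n}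
    (ha : a ∈ B) (hb : b ∈ B) (h : induced f B a = induced f B b) : a = b := by
  obtain ⟨k, hk, h1, hmin, e⟩ := first_perm f ha
  obtain ⟨m, hm, h1', hmin', e'⟩ := first_perm f hb
  rw [e, e'] at h
  rcases lt_trichotomy k m with hl | hl | hl
  · obtain ⟨t, rfl⟩ := Nat.exists_eq_add_of_lt hl
    rw [show k + t + 1 = k + (t + 1) by ring, Function.iterate_add_apply] at h
    have := (f.injective.iterate k) h
    exact absurd (this ▸ ha) (hmin' (t + 1) (by omega) (by omega))
  · subst hl
    exact (f.injective.iterate k) h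
  · obtain ⟨t, rfl⟩ := Nat.exists_eq_add_of_lt hl
    rw [show m + t + 1 = m + (t + 1) by ring, Function.iterate_add_apply] at h
    have := (f.injective.iterate m) h
    exact absurd (this ▸ hb) (hmin (t + 1) (by omega) (by omega))

theorem induced_orbit {n : ℕ} (f : Equiv.Perm (Fin n)) {A : Set (Fin n)} (hA : IsOrbit f A)
    {b : Fin n} (hb : b ∈ A) : induced f A b = f b := by
  obtain ⟨a, rfl⟩ := hA
  refine induced_eq_of (k := 1) one_pos ?_ (fun j h1 h2 => by omega)
  simpa using hb

/-- Inducing in two steps. -/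
theorem induced_induced {α : Type*} {f : α → α} {A B : Set α} (hBA : B ⊆ A) (k : ℕ) :
    ∀ b, 0 < k → f^[k] b ∈ B → (∀ j, 0 < j → j < k → f^[j] b ∉ B) →
    ∃ m, 0 < m ∧ (induced f A)^[m] b = f^[k] b ∧
      ∀ j, 0 < j → j < m → (induced f A)^[j] b ∉ B := by
  induction k using Nat.strong_induction_on with
  | _ k ih =>
  intro b hk hB hmin
  obtain ⟨i, hi, hiA, himin, e⟩ := exists_first (f := f) (B := A) (b := b) ⟨k, hk, hBA hB⟩
  have hik : i ≤ k := by
    by_contra hlt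
    exact himin k hk (by omega) (hBA hB)
  rcases hik.eq_or_lt with rfl | hlt
  · exact ⟨1, one_pos, by simpa using e, fun j h1 h2 => by omega⟩
  · have key : ∀ j, f^[j] (f^[i] b) = f^[j + i] b := fun j => by
      rw [Function.iterate_add_apply]
    obtain ⟨m, hm, h1, h2⟩ := ih (k - i) (by omega) (f^[i] b) (by omega)
      (by rw [key, Nat.sub_add_cancel hik]; exact hB)
      (fun j hj0 hj => by rw [key]; exact hmin _ (by omega) (by omega))
    rw [key, Nat.sub_add_cancel hik] at h1
    refine ⟨m + 1, by omega, by rw [Function.iterate_succ_apply, e, h1], ?_⟩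
    intro j hj0 hj
    obtain ⟨j, rfl⟩ : ∃ t, j = t + 1 := ⟨j - 1, by omega⟩
    rw [Function.iterate_succ_apply, e]
    rcases Nat.eq_zero_or_pos j with rfl | hj1
    · exact hmin i hi hlt
    · exact h2 j hj1 (by omega)

theorem std_restrict {n : ℕ} {γ τ : Equiv.Perm (Fin n)} (hstd : DiscStandardRel γ τ)
    {A B : Set (Fin n)} (hA : IsOrbit τ A) (hBA : B ⊆ A) {b : Fin n} (hb : b ∈ B) :
    induced τ B b = induced γ B b := by
  obtain ⟨k, hk, h1, hmin, e⟩ := first_perm γ hb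
  obtain ⟨m, hm, h2, h3⟩ := induced_induced hBA k b hk h1 hmin
  have hit : ∀ j, (induced γ A)^[j] b = (⇑τ)^[j] b ∧ (⇑τ)^[j] b ∈ A := by
    intro j
    induction j with
    | zero => exact ⟨rfl, hBA hb⟩
    | succ j ih =>
      rw [Function.iterate_succ_apply', Function.iterate_succ_apply', ih.1,
        ← hstd A hA _ ih.2, induced_orbit τ hA ih.2]
      refine ⟨rfl, ?_⟩
      rw [← induced_orbit τ hA ih.2]
      exact induced_mem τ ih.2
  rw [e, ← h2, (hit m).1]
  refine induced_eq_of hm ?_ ?_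
  · rw [← (hit m).1, h2]; exact h1
  · intro j hj0 hj
    rw [← (hit j).1]; exact h3 j hj0 hj

theorem cyc3_of {n : ℕ} (f : Equiv.Perm (Fin n)) {S : Set (Fin n)} {a b c : Fin n}
    (hS : S = {a, b, c}) (hab : a ≠ b) (hac : a ≠ c) (hbc : b ≠ c)
    (sab : f.SameCycle a b) (sac : f.SameCycle a c) (h : induced f S a = b) :
    MapsCyc3 f S a b c := by
  have ha : a ∈ S := by simp [hS]
  have hb : b ∈ S := by simp [hS]
  have hc : c ∈ S := by simp [hS]
  have mb := induced_mem f hb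
  have mc := induced_mem f hc
  have nb := induced_ne_self f hb ha hab.symm sab.symm
  have nc := induced_ne_self f hc ha hac.symm sac.symm
  have i1 := fun h => hac (induced_inj f ha hc h)
  have i2 := fun h => hbc (induced_inj f hb hc h)
  have hmem : ∀ x, x ∈ S ↔ x = a ∨ x = b ∨ x = c := by simp [hS]
  rw [hmem] at mb mc
  rw [h] at i1
  have hca : induced f S c = a := by
    rcases mc with h' | h' | h'
    · exact h'
    · exact absurd h'.symm i1
    · exact absurd h' nc
  refine ⟨h, ?_, hca⟩
  rcases mb with h' | h' | h'
  · exact absurd (h'.trans hca.symm) i2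
  · exact absurd h' nb
  · exact h'

theorem rot_iterate {n : ℕ} (a : Fin n) (k : ℕ) :
    (((⇑(finRotate n))^[k] a : Fin n) : ℕ) = (a + k) % n := by
  induction k with
  | zero => simp [Nat.mod_eq_of_lt a.isLt]
  | succ k ih =>
    rw [Function.iterate_succ_apply']
    rcases n with _ | n
    · exact a.elim0
    rw [finRotate_apply, Fin.val_add, ih, Fin.val_one', ← Nat.add_mod, add_assoc]

theorem rot_step {n : ℕ} (a s : Fin n) (j : ℕ) (hj : (a : ℕ) + j = s ∨ (a : ℕ) + j = s + n) :
    (⇑(finRotate n))^[j] a = s := by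
  apply Fin.ext
  rw [rot_iterate]
  rcases hj with h | h
  · rw [h, Nat.mod_eq_of_lt s.isLt]
  · rw [h, Nat.add_mod_right, Nat.mod_eq_of_lt s.isLt]

theorem rot_step' {n : ℕ} (a s : Fin n) (j : ℕ) (hj : j < n) (h : (⇑(finRotate n))^[j] a = s) :
    (a : ℕ) + j = s ∨ (a : ℕ) + j = s + n := by
  have h := congrArg Fin.val h
  rw [rot_iterate] at h
  have ha := a.isLt
  rcases lt_or_ge ((a : ℕ) + j) n with h1 | h1
  · rw [Nat.mod_eq_of_lt h1] at h; exact Or.inl h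
  · rw [Nat.mod_eq_sub_mod h1, Nat.mod_eq_of_lt (by omega)] at h
    right; omega

theorem rot_sameCycle {n : ℕ} (a b : Fin n) : (finRotate n).SameCycle a b := by
  have ha := a.isLt
  have : (⇑(finRotate n))^[n + b - a] a = b := rot_step a b _ (by omega)
  rw [← this]
  exact sameCycle_iterate _ _ _

theorem rot_induced {n : ℕ} {S : Set (Fin n)} {a b : Fin n} (hb : b ∈ S)
    (hab : a ≠ b) (h : ∀ s ∈ S, (a < b → ¬ (a < s ∧ s < b)) ∧ (b < a → ¬ (s < b ∨ a < s))) :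
    induced (finRotate n) S a = b := by
  have ha := a.isLt
  have hb' := b.isLt
  have hab' : (a : ℕ) ≠ b := fun h => hab (Fin.ext h)
  obtain ⟨k, hk0, hkn, hk⟩ : ∃ k, 0 < k ∧ k < n ∧
      ((a : ℕ) + k = b ∨ (a : ℕ) + k = b + n) := by
    rcases lt_or_gt_of_ne hab' with h | h
    · exact ⟨b - a, by omega, by omega, by omega⟩
    · exact ⟨b + n - a, by omega, by omega, by omega⟩
  have e := rot_step a b k hk
  have := induced_eq_of (f := finRotate n) (B := S) (b := a) hk0 (by rw [e]; exact hb) ?_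
  · rw [this, e]
  intro j hj0 hj hs
  have hs' := rot_step' a _ j (by omega) rfl
  have := h _ hs
  simp only [Fin.lt_def] at this
  have := ((⇑(finRotate n))^[j] a).isLt
  omega

theorem rot_induced' {n : ℕ} {S : Set (Fin n)} {a b : Fin n} (ha : a ∈ S)
    (h : induced (finRotate n) S a = b) :
    ∀ s ∈ S, (a < b → ¬ (a < s ∧ s < b)) ∧ (b < a → ¬ (s < b ∨ a < s)) := by
  intro s hs
  obtain ⟨k, hk, h1, hmin, e⟩ := first_perm (finRotate n) ha
  rw [h] at e
  have han := a.isLt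
  have hbn := b.isLt
  have hsn := s.isLt
  have key : ∀ j, 0 < j → ((a : ℕ) + j = s ∨ (a : ℕ) + j = s + n) → k ≤ j := by
    intro j hj0 hj
    by_contra hlt
    exact hmin j hj0 (by omega) (by rw [rot_step a s j hj]; exact hs)
  have key2 : k < n → ((a : ℕ) + k = b ∨ (a : ℕ) + k = b + n) :=
    fun hkn => rot_step' a b k hkn e.symm
  simp only [Fin.lt_def]
  have k1 := key (s - a)
  have k2 := key (s + n - a)
  omega

theorem swap_of {n : ℕ} (f : Equiv.Perm (Fin n)) {S : Set (Fin n)} {a b c d : Fin n}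
    (hS : ∀ x, x ∈ S ↔ x = a ∨ x = b ∨ x = c ∨ x = d) (hac : a ≠ c)
    (sac : f.SameCycle a c) (nab : ¬ f.SameCycle a b) (nad : ¬ f.SameCycle a d) :
    induced f S a = c := by
  have ha : a ∈ S := by simp [hS]
  have hc : c ∈ S := by simp [hS]
  have hm := induced_mem f ha
  have hs := induced_sameCycle f ha
  have hn := induced_ne_self f ha hc hac sac
  rw [hS] at hm
  rcases hm with h | h | h | h
  · exact absurd h hn
  · rw [h] at hs; exact absurd hs nab
  · exact h
  · rw [h] at hs; exact absurd hs nad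

theorem dns_of_not_std {n : ℕ} {τ : Equiv.Perm (Fin n)}
    (h : ¬ DiscStandardRel (finRotate n) τ) : DNS τ := by
  unfold DiscStandardRel at h
  push Not at h
  obtain ⟨A, hA, a, ha, hne⟩ := h
  have hx := induced_mem τ ha
  have hy := induced_mem (finRotate n) ha
  have hOrb : ∀ u ∈ A, ∀ v ∈ A, τ.SameCycle u v := by
    obtain ⟨o, rfl⟩ := hA
    intro u hu v hv
    exact Equiv.Perm.SameCycle.trans (Equiv.Perm.SameCycle.symm hu) hv
  obtain ⟨x, ex⟩ : ∃ x, x = induced τ A a := ⟨_, rfl⟩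
  obtain ⟨y, ey⟩ : ∃ y, y = induced (finRotate n) A a := ⟨_, rfl⟩
  rw [← ex] at hx hne
  rw [← ey] at hy hne
  have hax : a ≠ x := by
    rintro rfl
    exact induced_ne_self τ ha hy hne (hOrb _ ha _ hy) ex.symm
  have hay : a ≠ y := by
    rintro rfl
    exact induced_ne_self (finRotate n) ha hx hne.symm (rot_sameCycle _ _) ey.symm
  have sub : ({a, y, x} : Set (Fin n)) ⊆ A := by
    intro z hz
    rcases hz with rfl | rfl | rfl <;> assumption
  have restr : ∀ (f : Equiv.Perm (Fin n)) (z : Fin n), z = induced f A a →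
      z ∈ ({a, y, x} : Set (Fin n)) → induced f {a, y, x} a = z := by
    intro f z hz hzS
    obtain ⟨k, hk, h1, hmin, e⟩ := first_perm f ha
    rw [hz, e] at hzS
    rw [induced_eq_of hk hzS (fun j h0 hj hc => hmin j h0 hj (sub hc)), hz, e]
  refine ⟨a, y, x, by simp [hax, hay, hne.symm], ?_, ?_⟩
  · exact cyc3_of _ rfl hay hax hne.symm (rot_sameCycle _ _) (rot_sameCycle _ _)
      (restr _ y ey (by simp))
  · refine cyc3_of _ (by ext z; simp; tauto) hax hay hne (hOrb _ ha _ hx) (hOrb _ ha _ hy)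
      (restr _ x ex (by simp))

theorem dc_of_crossing {n : ℕ} {τ : Equiv.Perm (Fin n)} {a b c d : Fin n}
    (hab : a < b) (hbc : b < c) (hcd : c < d) (sac : τ.SameCycle a c) (sbd : τ.SameCycle b d)
    (nab : ¬ τ.SameCycle a b) : DC τ := by
  have nad : ¬ τ.SameCycle a d := fun h => nab (h.trans sbd.symm)
  have ncb : ¬ τ.SameCycle c b := fun h => nab (sac.trans h)
  have ncd : ¬ τ.SameCycle c d := fun h => nad (sac.trans h)
  have hS : ∀ x, x ∈ ({a, b, c, d} : Set (Fin n)) ↔ x = a ∨ x = b ∨ x = c ∨ x = d := by simp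
  have hS' : ∀ P : Fin n → Prop, P a → P b → P c → P d →
      ∀ x ∈ ({a, b, c, d} : Set (Fin n)), P x := by
    intro P _ _ _ _ x hx
    rcases (hS x).1 hx with rfl | rfl | rfl | rfl <;> assumption
  have hac := hab.trans hbc
  have hbd := hbc.trans hcd
  have had := hac.trans hcd
  refine ⟨a, b, c, d, ?_, ⟨?_, ?_, ?_, ?_⟩, ?_, ?_, ?_, ?_⟩
  · simp [hab.ne, hac.ne, had.ne, hbc.ne, hbd.ne, hcd.ne]
  · exact rot_induced (by simp) hab.ne (hS' _ (by omega) (by omega) (by omega) (by omega))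
  · exact rot_induced (by simp) hbc.ne (hS' _ (by omega) (by omega) (by omega) (by omega))
  · exact rot_induced (by simp) hcd.ne (hS' _ (by omega) (by omega) (by omega) (by omega))
  · exact rot_induced (by simp) had.ne' (hS' _ (by omega) (by omega) (by omega) (by omega))
  · exact swap_of τ hS hac.ne sac nab nad
  · exact swap_of (b := b) (d := d) τ (fun x => by rw [hS]; tauto) hac.ne' sac.symm ncb ncd
  · exact swap_of (b := a) (d := c) τ (fun x => by rw [hS]; tauto) hbd.ne sbd
      (fun h => nab h.symm) (fun h => ncb h.symm)
  · exact swap_of (b := a) (d := c) τ (fun x => by rw [hS]; tauto) hbd.ne' sbd.symm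
      (fun h => nad h.symm) (fun h => ncd h.symm)

theorem not_nc_of_dns {n : ℕ} {τ : Equiv.Perm (Fin n)} (h : DNS τ) : ¬ DiscNC τ := by
  rintro ⟨hstd, -⟩
  obtain ⟨a, b, c, hd, ⟨g1, g2, g3⟩, t1, t2, t3⟩ := h
  simp at hd
  have ha : a ∈ ({a, b, c} : Set (Fin n)) := by simp
  have hc : c ∈ ({a, b, c} : Set (Fin n)) := by simp
  have s1 := induced_sameCycle τ ha
  have s2 := induced_sameCycle τ hc
  rw [t1] at s1
  rw [t2] at s2
  have := std_restrict hstd (A := {x | τ.SameCycle a x}) ⟨a, rfl⟩ (B := {a, b, c}) (by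
    rintro z (rfl | rfl | rfl)
    · exact Equiv.Perm.SameCycle.refl _ _
    · exact s1.trans s2
    · exact s1) ha
  rw [t1, g1] at this
  exact hd.2 this.symm

theorem not_nc_of_dc {n : ℕ} {τ : Equiv.Perm (Fin n)} (h : DC τ) : ¬ DiscNC τ := by
  rintro ⟨hstd, hcross⟩
  obtain ⟨a, b, c, d, hd, ⟨g1, g2, g3, g4⟩, t1, t2, t3, t4⟩ := h
  have ha : a ∈ ({a, b, c, d} : Set (Fin n)) := by simp
  have hb : b ∈ ({a, b, c, d} : Set (Fin n)) := by simp
  have hc : c ∈ ({a, b, c, d} : Set (Fin n)) := by simp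
  have hd' : d ∈ ({a, b, c, d} : Set (Fin n)) := by simp
  simp at hd
  have sac := induced_sameCycle τ ha
  have sbd := induced_sameCycle τ hb
  rw [t1] at sac
  rw [t3] at sbd
  by_cases sab : τ.SameCycle a b
  · have := std_restrict hstd (A := {x | τ.SameCycle a x}) ⟨a, rfl⟩ (B := {a, b, c, d}) (by
      rintro z (rfl | rfl | rfl | rfl)
      · exact Equiv.Perm.SameCycle.refl _ _
      · exact sab
      · exact sac
      · exact sab.trans sbd) ha
    rw [t1, g1] at this
    exact hd.2.1.1 this.symm
  · have nad : ¬ τ.SameCycle a d := fun h => sab (h.trans sbd.symm)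
    have ncb : ¬ τ.SameCycle c b := fun h => sab (sac.trans h)
    have ncd : ¬ τ.SameCycle c d := fun h => nad (sac.trans h)
    have r1 := rot_induced' ha g1
    have r2 := rot_induced' hb g2
    have r3 := rot_induced' hc g3
    have r4 := rot_induced' hd' g4
    have r1c := r1 c hc
    have r1d := r1 d hd'
    have r2a := r2 a ha
    have r2d := r2 d hd'
    have r3a := r3 a ha
    have r3b := r3 b hb
    have r4b := r4 b hb
    have r4c := r4 c hc
    clear r1 r2 r3 r4
    have : (a < b ∧ b < c ∧ c < d) ∨ (b < c ∧ c < d ∧ d < a) ∨ (c < d ∧ d < a ∧ a < b) ∨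
        (d < a ∧ a < b ∧ b < c) := by
      obtain ⟨⟨ab, ac, ad⟩, ⟨bc, bd⟩, cd⟩ := hd
      clear g1 g2 g3 g4 t1 t2 t3 t4 hcross hstd ha hb hc hd'
      rcases lt_or_gt_of_ne ab with h1 | h1 <;> rcases lt_or_gt_of_ne bc with h2 | h2 <;>
      rcases lt_or_gt_of_ne cd with h3 | h3 <;> rcases lt_or_gt_of_ne ad with h4 | h4 <;>
      simp only [h1, h2, h3, h4, h1.not_gt, h2.not_gt, h3.not_gt, h4.not_gt, true_imp_iff,
        false_imp_iff, and_true, true_and, false_and, and_false, or_false, false_or, true_or,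
        or_true, not_true, not_false_iff] at * <;> omega
    apply hcross
    rcases this with ⟨h1, h2, h3⟩ | ⟨h1, h2, h3⟩ | ⟨h1, h2, h3⟩ | ⟨h1, h2, h3⟩
    · exact ⟨a, b, c, d, h1, h2, h3, sac, sbd, sab⟩
    · exact ⟨b, c, d, a, h1, h2, h3, sbd, sac.symm, fun h => ncb h.symm⟩
    · exact ⟨c, d, a, b, h1, h2, h3, sac.symm, sbd.symm, ncd⟩
    · exact ⟨d, a, b, c, h1, h2, h3, sbd.symm, sac, fun h => nad h.symm⟩

/-- Proposition 2.8: `τ ∉ S_disc-nc(n)` iff `τ` satisfies (DNS) or (DC). -/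
theorem stmt_1 (n : ℕ) (hn : 0 < n) (τ : Equiv.Perm (Fin n)) :
    ¬ DiscNC τ ↔ DNS τ ∨ DC τ := by
  constructor
  · intro h
    by_cases hs : DiscStandardRel (finRotate n) τ
    · right
      have hx : ¬ OrbitsNoCrossing τ := fun hx => h ⟨hs, hx⟩
      unfold OrbitsNoCrossing at hx
      rw [not_not] at hx
      obtain ⟨a, b, c, d, h1, h2, h3, h4, h5, h6⟩ := hx
      exact dc_of_crossing h1 h2 h3 h4 h5 h6
    · exact Or.inl (dns_of_not_std hs)
  · rintro (h | h)
    · exact not_nc_of_dns h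
    · exact not_nc_of_dc h
end

section
/- Let p and q be positive integers. The number of (p,q)-connected permutations in S_ann-nc(p,q) equals (2pq/(p+q))·C(2p-1,p)·C(2q-1,q), where C(m,k) denotes the binomial coefficient; equivalently, (p+q) times the cardinality of {τ ∈ S_ann-nc(p,q) : τ is (p,q)-connected} equals 2pq·C(2p-1,p)·C(2q-1,q). -/
section Gen
variable {α : Type*}

theorem hit_of_sameCycle [Finite α] {f : Equiv.Perm α} {b c : α} (h : f.SameCycle b c) :
    ∃ k, 0 < k ∧ (⇑f)^[k] b = c := by
  obtain ⟨k, hk, _, h⟩ := h.exists_pow_eq''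
  exact ⟨k, hk, by rw [← h]; simp [Equiv.Perm.iterate_eq_pow]⟩

theorem sameCycle_iter (f : Equiv.Perm α) (b : α) (k : ℕ) : f.SameCycle b ((⇑f)^[k] b) := by
  rw [Equiv.Perm.iterate_eq_pow]
  exact ⟨k, by simp⟩

theorem induced_of_mem {f : α → α} {B : Set α} {b : α} (h : f b ∈ B) : induced f B b = f b := by
  classical
  have hx : ∃ k, 0 < k ∧ f^[k] b ∈ B := ⟨1, by simp, by simpa using h⟩
  have : Nat.find hx = 1 := by
    rw [Nat.find_eq_iff]
    refine ⟨⟨by simp, by simpa using h⟩, ?_⟩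
    intro n hn; omega
  unfold induced
  rw [dif_pos hx]
  have h2 : f b = f^[1] b := rfl
  rw [h2]
  convert congrArg (fun k => f^[k] b) this

theorem induced_of_hit {f : α → α} {B : Set α} {b : α} (hx : ∃ k, 0 < k ∧ f^[k] b ∈ B) :
    ∃ k, 0 < k ∧ f^[k] b ∈ B ∧ induced f B b = f^[k] b ∧ ∀ j, 0 < j → j < k → f^[j] b ∉ B := by
  classical
  refine ⟨Nat.find hx, (Nat.find_spec hx).1, (Nat.find_spec hx).2, ?_, ?_⟩
  · unfold induced
    rw [dif_pos hx]
  · intro j h1 h2 h3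
    exact Nat.find_min hx h2 ⟨h1, h3⟩

theorem induced_eq {f : α → α} {B : Set α} {b : α} {k : ℕ} (hk : 0 < k) (hm : f^[k] b ∈ B)
    (hn : ∀ j, 0 < j → j < k → f^[j] b ∉ B) : induced f B b = f^[k] b := by
  obtain ⟨k', h1, h2, h3, h4⟩ := induced_of_hit ⟨k, hk, hm⟩
  rcases lt_trichotomy k k' with h | h | h
  · exact absurd hm (h4 _ hk h)
  · rw [h3, h]
  · exact absurd h2 (hn _ h1 h)

/-- Induction principle for `induced`. -/
theorem induced_rec [Finite α] {f : Equiv.Perm α} {B : Set α} {P : α → α → Prop}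
    (h1 : ∀ b, f b ∈ B → P b (f b))
    (h2 : ∀ b c, f b ∉ B → c ∈ B → f.SameCycle b c → P (f b) c → P b c)
    {b c : α} (hbc : f.SameCycle b c) (hc : c ∈ B) : P b (induced f B b) := by
  obtain ⟨k, hk, he⟩ := hit_of_sameCycle hbc
  obtain ⟨k, h3, h4, h5, h6⟩ := induced_of_hit (f := f) (B := B) ⟨k, hk, he ▸ hc⟩
  rw [h5]
  clear he hk hbc hc h5
  induction k generalizing b with
  | zero => omega
  | succ k ih =>
    rcases Nat.eq_zero_or_pos k with h0 | h0
    · subst h0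
      simpa using h1 b (by simpa using h4)
    · have := ih (b := f b) h0 (by simpa using h4) (by
        intro j hj hjk
        have := h6 (j+1) (by omega) (by omega)
        simpa using this)
      refine h2 b _ ?_ h4 (sameCycle_iter f b _) (by simpa using this)
      have := h6 1 (by omega) (by omega)
      simpa using this

theorem induced_mem_s3 [Finite α] {f : Equiv.Perm α} {B : Set α} {b c : α} (hbc : f.SameCycle b c)
    (hc : c ∈ B) : induced f B b ∈ B ∧ f.SameCycle b (induced f B b) := by
  refine induced_rec (f := f) (B := B) (P := fun b c => c ∈ B ∧ f.SameCycle b c) ?_ ?_ hbc hc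
  · intro b hb
    exact ⟨hb, by simpa using sameCycle_iter f b 1⟩
  · intro b c _ h1 h2 _
    exact ⟨h1, h2⟩

theorem induced_closed [Finite α] {f : Equiv.Perm α} {S T : Set α} (hT : ∀ t ∈ T, induced f S t ∈ T)
    {t s : α} (ht : t ∈ T) (hs : s ∈ S) (h : f.SameCycle t s) : s ∈ T := by
  obtain ⟨k, hk, he⟩ := hit_of_sameCycle h
  clear h
  induction k using Nat.strong_induction_on generalizing t with
  | _ k ih =>
    obtain ⟨k', h3, h4, h5, h6⟩ := induced_of_hit (f := f) (B := S) (b := t) ⟨k, hk, he ▸ hs⟩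
    have hm := hT t ht
    rw [h5] at hm
    rcases lt_trichotomy k' k with h | h | h
    · refine ih (k - k') (by omega) hm (by omega) ?_
      rw [← Function.iterate_add_apply, ← he]
      congr 1; omega
    · subst h; rwa [he] at hm
    · exact absurd hs (by rw [← he]; exact h6 k hk h)

/-- trajectories staying in X -/
theorem induced_stay [Finite α] {f : Equiv.Perm α} {S X : Set α} {i c : α}
    (hX : ∀ j ∈ X, f.SameCycle i j → j ∉ S → f j ∈ X) (hi : f i ∈ X) (hic : f.SameCycle i c)
    (hc : c ∈ S) : induced f S i ∈ X := by
  have := induced_rec (f := f) (B := S) (P := fun b c => f.SameCycle i b → f b ∈ X → c ∈ X) ?_ ?_ hic hc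
  · exact this (Equiv.Perm.SameCycle.refl _ _) hi
  · intro b _ _ h; exact h
  · intro b c h1 h2 h3 h4 h5 h6
    have h7 : f.SameCycle i (f b) := Equiv.Perm.sameCycle_apply_right.2 h5
    exact h4 h7 (hX _ h6 h7 h1)

/-- `j` is the cyclic successor of `i` in `B` with respect to the rank `r`. -/
def Nx (r : α → ℕ) (B : Set α) (i j : α) : Prop :=
  j ∈ B ∧ ((r i < r j ∧ ∀ k ∈ B, r k ≤ r i ∨ r j ≤ r k) ∨ (∀ k ∈ B, r j ≤ r k ∧ r k ≤ r i))

theorem Nx.unique {r : α → ℕ} {B : Set α} {i j j' : α} (h : Nx r B i j) (h' : Nx r B i j') :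
    r j = r j' := by
  obtain ⟨h1, h2⟩ := h
  obtain ⟨h3, h4⟩ := h'
  rcases h2 with ⟨h5, h6⟩ | h6 <;> rcases h4 with ⟨h7, h8⟩ | h8 <;>
  · have := h6 _ h3
    have := h8 _ h1
    omega

theorem Nx.induced [Finite α] {f : Equiv.Perm α} {r : α → ℕ} {A B : Set α} (hr : Set.InjOn r A)
    (hA : ∀ i ∈ A, Nx r A i (f i)) (hBA : B ⊆ A) {i c : α} (hi : i ∈ A) (hc : c ∈ B)
    (hic : f.SameCycle i c) : Nx r B i (induced f B i) := by
  refine induced_rec (f := f) (B := B) (P := fun i j => i ∈ A → Nx r B i j) ?_ ?_ hic hc hi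
  · intro i hi hiA
    obtain ⟨h1, h2⟩ := hA i hiA
    refine ⟨hi, ?_⟩
    rcases h2 with ⟨h2, h3⟩ | h3
    · exact Or.inl ⟨h2, fun k hk => h3 k (hBA hk)⟩
    · exact Or.inr fun k hk => h3 k (hBA hk)
  · intro i j h1 h2 _ h3 hiA
    obtain ⟨h4, h5⟩ := hA i hiA
    obtain ⟨h6, h7⟩ := h3 h4
    have hne : ∀ k ∈ B, r k ≠ r (f i) := fun k hk he => h1 (hr (hBA hk) h4 he ▸ hk)
    refine ⟨h2, ?_⟩
    have hj := hne _ h2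
    rcases h5 with ⟨h5, h8⟩ | h8 <;> rcases h7 with ⟨h7, h9⟩ | h9
    · refine Or.inl ⟨by omega, fun k hk => ?_⟩
      have := h8 k (hBA hk); have := h9 k hk; have := hne k hk; omega
    · refine Or.inr fun k hk => ?_
      have := h8 k (hBA hk); have := h9 k hk; have := hne k hk; omega
    · refine Or.inr fun k hk => ?_
      have := h8 k (hBA hk); have := h9 k hk; have := hne k hk; omega
    · have := h8 j (hBA h2); have := h9 j h2; omega

theorem induced_eq_of_Nx [Finite α] {f : Equiv.Perm α} {r : α → ℕ} {A B : Set α} (hr : Set.InjOn r A)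
    (hA : ∀ i ∈ A, Nx r A i (f i)) (hBA : B ⊆ A) {i j : α} (hi : i ∈ A) 
    (hic : f.SameCycle i j) (h : Nx r B i j) : induced f B i = j := by
  have h1 := Nx.induced hr hA hBA hi h.1 hic
  exact hr (hBA h1.1) (hBA h.1) (h1.unique h)

/-- Only the part in the orbit matters. -/
theorem induced_inter [Finite α] {f : Equiv.Perm α} {S A : Set α} {i c : α}
    (hA : ∀ s ∈ S, f.SameCycle i s → s ∈ A) (hc : c ∈ S) (hic : f.SameCycle i c) :
    induced f S i = induced f (S ∩ A) i := by
  obtain ⟨k, hk, he⟩ := hit_of_sameCycle hic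
  obtain ⟨k, h3, h4, h5, h6⟩ := induced_of_hit (f := f) (B := S) ⟨k, hk, he ▸ hc⟩
  rw [h5]
  symm
  refine induced_eq h3 ⟨h4, hA _ h4 (sameCycle_iter _ _ _)⟩ ?_
  intro j h7 h8 h9
  exact h6 j h7 h8 h9.1

end Gen

theorem induced_conj {α : Type*} (g f : Equiv.Perm α) (B : Set α) (b : α) :
    induced (g * f * g⁻¹ : Equiv.Perm α) (g '' B) (g b) = g (induced f B b) := by
  have key : ∀ k, (⇑(g * f * g⁻¹ : Equiv.Perm α))^[k] (g b) = g ((⇑f)^[k] b) := by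
    intro k
    induction k with
    | zero => simp
    | succ k ih => rw [Function.iterate_succ_apply', ih, Function.iterate_succ_apply']; simp
  by_cases hx : ∃ k, 0 < k ∧ (⇑f)^[k] b ∈ B
  · obtain ⟨k, h3, h4, h5, h6⟩ := induced_of_hit hx
    rw [h5, ← key]
    apply induced_eq h3
    · rw [key]; exact ⟨_, h4, rfl⟩
    · intro j h1 h2
      rw [key]
      rintro ⟨z, hz, he⟩
      exact h6 j h1 h2 (g.injective he ▸ hz)
  · have hy : ¬ ∃ k, 0 < k ∧ (⇑(g * f * g⁻¹ : Equiv.Perm α))^[k] (g b) ∈ g '' B := by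
      rintro ⟨k, hk, h⟩
      rw [key] at h
      obtain ⟨z, hz, he⟩ := h
      exact hx ⟨k, hk, g.injective he ▸ hz⟩
    unfold induced
    rw [dif_neg hx, dif_neg hy]


theorem Nx.sameCycle {α : Type*} [Finite α] {f : Equiv.Perm α} {r : α → ℕ} {A : Set α}
    (hr : Set.InjOn r A) (hA : ∀ i ∈ A, Nx r A i (f i)) {i j : α} (hi : i ∈ A) (hj : j ∈ A) :
    f.SameCycle i j := by
  have hb : ∃ M, ∀ i, r i ≤ M := by
    obtain ⟨M, hM⟩ := (Set.finite_range r).bddAbove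
    exact ⟨M, fun i => hM ⟨i, rfl⟩⟩
  obtain ⟨M, hM⟩ := hb
  have key : ∀ n, ∀ i ∈ A, M - r i ≤ n → ∃ m ∈ A, f.SameCycle i m ∧ ∀ k ∈ A, r m ≤ r k := by
    intro n
    induction n with
    | zero =>
      intro i hi h
      obtain ⟨h1, h2 | h2⟩ := hA i hi
      · have := hM (f i); have := hM i; omega
      · exact ⟨f i, h1, Equiv.Perm.sameCycle_apply_right.2 (Equiv.Perm.SameCycle.refl _ _), fun k hk => (h2 k hk).1⟩
    | succ n ih =>
      intro i hi h
      obtain ⟨h1, h2 | h2⟩ := hA i hi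
      · have := hM (f i); have := hM i
        obtain ⟨m, hm, h3, h4⟩ := ih (f i) h1 (by omega)
        exact ⟨m, hm, Equiv.Perm.sameCycle_apply_left.1 h3, h4⟩
      · exact ⟨f i, h1, Equiv.Perm.sameCycle_apply_right.2 (Equiv.Perm.SameCycle.refl _ _), fun k hk => (h2 k hk).1⟩
  obtain ⟨m, hm, h3, h4⟩ := key _ i hi le_rfl
  obtain ⟨m', hm', h3', h4'⟩ := key _ j hj le_rfl
  have := hr hm hm' (le_antisymm (h4 _ hm') (h4' _ hm))
  subst this
  exact h3.trans h3'.symm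

theorem nx_formPerm {α : Type*} [DecidableEq α] (l : List α) (r : α → ℕ) (s : ℕ)
    (hr : ∀ i (h : i < l.length), r l[i] = i + s) {a : α} (ha : a ∈ l) :
    Nx r {a | a ∈ l} a (l.formPerm a) := by
  have hn : l.Nodup := by
    rw [List.nodup_iff_injective_get]
    intro i j hij
    have h1 := hr i i.2
    have h2 := hr j j.2
    simp only [List.get_eq_getElem] at hij
    rw [hij] at h1
    ext; omega
  obtain ⟨i, hi, rfl⟩ := List.getElem_of_mem ha
  rw [List.formPerm_apply_getElem _ hn]
  refine ⟨by simp, ?_⟩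
  by_cases h : i + 1 = l.length
  · right
    intro k hk
    obtain ⟨j, hj, rfl⟩ := List.getElem_of_mem hk
    simp only [hr, h, Nat.mod_self]
    omega
  · left
    have h2 : (i + 1) % l.length = i + 1 := Nat.mod_eq_of_lt (by omega)
    simp only [h2, hr]
    refine ⟨by omega, ?_⟩
    intro k hk
    obtain ⟨j, hj, rfl⟩ := List.getElem_of_mem hk
    simp only [hr]
    omega

section Conc
variable {p q : ℕ}

theorem mem_ext_list (i : Fin (p + q)) : i ∈ (List.finRange (p + q)).take p ↔ (i : ℕ) < p := by
  rw [List.mem_take_iff_getElem]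
  constructor
  · rintro ⟨j, hj, rfl⟩; simp at hj ⊢; omega
  · intro h; exact ⟨i, by simp; omega, by simp⟩

theorem mem_int_list (i : Fin (p + q)) : i ∈ (List.finRange (p + q)).drop p ↔ p ≤ (i : ℕ) := by
  rw [List.mem_drop_iff_getElem]
  constructor
  · rintro ⟨j, hj, rfl⟩; simp at hj ⊢
  · intro h; exact ⟨i - p, by simp; omega, by ext; simp; omega⟩

theorem nx_ext {i : Fin (p + q)} (hi : i ∈ extSet p q) :
    Nx Fin.val (extSet p q) i (gammaExt p q i) := by
  have := nx_formPerm ((List.finRange (p + q)).take p) Fin.val 0 (by intro i h; simp)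
    ((mem_ext_list i).2 hi)
  simpa only [mem_ext_list, extSet, gammaExt] using this

theorem nx_int {i : Fin (p + q)} (hi : i ∈ intSet p q) :
    Nx Fin.val (intSet p q) i (gammaInt p q i) := by
  have := nx_formPerm ((List.finRange (p + q)).drop p) Fin.val p (by intro i h; simp; omega)
    ((mem_int_list i).2 hi)
  simpa only [mem_int_list, intSet, gammaInt] using this

theorem gammaExt_int {i : Fin (p + q)} (hi : i ∈ intSet p q) : gammaExt p q i = i := by
  apply List.formPerm_apply_of_notMem
  rw [mem_ext_list]
  simpa [intSet] using hi

theorem gammaInt_ext {i : Fin (p + q)} (hi : i ∈ extSet p q) : gammaInt p q i = i := by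
  apply List.formPerm_apply_of_notMem
  rw [mem_int_list]
  simpa [extSet] using hi

theorem nx_ann_ext {i : Fin (p + q)} (hi : i ∈ extSet p q) :
    Nx Fin.val (extSet p q) i (gammaAnn p q i) := by
  have : gammaAnn p q i = gammaExt p q i := by simp [gammaAnn, gammaInt_ext hi]
  rw [this]; exact nx_ext hi

theorem nx_ann_int {i : Fin (p + q)} (hi : i ∈ intSet p q) :
    Nx Fin.val (intSet p q) i (gammaAnn p q i) := by
  have : gammaAnn p q i = gammaInt p q i := by 
    simp only [gammaAnn, Equiv.Perm.coe_mul, Function.comp_apply]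
    exact gammaExt_int (nx_int hi).1
  rw [this]; exact nx_int hi

theorem gammaExt_val {i : Fin (p + q)} (hi : (i : ℕ) < p) :
    ((gammaExt p q i : Fin (p + q)) : ℕ) = if (i : ℕ) + 1 = p then 0 else (i : ℕ) + 1 := by
  obtain ⟨h1, h2⟩ := nx_ext (i := i) hi
  simp only [extSet, Set.mem_ofPred_eq] at h1 h2
  split_ifs with h
  · rcases h2 with h2 | h2
    · omega
    · have := h2 ⟨0, by omega⟩ (by simp; omega)
      simp at this; omega
  · rcases h2 with h2 | h2
    · have := h2.2 ⟨i + 1, by omega⟩ (by simp; omega)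
      simp at this; omega
    · have := h2 ⟨i + 1, by omega⟩ (by simp; omega)
      simp at this

theorem gammaInt_val {i : Fin (p + q)} (hi : p ≤ (i : ℕ)) :
    ((gammaInt p q i : Fin (p + q)) : ℕ) = if (i : ℕ) + 1 = p + q then p else (i : ℕ) + 1 := by
  obtain ⟨h1, h2⟩ := nx_int (i := i) hi
  simp only [intSet, Set.mem_ofPred_eq] at h1 h2
  split_ifs with h
  · rcases h2 with h2 | h2
    · omega
    · have := h2 ⟨p, by omega⟩ (by simp)
      simp at this; omega
  · rcases h2 with h2 | h2
    · have := h2.2 ⟨i + 1, by omega⟩ (by simp; omega)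
      simp at this; omega
    · have := h2 ⟨i + 1, by omega⟩ (by simp; omega)
      simp at this

theorem gammaExt_pow_val {i : Fin (p + q)} (hi : (i : ℕ) < p) (k : ℕ) (hk : k < p) :
    (((gammaExt p q ^ k) i : Fin (p + q)) : ℕ) = if (i : ℕ) + k < p then (i : ℕ) + k else i + k - p := by
  induction k with
  | zero => simp; omega
  | succ k ih =>
    have ih := ih (by omega)
    rw [pow_succ', Equiv.Perm.mul_apply, gammaExt_val]
    · rw [ih]; split_ifs <;> omega
    · rw [ih]; split_ifs <;> omega

theorem gammaInt_pow_val {i : Fin (p + q)} (hi : p ≤ (i : ℕ)) (k : ℕ) (hk : k < q) :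
    (((gammaInt p q ^ k) i : Fin (p + q)) : ℕ) =
      if (i : ℕ) + k < p + q then (i : ℕ) + k else i + k - q := by
  induction k with
  | zero => simp
  | succ k ih =>
    have ih := ih (by omega)
    rw [pow_succ', Equiv.Perm.mul_apply, gammaInt_val]
    · rw [ih]; split_ifs <;> omega
    · rw [ih]; split_ifs <;> omega

/-- position along the cycle `λ_{x,y}` -/
def lamR (p q : ℕ) (x y u : Fin (p + q)) : ℕ :=
  if (u : ℕ) < p then (if (x : ℕ) < u then (u : ℕ) - x - 1 else (u : ℕ) + p - x - 1)
  else p - 1 + (if (y : ℕ) < u then (u : ℕ) - y - 1 else (u : ℕ) + q - y - 1)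

theorem nx_lam {x y : Fin (p + q)} (hx : x ∈ extSet p q) (hy : y ∈ intSet p q) {i : Fin (p + q)}
    (hi : i ∈ {u | u ≠ x ∧ u ≠ y}) :
    Nx (lamR p q x y) {u | u ≠ x ∧ u ≠ y} i (lamPerm p q x y i) := by
  simp only [extSet, intSet, Set.mem_ofPred_eq] at hx hy
  have hmem : ∀ u : Fin (p + q), u ∈ (((List.range (p - 1)).map fun k => (gammaExt p q ^ (k + 1)) x) ++
    ((List.range (q - 1)).map fun k => (gammaInt p q ^ (k + 1)) y)) ↔ u ≠ x ∧ u ≠ y := by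
    intro u
    simp only [List.mem_append, List.mem_map, List.mem_range]
    constructor
    · rintro (⟨k, hk, rfl⟩ | ⟨k, hk, rfl⟩)
      · have := gammaExt_pow_val hx (k + 1) (by omega)
        constructor
        · intro h; rw [h] at this; split_ifs at this <;> omega
        · intro h; rw [h] at this; split_ifs at this <;> omega
      · have := gammaInt_pow_val hy (k + 1) (by omega)
        constructor
        · intro h; rw [h] at this; split_ifs at this <;> omega
        · intro h; rw [h] at this; split_ifs at this <;> omega
    · rintro ⟨h1, h2⟩
      have h1' : (u : ℕ) ≠ x := fun h => h1 (Fin.ext h)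
      have h2' : (u : ℕ) ≠ y := fun h => h2 (Fin.ext h)
      have := u.2
      by_cases hu : (u : ℕ) < p
      · left
        refine ⟨lamR p q x y u, ?_, ?_⟩
        · simp only [lamR]; split_ifs <;> omega
        · ext; rw [gammaExt_pow_val hx]
          · simp only [lamR]; split_ifs <;> omega
          · simp only [lamR]; split_ifs <;> omega
      · right
        refine ⟨lamR p q x y u - (p - 1), ?_, ?_⟩
        · simp only [lamR]; split_ifs <;> omega
        · ext; rw [gammaInt_pow_val hy]
          · simp only [lamR]; split_ifs <;> omega
          · simp only [lamR]; split_ifs <;> omega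
  have := nx_formPerm (((List.range (p - 1)).map fun k => (gammaExt p q ^ (k + 1)) x) ++
    ((List.range (q - 1)).map fun k => (gammaInt p q ^ (k + 1)) y)) (lamR p q x y) 0 (by
      intro i h
      simp only [List.length_append, List.length_map, List.length_range] at h
      rw [List.getElem_append]
      split_ifs with h1
      · simp only [List.length_map, List.length_range] at h1
        simp only [List.getElem_map, List.getElem_range]
        have := gammaExt_pow_val hx (i + 1) (by omega)
        simp only [lamR, this]
        split_ifs <;> omega
      · simp only [List.length_map, List.length_range] at h1
        simp only [List.getElem_map, List.getElem_range, List.length_map, List.length_range]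
        have := gammaInt_pow_val hy (i - (p - 1) + 1) (by omega)
        simp only [lamR, this]
        have := y.2
        split_ifs <;> omega) ((hmem i).2 hi)
  simp only [hmem] at this
  exact this

theorem lamR_inj {x y : Fin (p + q)} (hx : x ∈ extSet p q) (hy : y ∈ intSet p q) :
    Set.InjOn (lamR p q x y) {u | u ≠ x ∧ u ≠ y} := by
  simp only [extSet, intSet, Set.mem_ofPred_eq] at hx hy
  rintro u ⟨hu1, hu2⟩ v ⟨hv1, hv2⟩ h
  have h1' : (u : ℕ) ≠ x := fun h => hu1 (Fin.ext h)
  have h2' : (u : ℕ) ≠ y := fun h => hu2 (Fin.ext h)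
  have h3' : (v : ℕ) ≠ x := fun h => hv1 (Fin.ext h)
  have h4' : (v : ℕ) ≠ y := fun h => hv2 (Fin.ext h)
  have := u.2
  have := v.2
  ext
  simp only [lamR] at h
  split_ifs at h <;> omega

end Conc


section Pat
variable {α : Type*} [Finite α]

theorem induced_swap {f : Equiv.Perm α} {S : Set α} {a c : α} (ha : a ∈ S) (hc : c ∈ S) (hac : a ≠ c)
    (h : f.SameCycle a c) (hS : ∀ s ∈ S, f.SameCycle a s → s = a ∨ s = c) :
    induced f S a = c := by
  obtain ⟨h1, h2⟩ := induced_mem_s3 h hc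
  rcases hS _ h1 h2 with h3 | h3
  · have := induced_closed (f := f) (S := S) (T := {a}) (by
      intro t ht; rw [Set.mem_singleton_iff] at ht; subst ht; exact h3) rfl hc h
    exact absurd this.symm hac
  · exact h3

theorem induced_arrow3 {f : Equiv.Perm α} {S : Set α} {u v w : α} (hu : u ∈ S) (hv : v ∈ S) (hw : w ∈ S)
    (huv : u ≠ v) (huw : u ≠ w) (hvw : v ≠ w)
    (h1 : f.SameCycle u v) (h2 : f.SameCycle u w)
    (hS : ∀ s ∈ S, f.SameCycle u s → s = u ∨ s = v ∨ s = w) (h : induced f S u = v) :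
    induced f S v = w ∧ induced f S w = u := by
  obtain ⟨h3, h4⟩ := induced_mem_s3 h1.symm hu
  obtain ⟨h5, h6⟩ := induced_mem_s3 h2.symm hu
  have e1 : induced f S v = w := by
    rcases hS _ h3 (h1.trans h4) with h7 | h7 | h7
    · have := induced_closed (f := f) (S := S) (T := {u, v}) (by
        rintro t (rfl | rfl) <;> simp [h, h7]) (t := u) (by simp) hw h2
      rcases this with h8 | h8
      · exact absurd h8.symm huw
      · exact absurd h8.symm hvw
    · have := induced_closed (f := f) (S := S) (T := {v}) (by
        rintro t rfl; simp [h7]) (t := v) (by simp) hw (h1.symm.trans h2)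
      exact absurd this.symm hvw
    · exact h7
  refine ⟨e1, ?_⟩
  rcases hS _ h5 (h2.trans h6) with h7 | h7 | h7
  · exact h7
  · have := induced_closed (f := f) (S := S) (T := {v, w}) (by
        rintro t (rfl | rfl) <;> simp [e1, h7]) (t := v) (by simp) hu h1.symm
    rcases this with h8 | h8
    · exact absurd h8 huv
    · exact absurd h8 huw
  · have := induced_closed (f := f) (S := S) (T := {w}) (by
        rintro t rfl; simp [h7]) (t := w) (by simp) hu h2.symm
    exact absurd this huw

theorem cyc4_of_rank {f : Equiv.Perm α} {r : α → ℕ} {A : Set α} (hr : Set.InjOn r A)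
    (hA : ∀ i ∈ A, Nx r A i (f i)) {a b c d : α} (ha : a ∈ A) (hb : b ∈ A) (hc : c ∈ A) (hd : d ∈ A)
    (h1 : r a < r b) (h2 : r b < r c) (h3 : r c < r d) : MapsCyc4 f {a, b, c, d} a b c d := by
  have hs : ({a, b, c, d} : Set α) ⊆ A := by
    rintro x (rfl | rfl | rfl | rfl) <;> assumption
  refine ⟨?_, ?_, ?_, ?_⟩
  · refine induced_eq_of_Nx hr hA hs ha (Nx.sameCycle hr hA ha hb) ⟨by simp, Or.inl ⟨h1, ?_⟩⟩
    rintro k (rfl | rfl | rfl | rfl) <;> omega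
  · refine induced_eq_of_Nx hr hA hs hb (Nx.sameCycle hr hA hb hc) ⟨by simp, Or.inl ⟨h2, ?_⟩⟩
    rintro k (rfl | rfl | rfl | rfl) <;> omega
  · refine induced_eq_of_Nx hr hA hs hc (Nx.sameCycle hr hA hc hd) ⟨by simp, Or.inl ⟨h3, ?_⟩⟩
    rintro k (rfl | rfl | rfl | rfl) <;> omega
  · refine induced_eq_of_Nx hr hA hs hd (Nx.sameCycle hr hA hd ha) ⟨by simp, Or.inr ?_⟩
    rintro k (rfl | rfl | rfl | rfl) <;> omega

theorem rank_of_cyc4 {f : Equiv.Perm α} {r : α → ℕ} {A : Set α} (hr : Set.InjOn r A)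
    (hA : ∀ i ∈ A, Nx r A i (f i)) {a b c d : α} (ha : a ∈ A) (hb : b ∈ A) (hc : c ∈ A) (hd : d ∈ A)
    (hn : List.Pairwise (· ≠ ·) [a, b, c, d])
    (h : MapsCyc4 f {a, b, c, d} a b c d) :
    (r a < r b ∧ r b < r c ∧ r c < r d) ∨ (r b < r c ∧ r c < r d ∧ r d < r a) ∨
    (r c < r d ∧ r d < r a ∧ r a < r b) ∨ (r d < r a ∧ r a < r b ∧ r b < r c) := by
  have hs : ({a, b, c, d} : Set α) ⊆ A := by
    rintro x (rfl | rfl | rfl | rfl) <;> assumption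
  obtain ⟨e1, e2, e3, e4⟩ := h
  have n1 := Nx.induced hr hA hs ha (c := b) (by simp) (Nx.sameCycle hr hA ha hb)
  have n2 := Nx.induced hr hA hs hb (c := b) (by simp) (Nx.sameCycle hr hA hb hb)
  have n3 := Nx.induced hr hA hs hc (c := b) (by simp) (Nx.sameCycle hr hA hc hb)
  have n4 := Nx.induced hr hA hs hd (c := b) (by simp) (Nx.sameCycle hr hA hd hb)
  rw [e1] at n1; rw [e2] at n2; rw [e3] at n3; rw [e4] at n4
  simp only [List.pairwise_cons, List.mem_cons, List.not_mem_nil, or_false, forall_eq_or_imp, forall_eq] at hn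
  have hne : r a ≠ r b ∧ r a ≠ r c ∧ r a ≠ r d ∧ r b ≠ r c ∧ r b ≠ r d ∧ r c ≠ r d :=
    ⟨fun e => hn.1.1 (hr ha hb e), fun e => hn.1.2.1 (hr ha hc e), fun e => hn.1.2.2 (hr ha hd e),
     fun e => hn.2.1.1 (hr hb hc e), fun e => hn.2.1.2 (hr hb hd e), fun e => hn.2.2.1 (hr hc hd e)⟩
  simp only [Nx, Set.mem_insert_iff, Set.mem_singleton_iff, forall_eq_or_imp, forall_eq] at n1 n2 n3 n4
  have n1 := n1.2; have n2 := n2.2; have n3 := n3.2; have n4 := n4.2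
  omega

theorem cyc3_of_rank {f : Equiv.Perm α} {r : α → ℕ} {A : Set α} (hr : Set.InjOn r A)
    (hA : ∀ i ∈ A, Nx r A i (f i)) {a b c : α} (ha : a ∈ A) (hb : b ∈ A) (hc : c ∈ A)
    (h1 : r a < r b) (h2 : r b < r c) : MapsCyc3 f {a, b, c} a b c := by
  have hs : ({a, b, c} : Set α) ⊆ A := by
    rintro x (rfl | rfl | rfl) <;> assumption
  refine ⟨?_, ?_, ?_⟩
  · refine induced_eq_of_Nx hr hA hs ha (Nx.sameCycle hr hA ha hb) ⟨by simp, Or.inl ⟨h1, ?_⟩⟩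
    rintro k (rfl | rfl | rfl) <;> omega
  · refine induced_eq_of_Nx hr hA hs hb (Nx.sameCycle hr hA hb hc) ⟨by simp, Or.inl ⟨h2, ?_⟩⟩
    rintro k (rfl | rfl | rfl) <;> omega
  · refine induced_eq_of_Nx hr hA hs hc (Nx.sameCycle hr hA hc ha) ⟨by simp, Or.inr ?_⟩
    rintro k (rfl | rfl | rfl) <;> omega

theorem rank_of_cyc3 {f : Equiv.Perm α} {r : α → ℕ} {A : Set α} (hr : Set.InjOn r A)
    (hA : ∀ i ∈ A, Nx r A i (f i)) {a b c : α} (ha : a ∈ A) (hb : b ∈ A) (hc : c ∈ A)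
    (hab : a ≠ b) (hac : a ≠ c) (hbc : b ≠ c)
    (h : MapsCyc3 f {a, b, c} a b c) :
    (r a < r b ∧ r b < r c) ∨ (r b < r c ∧ r c < r a) ∨
    (r c < r a ∧ r a < r b) := by
  have hs : ({a, b, c} : Set α) ⊆ A := by
    rintro x (rfl | rfl | rfl) <;> assumption
  obtain ⟨e1, e2, e3⟩ := h
  have n1 := Nx.induced hr hA hs ha (c := b) (by simp) (Nx.sameCycle hr hA ha hb)
  have n2 := Nx.induced hr hA hs hb (c := b) (by simp) (Nx.sameCycle hr hA hb hb)
  have n3 := Nx.induced hr hA hs hc (c := b) (by simp) (Nx.sameCycle hr hA hc hb)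
  rw [e1] at n1; rw [e2] at n2; rw [e3] at n3
  have hne : r a ≠ r b ∧ r a ≠ r c ∧ r b ≠ r c :=
    ⟨fun e => hab (hr ha hb e), fun e => hac (hr ha hc e), fun e => hbc (hr hb hc e)⟩
  simp only [Nx, Set.mem_insert_iff, Set.mem_singleton_iff, forall_eq_or_imp, forall_eq] at n1 n2 n3
  have n1 := n1.2; have n2 := n2.2; have n3 := n3.2
  omega

theorem induced_ret {f : Equiv.Perm α} {X Y : Set α} (hXY : ∀ j, j ∉ Y → j ∈ X) {i e : α}
    (hi : f i ∉ Y) (hie : f.SameCycle i e) (he : f e ∈ Y)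
    (hu : ∀ j, f.SameCycle i j → j ∈ X → f j ∈ Y → j = e) :
    induced f ({b | f.SameCycle i b} ∩ Y) i = f e := by
  have h0 : f.SameCycle i (f e) := Equiv.Perm.sameCycle_apply_right.2 hie
  refine (induced_rec (f := f) (B := {b | f.SameCycle i b} ∩ Y) (b := i) (c := f e) (P := fun b c => f.SameCycle i b →
    (f b ∈ Y → c = f b) ∧ (f b ∉ Y → c = f e)) ?_ ?_ h0 ⟨h0, he⟩ (Equiv.Perm.SameCycle.refl _ _)).2 hi
  · intro b hb _
    exact ⟨fun _ => rfl, fun h => absurd hb.2 h⟩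
  · intro b c h1 h2 h3 h4 h5
    have h6 : f.SameCycle i (f b) := Equiv.Perm.sameCycle_apply_right.2 h5
    have h7 : f b ∉ Y := fun h => h1 ⟨h6, h⟩
    refine ⟨fun h => absurd h h7, fun _ => ?_⟩
    obtain ⟨h8, h9⟩ := h4 h6
    by_cases h10 : f (f b) ∈ Y
    · rw [h8 h10, hu _ h6 (hXY _ h7) h10]
    · exact h9 h10

end Pat


/-- Disc non-crossing permutations in the natural linear order. -/
def DNC {n : ℕ} (τ : Equiv.Perm (Fin n)) : Prop :=
  (∀ i, Nx Fin.val {j | τ.SameCycle i j} i (τ i)) ∧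
  (∀ a b c d : Fin n, a < b → b < c → c < d → τ.SameCycle a c → τ.SameCycle b d → τ.SameCycle a b)

section AC
variable {p q : ℕ} {τ : Equiv.Perm (Fin (p + q))}

theorem ext_or_int (i : Fin (p + q)) : i ∈ extSet p q ∨ i ∈ intSet p q := by
  simp only [extSet, intSet, Set.mem_ofPred_eq]; omega

theorem val_injOn (A : Set (Fin (p + q))) : Set.InjOn Fin.val A := Fin.val_injective.injOn

theorem mk_swap2 {S : Set (Fin (p + q))} {a b c d : Fin (p + q)} (ha : a ∈ S) (hb : b ∈ S) (hc : c ∈ S)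
    (hd : d ∈ S) (hac : a ≠ c) (hbd : b ≠ d)
    (h1 : τ.SameCycle a c) (h2 : τ.SameCycle b d)
    (hS : ∀ s ∈ S, τ.SameCycle a s → s = a ∨ s = c)
    (hS' : ∀ s ∈ S, τ.SameCycle b s → s = b ∨ s = d) : MapsSwap2 τ S a b c d := by
  refine ⟨induced_swap ha hc hac h1 hS, induced_swap hc ha hac.symm h1.symm ?_,
    induced_swap hb hd hbd h2 hS', induced_swap hd hb hbd.symm h2.symm ?_⟩
  · intro s hs h; exact (hS s hs (h1.trans h)).symm
  · intro s hs h; exact (hS' s hs (h2.trans h)).symm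

theorem mk_AC1 {a b c d : Fin (p + q)} (h1 : a < b) (h2 : b < c) (h3 : c < d)
    (hx : d ∈ extSet p q ∨ a ∈ intSet p q) (hac : τ.SameCycle a c) (hbd : τ.SameCycle b d)
    (hab : ¬ τ.SameCycle a b) : AC1 p q τ := by
  have had : ¬ τ.SameCycle a d := fun h => hab (h.trans hbd.symm)
  have hbc : ¬ τ.SameCycle b c := fun h => hab (hac.trans h.symm)
  have h12 := h1.trans h2
  have h23 := h2.trans h3
  have h123 := h12.trans h3
  refine ⟨a, b, c, d, ?_, ?_, ?_⟩
  · simp [h1.ne, h2.ne, h3.ne, h12.ne, h23.ne, h123.ne]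
  · rw [Fin.lt_def] at h1 h2 h3
    rcases hx with hx | hx
    · simp only [extSet, Set.mem_ofPred_eq] at hx
      exact cyc4_of_rank (A := extSet p q) (val_injOn _) (fun i hi => nx_ann_ext hi)
        (by simp only [extSet, Set.mem_ofPred_eq]; omega)
        (by simp only [extSet, Set.mem_ofPred_eq]; omega) (by simp only [extSet, Set.mem_ofPred_eq]; omega) hx h1 h2 h3
    · simp only [intSet, Set.mem_ofPred_eq] at hx
      exact cyc4_of_rank (A := intSet p q) (val_injOn _) (fun i hi => nx_ann_int hi) hx
        (by simp only [intSet, Set.mem_ofPred_eq]; omega)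
        (by simp only [intSet, Set.mem_ofPred_eq]; omega) (by simp only [intSet, Set.mem_ofPred_eq]; omega) h1 h2 h3
  · refine mk_swap2 (by simp) (by simp) (by simp) (by simp) h12.ne h23.ne hac hbd ?_ ?_
    · rintro s (rfl | rfl | rfl | rfl) h
      · simp
      · exact absurd h hab
      · simp
      · exact absurd h had
    · rintro s (rfl | rfl | rfl | rfl) h
      · exact absurd h.symm hab
      · simp
      · exact absurd h hbc
      · simp

theorem ne_of_not {f : Equiv.Perm (Fin (p + q))} {a b : Fin (p + q)} (h : ¬ f.SameCycle a b) : a ≠ b := by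
  rintro rfl; exact h (Equiv.Perm.SameCycle.refl _ _)

theorem mk_AC3 {a b c d x y : Fin (p + q)} (hx : x ∈ extSet p q) (hy : y ∈ intSet p q)
    (h1 : lamR p q x y a < lamR p q x y b) (h2 : lamR p q x y b < lamR p q x y c)
    (h3 : lamR p q x y c < lamR p q x y d)
    (hxy : τ.SameCycle x y) (hac : τ.SameCycle a c) (hbd : τ.SameCycle b d)
    (hab : ¬ τ.SameCycle a b) (hxa : ¬ τ.SameCycle x a) (hxb : ¬ τ.SameCycle x b) : AC3 p q τ := by
  have had : ¬ τ.SameCycle a d := fun h => hab (h.trans hbd.symm)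
  have hbc : ¬ τ.SameCycle b c := fun h => hab (hac.trans h.symm)
  have hcd : ¬ τ.SameCycle c d := fun h => had (hac.trans h)
  have hxc : ¬ τ.SameCycle x c := fun h => hxa (h.trans hac.symm)
  have hxd : ¬ τ.SameCycle x d := fun h => hxb (h.trans hbd.symm)
  have hya : ¬ τ.SameCycle y a := fun h => hxa (hxy.trans h)
  have hyb : ¬ τ.SameCycle y b := fun h => hxb (hxy.trans h)
  have hyc : ¬ τ.SameCycle y c := fun h => hxc (hxy.trans h)
  have hyd : ¬ τ.SameCycle y d := fun h => hxd (hxy.trans h)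
  have nac : a ≠ c := by rintro rfl; omega
  have nbd : b ≠ d := by rintro rfl; omega
  have nxy : x ≠ y := by
    rintro rfl; simp only [extSet, intSet, Set.mem_ofPred_eq] at hx hy; omega
  refine ⟨a, b, c, d, x, y, ?_, hx, hy, ?_, ?_, ?_⟩
  · have := ne_of_not hab; have := ne_of_not had; have := ne_of_not hbc; have := ne_of_not hcd
    have := (ne_of_not hxa).symm; have := (ne_of_not hxb).symm; have := (ne_of_not hxc).symm
    have := (ne_of_not hxd).symm
    have := (ne_of_not hya).symm; have := (ne_of_not hyb).symm; have := (ne_of_not hyc).symm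
    have := (ne_of_not hyd).symm
    simp [*]
  · exact cyc4_of_rank (lamR_inj hx hy) (fun i hi => nx_lam hx hy hi) 
      ⟨(ne_of_not hxa).symm, (ne_of_not hya).symm⟩ ⟨(ne_of_not hxb).symm, (ne_of_not hyb).symm⟩
      ⟨(ne_of_not hxc).symm, (ne_of_not hyc).symm⟩ ⟨(ne_of_not hxd).symm, (ne_of_not hyd).symm⟩ h1 h2 h3
  · refine mk_swap2 (by simp) (by simp) (by simp) (by simp) nac nbd hac hbd ?_ ?_
    · rintro s (rfl | rfl | rfl | rfl | rfl | rfl) h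
      · simp
      · exact absurd h hab
      · simp
      · exact absurd h had
      · exact absurd h.symm hxa
      · exact absurd h.symm hya
    · rintro s (rfl | rfl | rfl | rfl | rfl | rfl) h
      · exact absurd h.symm hab
      · simp
      · exact absurd h hbc
      · simp
      · exact absurd h.symm hxb
      · exact absurd h.symm hyb
  · have key : ∀ s ∈ ({a, b, c, d, x, y} : Set (Fin (p + q))), τ.SameCycle x s → s = x ∨ s = y := by
      rintro s (rfl | rfl | rfl | rfl | rfl | rfl) h
      · exact absurd h hxa
      · exact absurd h hxb
      · exact absurd h hxc
      · exact absurd h hxd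
      · simp
      · simp
    exact ⟨induced_swap (by simp) (by simp) nxy hxy key,
      induced_swap (by simp) (by simp) nxy.symm hxy.symm fun s hs h => (key s hs (hxy.trans h)).symm⟩

theorem mk_AC2 {a b c x y : Fin (p + q)} (hx : x ∈ extSet p q) (hy : y ∈ intSet p q)
    (h1 : lamR p q x y a < lamR p q x y b) (h2 : lamR p q x y b < lamR p q x y c)
    (hxy : τ.SameCycle x y) (hab : τ.SameCycle a b) (hac : τ.SameCycle a c)
    (hxa : ¬ τ.SameCycle x a)
    (h : induced τ {a, b, c, x, y} a = c ∨ induced τ {a, b, c, x, y} c = b ∨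
      induced τ {a, b, c, x, y} b = a) : AC2 p q τ := by
  have hxb : ¬ τ.SameCycle x b := fun h => hxa (h.trans hab.symm)
  have hxc : ¬ τ.SameCycle x c := fun h => hxa (h.trans hac.symm)
  have hya : ¬ τ.SameCycle y a := fun h => hxa (hxy.trans h)
  have hyb : ¬ τ.SameCycle y b := fun h => hxb (hxy.trans h)
  have hyc : ¬ τ.SameCycle y c := fun h => hxc (hxy.trans h)
  have nab : a ≠ b := by rintro rfl; omega
  have nac : a ≠ c := by rintro rfl; omega
  have nbc : b ≠ c := by rintro rfl; omega
  have nxy : x ≠ y := by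
    rintro rfl; simp only [extSet, intSet, Set.mem_ofPred_eq] at hx hy; omega
  have hS : ∀ s ∈ ({a, b, c, x, y} : Set (Fin (p + q))), τ.SameCycle a s → s = a ∨ s = b ∨ s = c := by
    rintro s (rfl | rfl | rfl | rfl | rfl) h
    · simp
    · simp
    · simp
    · exact absurd h.symm hxa
    · exact absurd h.symm hya
  refine ⟨a, b, c, x, y, ?_, hx, hy, ?_, ?_, ?_⟩
  · have := (ne_of_not hxa).symm; have := (ne_of_not hxb).symm; have := (ne_of_not hxc).symm
    have := (ne_of_not hya).symm; have := (ne_of_not hyb).symm; have := (ne_of_not hyc).symm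
    simp [*]
  · exact cyc3_of_rank (lamR_inj hx hy) (fun i hi => nx_lam hx hy hi) 
      ⟨(ne_of_not hxa).symm, (ne_of_not hya).symm⟩ ⟨(ne_of_not hxb).symm, (ne_of_not hyb).symm⟩
      ⟨(ne_of_not hxc).symm, (ne_of_not hyc).symm⟩ h1 h2
  · rcases h with h | h | h
    · obtain ⟨h3, h4⟩ := induced_arrow3 (f := τ) (S := {a, b, c, x, y}) (u := a) (v := c) (w := b)
        (by simp) (by simp) (by simp) nac nab nbc.symm
        hac hab (fun s hs hh => by have := hS s hs hh; tauto) h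
      exact ⟨h, h3, h4⟩
    · obtain ⟨h3, h4⟩ := induced_arrow3 (f := τ) (S := {a, b, c, x, y}) (u := c) (v := b) (w := a)
        (by simp) (by simp) (by simp) nbc.symm nac.symm nab.symm
        (hac.symm.trans hab) hac.symm (fun s hs hh => by have := hS s hs (hac.trans hh); tauto) h
      exact ⟨h4, h, h3⟩
    · obtain ⟨h3, h4⟩ := induced_arrow3 (f := τ) (S := {a, b, c, x, y}) (u := b) (v := a) (w := c)
        (by simp) (by simp) (by simp) nab.symm nbc nac
        hab.symm (hab.symm.trans hac) (fun s hs hh => by have := hS s hs (hab.trans hh); tauto) h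
      exact ⟨h3, h4, h⟩
  · have key : ∀ s ∈ ({a, b, c, x, y} : Set (Fin (p + q))), τ.SameCycle x s → s = x ∨ s = y := by
      rintro s (rfl | rfl | rfl | rfl | rfl) h
      · exact absurd h hxa
      · exact absurd h hxb
      · exact absurd h hxc
      · simp
      · simp
    exact ⟨induced_swap (by simp) (by simp) nxy hxy key,
      induced_swap (by simp) (by simp) nxy.symm hxy.symm fun s hs h => (key s hs (hxy.trans h)).symm⟩

end AC


section Fwd
variable {p q : ℕ} {τ : Equiv.Perm (Fin (p + q))}

theorem std_ext (h : AnnStandard p q τ) {i : Fin (p + q)} (hi : i ∈ extSet p q) :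
    Nx Fin.val ({j | τ.SameCycle i j} ∩ extSet p q) i
      (induced τ ({j | τ.SameCycle i j} ∩ extSet p q) i) := by
  have hm : i ∈ {j | τ.SameCycle i j} ∩ extSet p q := ⟨Equiv.Perm.SameCycle.refl _ _, hi⟩
  rw [(h.1 _ ⟨i, rfl⟩).1 i hm]
  exact Nx.induced (A := extSet p q) (val_injOn _) (fun i hi => nx_ext hi) Set.inter_subset_right hi hm
    (Equiv.Perm.SameCycle.refl _ _)

theorem std_int (h : AnnStandard p q τ) {i : Fin (p + q)} (hi : i ∈ intSet p q) :
    Nx Fin.val ({j | τ.SameCycle i j} ∩ intSet p q) i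
      (induced τ ({j | τ.SameCycle i j} ∩ intSet p q) i) := by
  have hm : i ∈ {j | τ.SameCycle i j} ∩ intSet p q := ⟨Equiv.Perm.SameCycle.refl _ _, hi⟩
  rw [(h.1 _ ⟨i, rfl⟩).2 i hm]
  exact Nx.induced (A := intSet p q) (val_injOn _) (fun i hi => nx_int hi) Set.inter_subset_right hi hm
    (Equiv.Perm.SameCycle.refl _ _)

/-- arrow from a non-exit point to the exit point -/
theorem arrow_exit {f : Equiv.Perm (Fin (p + q))} {S X Y : Set (Fin (p + q))} {u v : Fin (p + q)}
    (hXY : ∀ j, j ∉ X → j ∈ Y) 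
    (hu : u ∈ X) (huS : u ∈ S) (hvS : v ∈ S) (huv : u ≠ v)
    (h : f.SameCycle u v) (hun : ∀ j, f.SameCycle u j → j ∈ X → f j ∈ Y → j = v)
    (hS : ∀ s ∈ S, f.SameCycle u s → s ∈ X → s = u ∨ s = v) : induced f S u = v := by
  have h1 : induced f S u ∈ X := by
    refine induced_stay ?_ ?_ h hvS
    · intro j hj huj hjS
      by_contra h2
      exact hjS (hun j huj hj (hXY _ h2) ▸ hvS)
    · by_contra h2
      exact huv (hun u (Equiv.Perm.SameCycle.refl _ _) hu (hXY _ h2))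
  obtain ⟨h2, h3⟩ := induced_mem_s3 h hvS
  rcases hS _ h2 h3 h1 with h4 | h4
  · have := induced_closed (f := f) (S := S) (T := {u}) (by
      rintro t rfl; exact h4) (t := u) rfl hvS h
    exact absurd this.symm huv
  · exact h4

theorem nin_int_ext {j : Fin (p + q)} (h : j ∉ intSet p q) : j ∈ extSet p q :=
  (ext_or_int j).resolve_right h
theorem nin_ext_int {j : Fin (p + q)} (h : j ∉ extSet p q) : j ∈ intSet p q :=
  (ext_or_int j).resolve_left h
theorem ext_nin_int {j : Fin (p + q)} (h : j ∈ extSet p q) : j ∉ intSet p q := by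
  simp only [extSet, intSet, Set.mem_ofPred_eq] at *; omega
theorem int_nin_ext {j : Fin (p + q)} (h : j ∈ intSet p q) : j ∉ extSet p q := by
  simp only [extSet, intSet, Set.mem_ofPred_eq] at *; omega

theorem sc_apply (τ : Equiv.Perm (Fin (p + q))) (i : Fin (p + q)) : τ.SameCycle i (τ i) :=
  Equiv.Perm.sameCycle_apply_right.2 (Equiv.Perm.SameCycle.refl _ _)

theorem std_uniq_ext (h : AnnStandard p q τ) {i j : Fin (p + q)} (hij : τ.SameCycle i j)
    (hi : i ∈ extSet p q) (hi' : τ i ∈ intSet p q) (hj : j ∈ extSet p q) (hj' : τ j ∈ intSet p q) :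
    j = i := by
  have := (h.2 _ ⟨i, rfl⟩ ⟨i, Equiv.Perm.SameCycle.refl _ _, hi⟩ ⟨τ i, sc_apply τ i, hi'⟩).1
  exact this.unique ⟨⟨hij, hj⟩, hj'⟩ ⟨⟨Equiv.Perm.SameCycle.refl _ _, hi⟩, hi'⟩

theorem std_uniq_int (h : AnnStandard p q τ) {i j : Fin (p + q)} (hij : τ.SameCycle i j)
    (hi : i ∈ intSet p q) (hi' : τ i ∈ extSet p q) (hj : j ∈ intSet p q) (hj' : τ j ∈ extSet p q) :
    j = i := by
  have := (h.2 _ ⟨i, rfl⟩ ⟨τ i, sc_apply τ i, hi'⟩ ⟨i, Equiv.Perm.SameCycle.refl _ _, hi⟩).2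
  exact this.unique ⟨⟨hij, hj⟩, hj'⟩ ⟨⟨Equiv.Perm.SameCycle.refl _ _, hi⟩, hi'⟩

theorem std_ex_ext (h : AnnStandard p q τ) {i j k : Fin (p + q)} (hij : τ.SameCycle i j)
    (hik : τ.SameCycle i k) (hj : j ∈ extSet p q) (hk : k ∈ intSet p q) :
    ∃ e, τ.SameCycle i e ∧ e ∈ extSet p q ∧ τ e ∈ intSet p q := by
  obtain ⟨e, he, _⟩ := (h.2 _ ⟨i, rfl⟩ ⟨j, hij, hj⟩ ⟨k, hik, hk⟩).1
  exact ⟨e, he.1.1, he.1.2, he.2⟩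

theorem std_ex_int (h : AnnStandard p q τ) {i j k : Fin (p + q)} (hij : τ.SameCycle i j)
    (hik : τ.SameCycle i k) (hj : j ∈ extSet p q) (hk : k ∈ intSet p q) :
    ∃ e, τ.SameCycle i e ∧ e ∈ intSet p q ∧ τ e ∈ extSet p q := by
  obtain ⟨e, he, _⟩ := (h.2 _ ⟨i, rfl⟩ ⟨j, hij, hj⟩ ⟨k, hik, hk⟩).2
  exact ⟨e, he.1.1, he.1.2, he.2⟩

theorem exit_max_ext (h : AnnNC p q τ) {x y : Fin (p + q)} (hx : (x : ℕ) + 1 = p) (hy : (y : ℕ) = p)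
    (hxy : τ x = y) {i j : Fin (p + q)} (hij : τ.SameCycle i j)
    (hi : i ∈ extSet p q) (hi' : τ i ∈ intSet p q) (hj : j ∈ extSet p q) : (j : ℕ) ≤ i := by
  obtain ⟨hs, -, h2, -⟩ := h
  have hxe : x ∈ extSet p q := by simp only [extSet, Set.mem_ofPred_eq]; omega
  have hyi : y ∈ intSet p q := by simp only [intSet, Set.mem_ofPred_eq]; omega
  have hcxy : τ.SameCycle x y := hxy ▸ sc_apply τ x
  by_cases hxi : τ.SameCycle x i
  · have := std_uniq_ext hs hxi hxe (hxy ▸ hyi) hi hi'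
    simp only [extSet, Set.mem_ofPred_eq] at hj
    subst this; omega
  · by_contra hlt
    have hxj : ¬ τ.SameCycle x j := fun h => hxi (h.trans hij.symm)
    have n1 : (j : ℕ) ≠ x := fun hh => ne_of_not hxj (Fin.ext hh.symm)
    have hne : j ≠ i := by rintro rfl; omega
    have hyt : ¬ τ.SameCycle x (τ i) := fun h => hxi (h.trans (sc_apply τ i).symm)
    have n2 : ((τ i : Fin (p+q)) : ℕ) ≠ y := fun hh => hyt ((Fin.ext hh : τ i = y) ▸ hcxy)
    have hhj := hj
    have hhi := hi
    have hhi' := hi'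
    simp only [extSet, intSet, Set.mem_ofPred_eq] at hj hi hi'
    refine h2 (mk_AC2 (a := i) (b := j) (c := τ i) hxe hyi ?_ ?_ hcxy hij (sc_apply τ i) hxi (Or.inr (Or.inr ?_)))
    · simp only [lamR]; split_ifs <;> omega
    · simp only [lamR]; split_ifs <;> omega
    · refine arrow_exit (X := extSet p q) (Y := intSet p q) (fun j hj => nin_ext_int hj) hhj (by simp) (by simp) hne hij.symm ?_ ?_
      · intro k hk hk1 hk2
        exact std_uniq_ext hs (hij.trans hk) hhi hhi' hk1 hk2
      · rintro s (rfl | rfl | rfl | rfl | rfl) h1 h2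
        · simp
        · simp
        · exact absurd hhi' (ext_nin_int h2)
        · exact absurd h1.symm hxj
        · exact absurd hyi (ext_nin_int h2)

theorem exit_max_int (h : AnnNC p q τ) {x y : Fin (p + q)} (hx : (x : ℕ) + 1 = p) (hy : (y : ℕ) = p)
    (hxy : τ x = y) {i j : Fin (p + q)} (hij : τ.SameCycle i j)
    (hi : i ∈ intSet p q) (hi' : τ i ∈ extSet p q) (hj : j ∈ intSet p q) : (j : ℕ) ≤ i := by
  obtain ⟨hs, -, h2, -⟩ := h
  have hxe : x ∈ extSet p q := by simp only [extSet, Set.mem_ofPred_eq]; omega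
  have hyi : y ∈ intSet p q := by simp only [intSet, Set.mem_ofPred_eq]; omega
  have hcxy : τ.SameCycle x y := hxy ▸ sc_apply τ x
  by_cases hxi : τ.SameCycle x i
  · have hr := induced_ret (f := τ) (X := extSet p q) (Y := intSet p q) (i := i) (e := x)
      (fun j hj => nin_int_ext hj) (ext_nin_int hi') hxi.symm (hxy ▸ hyi) (by
        intro k hk h1 h2
        exact std_uniq_ext hs (hxi.trans hk) hxe (hxy ▸ hyi) h1 h2)
    have hN := std_int hs hi
    rw [hr, hxy] at hN
    obtain ⟨-, ⟨h3, -⟩ | h3⟩ := hN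
    · simp only [intSet, Set.mem_ofPred_eq] at hi; omega
    · exact (h3 j ⟨hij, hj⟩).2
  · by_contra hlt
    have hxj : ¬ τ.SameCycle x j := fun h => hxi (h.trans hij.symm)
    have hyj : ¬ τ.SameCycle y j := fun h => hxj (hcxy.trans h)
    have hyi' : ¬ τ.SameCycle y i := fun h => hxi (hcxy.trans h)
    have n1 : (j : ℕ) ≠ y := fun hh => ne_of_not hyj (Fin.ext hh.symm)
    have n3 : (i : ℕ) ≠ y := fun hh => ne_of_not hyi' (Fin.ext hh.symm)
    have hne : j ≠ i := by rintro rfl; omega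
    have hyt : ¬ τ.SameCycle x (τ i) := fun h => hxi (h.trans (sc_apply τ i).symm)
    have n2 : ((τ i : Fin (p+q)) : ℕ) ≠ x := fun hh => ne_of_not hyt (Fin.ext hh.symm)
    have hhj := hj
    have hhi := hi
    have hhi' := hi'
    simp only [extSet, intSet, Set.mem_ofPred_eq] at hj hi hi'
    refine h2 (mk_AC2 (a := τ i) (b := i) (c := j) hxe hyi ?_ ?_ hcxy (sc_apply τ i).symm
      ((sc_apply τ i).symm.trans hij) hyt (Or.inr (Or.inl ?_)))
    · simp only [lamR]; split_ifs <;> omega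
    · simp only [lamR]; split_ifs <;> omega
    · refine arrow_exit (X := intSet p q) (Y := extSet p q) (fun j hj => nin_int_ext hj) hhj (by simp) (by simp) hne hij.symm ?_ ?_
      · intro k hk hk1 hk2
        exact std_uniq_int hs (hij.trans hk) hhi hhi' hk1 hk2
      · rintro s (rfl | rfl | rfl | rfl | rfl) h1 h2
        · exact absurd hhi' (int_nin_ext h2)
        · simp
        · simp
        · exact absurd h1.symm hxj
        · exact absurd h1.symm hyj

theorem DNC_of_AnnNC (h : AnnNC p q τ) {x y : Fin (p + q)} (hx : (x : ℕ) + 1 = p) (hy : (y : ℕ) = p)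
    (hxy : τ x = y) : DNC τ := by
  have hs := h.1
  have hxe : x ∈ extSet p q := by simp only [extSet, Set.mem_ofPred_eq]; omega
  have hyi : y ∈ intSet p q := by simp only [intSet, Set.mem_ofPred_eq]; omega
  have hcxy : τ.SameCycle x y := hxy ▸ sc_apply τ x
  constructor
  · intro i
    refine ⟨sc_apply τ i, ?_⟩
    rcases ext_or_int i with hi | hi <;> rcases ext_or_int (τ i) with ht | ht
    · have hN := std_ext hs hi
      have hm : τ i ∈ {j | τ.SameCycle i j} ∩ extSet p q := ⟨sc_apply τ i, ht⟩
      rw [induced_of_mem hm] at hN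
      rcases hN.2 with ⟨h1, h2⟩ | h1
      · left
        refine ⟨h1, fun k hk => ?_⟩
        rcases ext_or_int k with hk' | hk'
        · exact h2 k ⟨hk, hk'⟩
        · simp only [extSet, intSet, Set.mem_ofPred_eq] at ht hk'; omega
      · right
        intro k hk
        rcases ext_or_int k with hk' | hk'
        · exact h1 k ⟨hk, hk'⟩
        · exfalso
          obtain ⟨e, h3, h4, h5⟩ := std_ex_ext hs (Equiv.Perm.SameCycle.refl _ _) hk hi hk'
          have h6 := exit_max_ext h hx hy hxy h3.symm h4 h5 hi
          have h7 := (h1 e ⟨h3, h4⟩).2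
          have : e = i := Fin.ext (by omega)
          subst this
          exact ext_nin_int ht h5
    · obtain ⟨e, h3, h4, h5⟩ := std_ex_int hs (Equiv.Perm.SameCycle.refl _ _) (sc_apply τ i) hi ht
      have hr := induced_ret (f := τ) (X := extSet p q) (Y := intSet p q) (i := e) (e := i)
        (fun j hj => nin_int_ext hj) (ext_nin_int h5) h3.symm ht (by
          intro k hk h1 h2
          exact std_uniq_ext hs (h3.trans hk) hi ht h1 h2)
      have hN := std_int hs h4
      rw [hr] at hN
      left
      have h8 : ∀ k, τ.SameCycle i k → k ∈ intSet p q → ((τ i : Fin (p+q)) : ℕ) ≤ k := by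
        intro k hk hk'
        obtain ⟨-, ⟨h6, -⟩ | h6⟩ := hN
        · have := exit_max_int h hx hy hxy (h3.symm.trans (sc_apply τ i)) h4 h5 ht
          omega
        · exact (h6 k ⟨h3.symm.trans hk, hk'⟩).1
      refine ⟨by simp only [extSet, intSet, Set.mem_ofPred_eq] at hi ht; omega, fun k hk => ?_⟩
      rcases ext_or_int k with hk' | hk'
      · exact Or.inl (exit_max_ext h hx hy hxy hk hi ht hk')
      · exact Or.inr (h8 k hk hk')
    · obtain ⟨e, h3, h4, h5⟩ := std_ex_ext hs (sc_apply τ i) (Equiv.Perm.SameCycle.refl _ _) ht hi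
      have hr := induced_ret (f := τ) (X := intSet p q) (Y := extSet p q) (i := e) (e := i)
        (fun j hj => nin_ext_int hj) (int_nin_ext h5) h3.symm ht (by
          intro k hk h1 h2
          exact std_uniq_int hs (h3.trans hk) hi ht h1 h2)
      have hN := std_ext hs h4
      rw [hr] at hN
      right
      have h8 : ∀ k, τ.SameCycle i k → k ∈ extSet p q → ((τ i : Fin (p+q)) : ℕ) ≤ k := by
        intro k hk hk'
        obtain ⟨-, ⟨h6, -⟩ | h6⟩ := hN
        · have := exit_max_ext h hx hy hxy (h3.symm.trans (sc_apply τ i)) h4 h5 ht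
          omega
        · exact (h6 k ⟨h3.symm.trans hk, hk'⟩).1
      intro k hk
      rcases ext_or_int k with hk' | hk'
      · refine ⟨h8 k hk hk', ?_⟩
        simp only [extSet, intSet, Set.mem_ofPred_eq] at hi ht hk'; omega
      · refine ⟨?_, exit_max_int h hx hy hxy hk hi ht hk'⟩
        simp only [extSet, intSet, Set.mem_ofPred_eq] at hi ht hk'; omega
    · have hN := std_int hs hi
      have hm : τ i ∈ {j | τ.SameCycle i j} ∩ intSet p q := ⟨sc_apply τ i, ht⟩
      rw [induced_of_mem hm] at hN
      rcases hN.2 with ⟨h1, h2⟩ | h1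
      · left
        refine ⟨h1, fun k hk => ?_⟩
        rcases ext_or_int k with hk' | hk'
        · simp only [extSet, intSet, Set.mem_ofPred_eq] at hi hk'; omega
        · exact h2 k ⟨hk, hk'⟩
      · right
        intro k hk
        rcases ext_or_int k with hk' | hk'
        · exfalso
          obtain ⟨e, h3, h4, h5⟩ := std_ex_int hs hk (Equiv.Perm.SameCycle.refl _ _) hk' hi
          have h6 := exit_max_int h hx hy hxy h3.symm h4 h5 hi
          have h7 := (h1 e ⟨h3, h4⟩).2
          have : e = i := Fin.ext (by omega)
          subst this
          exact int_nin_ext ht h5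
        · exact h1 k ⟨hk, hk'⟩
  · obtain ⟨-, hA1, hA2, hA3⟩ := h
    intro a b c d hab hbc hcd hac hbd
    by_contra hn
    have hbx : τ.SameCycle x b → ¬ τ.SameCycle x a := fun h1 h2 => hn (h2.symm.trans h1)
    have ab := Fin.lt_def.1 hab
    have bc := Fin.lt_def.1 hbc
    have cd := Fin.lt_def.1 hcd
    have nax : ¬ τ.SameCycle x a → (a : ℕ) ≠ x ∧ (a : ℕ) ≠ y ∧ (c : ℕ) ≠ x ∧ (c : ℕ) ≠ y := by
      intro h
      refine ⟨fun e => ?_, fun e => ?_, fun e => ?_, fun e => ?_⟩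
      · exact h ((Fin.ext e : a = x) ▸ Equiv.Perm.SameCycle.refl _ _)
      · exact h ((Fin.ext e : a = y) ▸ hcxy)
      · exact h (((Fin.ext e : c = x) ▸ hac).symm)
      · exact h (hcxy.trans ((Fin.ext e : c = y) ▸ hac).symm)
    have nbx : ¬ τ.SameCycle x b → (b : ℕ) ≠ x ∧ (b : ℕ) ≠ y ∧ (d : ℕ) ≠ x ∧ (d : ℕ) ≠ y := by
      intro h
      refine ⟨fun e => ?_, fun e => ?_, fun e => ?_, fun e => ?_⟩
      · exact h ((Fin.ext e : b = x) ▸ Equiv.Perm.SameCycle.refl _ _)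
      · exact h ((Fin.ext e : b = y) ▸ hcxy)
      · exact h (((Fin.ext e : d = x) ▸ hbd).symm)
      · exact h (hcxy.trans ((Fin.ext e : d = y) ▸ hbd).symm)
    by_cases hxa : τ.SameCycle x a
    · have hxb : ¬ τ.SameCycle x b := fun h => hbx h hxa
      obtain ⟨n1, n2, n3, n4⟩ := nbx hxb
      rcases ext_or_int d with hd | hd
      · exact hA1 (mk_AC1 hab hbc hcd (Or.inl hd) hac hbd hn)
      · rcases ext_or_int b with hb | hb
        · -- AC2 with cut b d
          have hb' := hb
          have hd' := hd
          simp only [extSet, intSet, Set.mem_ofPred_eq] at hb' hd'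
          refine hA2 (mk_AC2 (a := x) (b := a) (c := y) hb hd ?_ ?_ hbd hxa hcxy
            (fun h => hxb h.symm) (Or.inl ?_))
          · simp only [lamR]; split_ifs <;> omega
          · simp only [lamR]; split_ifs <;> omega
          · rw [induced_of_mem (by rw [hxy]; simp), hxy]
        · have hb' := hb
          simp only [extSet, intSet, Set.mem_ofPred_eq] at hb'
          have hyb : y < b := Fin.lt_def.2 (by omega)
          exact hA1 (mk_AC1 hyb hbc hcd (Or.inr hyi) (hcxy.symm.trans (hxa.trans hac)) hbd
            (fun h => hxb (hcxy.trans h)))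
    · obtain ⟨n1, n2, n3, n4⟩ := nax hxa
      by_cases hxb : τ.SameCycle x b
      · rcases ext_or_int a with ha | ha
        · rcases ext_or_int c with hc | hc
          · have hc' := hc
            simp only [extSet, intSet, Set.mem_ofPred_eq] at hc'
            have hcx : c < x := Fin.lt_def.2 (by omega)
            exact hA1 (mk_AC1 hab hbc hcx (Or.inl hxe) hac hxb.symm hn)
          · have ha' := ha
            have hc' := hc
            simp only [extSet, intSet, Set.mem_ofPred_eq] at ha' hc'
            refine hA2 (mk_AC2 (a := x) (b := d) (c := y) ha hc ?_ ?_ hac (hxb.trans hbd) hcxy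
              (fun h => hxa h.symm) (Or.inl ?_))
            · simp only [lamR]; split_ifs <;> omega
            · simp only [lamR]; split_ifs <;> omega
            · rw [induced_of_mem (by rw [hxy]; simp), hxy]
        · exact hA1 (mk_AC1 hab hbc hcd (Or.inr ha) hac hbd hn)
      · obtain ⟨m1, m2, m3, m4⟩ := nbx hxb
        refine hA3 (mk_AC3 (a := a) (b := b) (c := c) (d := d) hxe hyi ?_ ?_ ?_ hcxy hac hbd hn hxa hxb)
        · simp only [lamR]; split_ifs <;> omega
        · simp only [lamR]; split_ifs <;> omega
        · simp only [lamR]; split_ifs <;> omega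

end Fwd


section Bwd
variable {p q : ℕ} {τ : Equiv.Perm (Fin (p + q))}

theorem DNC.nx (h : DNC τ) {i b : Fin (p + q)} {B : Set (Fin (p + q))}
    (hB : ∀ s ∈ B, τ.SameCycle i s) (hb : b ∈ B) : Nx Fin.val B i (induced τ B i) := by
  refine Nx.induced (A := {j | τ.SameCycle i j}) (val_injOn _) ?_ hB (Equiv.Perm.SameCycle.refl _ _) hb (hB b hb)
  intro j hj
  have : {k | τ.SameCycle i k} = {k | τ.SameCycle j k} := by
    ext k; exact ⟨fun h => hj.symm.trans h, fun h => Equiv.Perm.SameCycle.trans hj h⟩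
  rw [this]
  exact h.1 j

theorem DNC.std (h : DNC τ) : AnnStandard p q τ := by
  constructor
  · rintro A ⟨a, rfl⟩
    constructor
    · intro b hb
      have h1 := h.nx (i := b) (b := b) (B := {b | τ.SameCycle a b} ∩ extSet p q)
        (fun s hs => Equiv.Perm.SameCycle.trans hb.1.symm hs.1) hb
      have h2 := Nx.induced (A := extSet p q) (val_injOn _) (fun i hi => nx_ext hi)
        (B := {b | τ.SameCycle a b} ∩ extSet p q) Set.inter_subset_right hb.2 hb
        (Equiv.Perm.SameCycle.refl _ _)
      exact Fin.ext (h1.unique h2)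
    · intro b hb
      have h1 := h.nx (i := b) (b := b) (B := {b | τ.SameCycle a b} ∩ intSet p q)
        (fun s hs => Equiv.Perm.SameCycle.trans hb.1.symm hs.1) hb
      have h2 := Nx.induced (A := intSet p q) (val_injOn _) (fun i hi => nx_int hi)
        (B := {b | τ.SameCycle a b} ∩ intSet p q) Set.inter_subset_right hb.2 hb
        (Equiv.Perm.SameCycle.refl _ _)
      exact Fin.ext (h1.unique h2)
  · rintro A ⟨a, rfl⟩ hE hI
    obtain ⟨e, he⟩ := id hE
    obtain ⟨f, hf⟩ := id hI
    constructor
    · obtain ⟨m, hm, hmax⟩ := Set.exists_max_image _ Fin.val (Set.toFinite _) hE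
      refine ⟨m, ⟨hm, ?_⟩, ?_⟩
      · by_contra hc
        have hc := nin_int_ext hc
        have := hmax (τ m) ⟨Equiv.Perm.SameCycle.trans hm.1 (sc_apply τ m), hc⟩
        rcases (h.1 m).2 with h1 | h1
        · omega
        · have := (h1 f (Equiv.Perm.SameCycle.trans hm.1.symm hf.1)).2
          have h3 := hm.2
          have h4 := hf.2
          simp only [extSet, intSet, Set.mem_ofPred_eq] at h3 h4
          omega
      · rintro m' ⟨hm', ht⟩
        have h1 := hmax m' hm'
        have h2 := hm.2
        have h3 := hm'.2
        simp only [extSet, intSet, Set.mem_ofPred_eq] at h2 h3 ht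
        rcases (h.1 m').2 with h4 | h4
        · have := h4.2 m (Equiv.Perm.SameCycle.trans hm'.1.symm hm.1)
          ext; omega
        · have := (h4 m (Equiv.Perm.SameCycle.trans hm'.1.symm hm.1)).2
          ext; omega
    · obtain ⟨m, hm, hmax⟩ := Set.exists_max_image _ Fin.val (Set.toFinite _) hI
      refine ⟨m, ⟨hm, ?_⟩, ?_⟩
      · by_contra hc
        have hc := nin_ext_int hc
        have := hmax (τ m) ⟨Equiv.Perm.SameCycle.trans hm.1 (sc_apply τ m), hc⟩
        rcases (h.1 m).2 with h1 | h1
        · omega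
        · have := (h1 e (Equiv.Perm.SameCycle.trans hm.1.symm he.1)).1
          have h3 := hc
          have h4 := he.2
          simp only [extSet, intSet, Set.mem_ofPred_eq] at h3 h4
          omega
      · rintro m' ⟨hm', ht⟩
        have h1 := hmax m' hm'
        have h2 := hm.2
        have h3 := hm'.2
        simp only [extSet, intSet, Set.mem_ofPred_eq] at h2 h3 ht
        rcases (h.1 m').2 with h4 | h4
        · omega
        · have := (h4 m (Equiv.Perm.SameCycle.trans hm'.1.symm hm.1)).2
          ext; omega

theorem sc_of_induced {f : Equiv.Perm (Fin (p + q))} {S : Set (Fin (p + q))} {a c : Fin (p + q)}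
    (ha : a ∈ S) (h : induced f S a = c) : f.SameCycle a c :=
  h ▸ (induced_mem_s3 (Equiv.Perm.SameCycle.refl _ _) ha).2

theorem not_sc_of_swap {f : Equiv.Perm (Fin (p + q))} {S : Set (Fin (p + q))} {a b c : Fin (p + q)}
    (h1 : induced f S a = c) (h2 : induced f S c = a) (hb : b ∈ S) (hab : b ≠ a) (hcb : b ≠ c) :
    ¬ f.SameCycle a b := by
  intro h
  have := induced_closed (f := f) (S := S) (T := {a, c}) (by
    rintro t (rfl | rfl)
    · simp [h1]
    · simp [h2]) (t := a) (by simp) hb h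
  rcases this with h | h
  · exact hab h
  · exact hcb h

theorem DNC.nc (h : DNC τ) {a b c d : Fin (p + q)} (hac : τ.SameCycle a c) (hbd : τ.SameCycle b d)
    (hab : ¬ τ.SameCycle a b) : ¬ ((a : ℕ) < b ∧ (b : ℕ) < c ∧ (c : ℕ) < d) :=
  fun ⟨h1, h2, h3⟩ => hab (h.2 a b c d h1 h2 h3 hac hbd)

theorem DNC.not_AC1 (h : DNC τ) : ¬ AC1 p q τ := by
  rintro ⟨a, b, c, d, hne, hg, ht⟩
  obtain ⟨t1, t2, t3, t4⟩ := ht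
  have hac := sc_of_induced (by simp) t1
  have hbd := sc_of_induced (by simp) t3
  have hne' := hne
  simp only [List.pairwise_cons, List.mem_cons, List.not_mem_nil, or_false, forall_eq_or_imp, forall_eq] at hne'
  have hab := not_sc_of_swap t1 t2 (b := b) (by simp) hne'.1.1.symm hne'.2.1.1
  have key : (a ∈ extSet p q ∧ b ∈ extSet p q ∧ c ∈ extSet p q ∧ d ∈ extSet p q) ∨
      (a ∈ intSet p q ∧ b ∈ intSet p q ∧ c ∈ intSet p q ∧ d ∈ intSet p q) := by
    obtain ⟨g1, g2, g3, g4⟩ := hg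
    rcases ext_or_int a with ha | ha
    · left
      have hst : ∀ i ∈ ({a, b, c, d} : Set (Fin (p + q))), i ∈ extSet p q →
          induced (gammaAnn p q) {a, b, c, d} i ∈ extSet p q := fun i hi hi' =>
        induced_stay (fun j hj _ _ => (nx_ann_ext hj).1) (nx_ann_ext hi').1
          (Equiv.Perm.SameCycle.refl _ _) hi
      have hb := hst a (by simp) ha
      rw [g1] at hb
      have hc := hst b (by simp) hb
      rw [g2] at hc
      have hd := hst c (by simp) hc
      rw [g3] at hd
      exact ⟨ha, hb, hc, hd⟩
    · right
      have hst : ∀ i ∈ ({a, b, c, d} : Set (Fin (p + q))), i ∈ intSet p q →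
          induced (gammaAnn p q) {a, b, c, d} i ∈ intSet p q := fun i hi hi' =>
        induced_stay (fun j hj _ _ => (nx_ann_int hj).1) (nx_ann_int hi').1
          (Equiv.Perm.SameCycle.refl _ _) hi
      have hb := hst a (by simp) ha
      rw [g1] at hb
      have hc := hst b (by simp) hb
      rw [g2] at hc
      have hd := hst c (by simp) hc
      rw [g3] at hd
      exact ⟨ha, hb, hc, hd⟩
  have key2 : (a.val < b.val ∧ b.val < c.val ∧ c.val < d.val) ∨
      (b.val < c.val ∧ c.val < d.val ∧ d.val < a.val) ∨
      (c.val < d.val ∧ d.val < a.val ∧ a.val < b.val) ∨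
      (d.val < a.val ∧ a.val < b.val ∧ b.val < c.val) := by
    rcases key with ⟨ha, hb, hc, hd⟩ | ⟨ha, hb, hc, hd⟩
    · exact rank_of_cyc4 (A := extSet p q) (val_injOn _) (fun i hi => nx_ann_ext hi) ha hb hc hd hne hg
    · exact rank_of_cyc4 (A := intSet p q) (val_injOn _) (fun i hi => nx_ann_int hi) ha hb hc hd hne hg
  have hbc : ¬ τ.SameCycle b c := fun h => hab (hac.trans h.symm)
  have hcd : ¬ τ.SameCycle c d := fun h => hab (hac.trans (h.trans hbd.symm))
  have hda : ¬ τ.SameCycle d a := fun h => hab (h.symm.trans hbd.symm)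
  rcases key2 with k | k | k | k
  · exact h.nc hac hbd hab k
  · exact h.nc hbd hac.symm hbc k
  · exact h.nc hac.symm hbd.symm hcd k
  · exact h.nc hbd.symm hac hda k

theorem lamR_in {x y u : Fin (p + q)} (hx : x ∈ extSet p q) (hy : y ∈ intSet p q)
    (h1 : (x : ℕ) < u) (h2 : (u : ℕ) < y) : lamR p q x y u < p - 1 - x ∨ 2 * p + q - 2 - y ≤ lamR p q x y u := by
  have := y.2
  simp only [extSet, intSet, Set.mem_ofPred_eq] at hx hy
  simp only [lamR]; split_ifs <;> omega

theorem lamR_out {x y u : Fin (p + q)} (hx : x ∈ extSet p q) (hy : y ∈ intSet p q)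
    (h1 : (u : ℕ) < x ∨ (y : ℕ) < u) : p - 1 - x ≤ lamR p q x y u ∧ lamR p q x y u < 2 * p + q - 2 - y := by
  have := y.2
  have := u.2
  simp only [extSet, intSet, Set.mem_ofPred_eq] at hx hy
  simp only [lamR]; split_ifs <;> omega

theorem lamR_lt_in {x y u v : Fin (p + q)} (hx : x ∈ extSet p q) (hy : y ∈ intSet p q)
    (h1 : (x : ℕ) < u) (h2 : (u : ℕ) < y) (h3 : (x : ℕ) < v) (h4 : (v : ℕ) < y)
    (h : lamR p q x y u < lamR p q x y v) : (u : ℕ) < v := by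
  have := y.2
  simp only [extSet, intSet, Set.mem_ofPred_eq] at hx hy
  simp only [lamR] at h; split_ifs at h <;> omega

theorem lamR_lt_out {x y u v : Fin (p + q)} (hx : x ∈ extSet p q) (hy : y ∈ intSet p q)
    (h1 : (u : ℕ) < x ∨ (y : ℕ) < u) (h2 : (v : ℕ) < x ∨ (y : ℕ) < v)
    (h : lamR p q x y u < lamR p q x y v) : (u : ℕ) < v := by
  have := y.2
  simp only [extSet, intSet, Set.mem_ofPred_eq] at hx hy
  simp only [lamR] at h; split_ifs at h <;> omega

theorem DNC.sides (h : DNC τ) {x y : Fin (p + q)} (hx : x ∈ extSet p q) (hy : y ∈ intSet p q)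
    (hxy : τ.SameCycle x y) {a c : Fin (p + q)} (hxa : ¬ τ.SameCycle x a) (hac : τ.SameCycle a c) :
    (((x : ℕ) < a ∧ (a : ℕ) < y) ∧ ((x : ℕ) < c ∧ (c : ℕ) < y)) ∨
    (((a : ℕ) < x ∨ (y : ℕ) < a) ∧ ((c : ℕ) < x ∨ (y : ℕ) < c)) := by
  have hxc : ¬ τ.SameCycle x c := fun h => hxa (h.trans hac.symm)
  have hya : ¬ τ.SameCycle y a := fun h => hxa (hxy.trans h)
  have hyc : ¬ τ.SameCycle y c := fun h => hxc (hxy.trans h)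
  have n1 : (x : ℕ) ≠ a := fun e => ne_of_not hxa (Fin.ext e)
  have n2 : (x : ℕ) ≠ c := fun e => ne_of_not hxc (Fin.ext e)
  have n3 : (y : ℕ) ≠ a := fun e => ne_of_not hya (Fin.ext e)
  have n4 : (y : ℕ) ≠ c := fun e => ne_of_not hyc (Fin.ext e)
  have c1 := h.nc hxy hac hxa
  have c2 := h.nc hxy hac.symm hxc
  have c3 := h.nc hac hxy (fun h => hxa h.symm)
  have c4 := h.nc hac.symm hxy (fun h => hxc h.symm)
  simp only [extSet, intSet, Set.mem_ofPred_eq] at hx hy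
  omega

theorem DNC.not_AC3 (h : DNC τ) : ¬ AC3 p q τ := by
  rintro ⟨a, b, c, d, x, y, hne, hx, hy, hg, ht, hs⟩
  obtain ⟨t1, t2, t3, t4⟩ := ht
  obtain ⟨s1, s2⟩ := hs
  have hac := sc_of_induced (by simp) t1
  have hbd := sc_of_induced (by simp) t3
  have hxy := sc_of_induced (by simp) s1
  have hne4 : List.Pairwise (· ≠ ·) [a, b, c, d] :=
    hne.sublist (by
      have : [a, b, c, d, x, y] = [a, b, c, d] ++ [x, y] := rfl
      rw [this]; exact List.sublist_append_left _ _)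
  simp only [List.pairwise_cons, List.mem_cons, List.not_mem_nil, or_false, forall_eq_or_imp, forall_eq] at hne
  have hab := not_sc_of_swap t1 t2 (b := b) (by simp) hne.1.1.symm hne.2.1.1
  have hxa := not_sc_of_swap s1 s2 (b := a) (by simp) hne.1.2.2.2.1 hne.1.2.2.2.2
  have hxb := not_sc_of_swap s1 s2 (b := b) (by simp) hne.2.1.2.2.1 hne.2.1.2.2.2
  have hk := rank_of_cyc4 (lamR_inj hx hy) (fun i hi => nx_lam hx hy hi) 
    ⟨hne.1.2.2.2.1, hne.1.2.2.2.2⟩ ⟨hne.2.1.2.2.1, hne.2.1.2.2.2⟩ ⟨hne.2.2.1.2.1, hne.2.2.1.2.2⟩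
    ⟨hne.2.2.2.1.1, hne.2.2.2.1.2⟩ hne4 hg
  have hbc : ¬ τ.SameCycle b c := fun h => hab (hac.trans h.symm)
  have hcd : ¬ τ.SameCycle c d := fun h => hab (hac.trans (h.trans hbd.symm))
  have hda : ¬ τ.SameCycle d a := fun h => hab (h.symm.trans hbd.symm)
  have n1 := h.nc hac hbd hab
  have n2 := h.nc hbd hac.symm hbc
  have n3 := h.nc hac.symm hbd.symm hcd
  have n4 := h.nc hbd.symm hac hda
  rcases h.sides hx hy hxy hxa hac with ⟨sa, sc⟩ | ⟨sa, sc⟩ <;>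
  rcases h.sides hx hy hxy hxb hbd with ⟨sb, sd⟩ | ⟨sb, sd⟩
  · have l1 := lamR_lt_in hx hy sa.1 sa.2 sb.1 sb.2
    have l2 := lamR_lt_in hx hy sb.1 sb.2 sc.1 sc.2
    have l3 := lamR_lt_in hx hy sc.1 sc.2 sd.1 sd.2
    have l4 := lamR_lt_in hx hy sd.1 sd.2 sa.1 sa.2
    clear hne
    rcases hk with k | k | k | k
    · have := l1 k.1; have := l2 k.2.1; have := l3 k.2.2; omega
    · have := l2 k.1; have := l3 k.2.1; have := l4 k.2.2; omega
    · have := l3 k.1; have := l4 k.2.1; have := l1 k.2.2; omega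
    · have := l4 k.1; have := l1 k.2.1; have := l2 k.2.2; omega
  · have := lamR_in hx hy sa.1 sa.2
    have := lamR_in hx hy sc.1 sc.2
    have := lamR_out hx hy sb
    have := lamR_out hx hy sd
    omega
  · have := lamR_out hx hy sa
    have := lamR_out hx hy sc
    have := lamR_in hx hy sb.1 sb.2
    have := lamR_in hx hy sd.1 sd.2
    omega
  · have l1 := lamR_lt_out hx hy sa sb
    have l2 := lamR_lt_out hx hy sb sc
    have l3 := lamR_lt_out hx hy sc sd
    have l4 := lamR_lt_out hx hy sd sa
    clear hne
    rcases hk with k | k | k | k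
    · have := l1 k.1; have := l2 k.2.1; have := l3 k.2.2; omega
    · have := l2 k.1; have := l3 k.2.1; have := l4 k.2.2; omega
    · have := l3 k.1; have := l4 k.2.1; have := l1 k.2.2; omega
    · have := l4 k.1; have := l1 k.2.1; have := l2 k.2.2; omega

theorem DNC.not_AC2 (h : DNC τ) : ¬ AC2 p q τ := by
  rintro ⟨a, b, c, x, y, hne, hx, hy, hg, ht, hs⟩
  obtain ⟨t1, t2, t3⟩ := ht
  obtain ⟨s1, s2⟩ := hs
  have hac := sc_of_induced (by simp) t1
  have hcb := sc_of_induced (by simp) t2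
  have hab := hac.trans hcb
  have hxy := sc_of_induced (by simp) s1
  simp only [List.pairwise_cons, List.mem_cons, List.not_mem_nil, or_false, forall_eq_or_imp, forall_eq] at hne
  have hxa := not_sc_of_swap s1 s2 (b := a) (by simp) hne.1.2.2.1 hne.1.2.2.2
  have hya : ¬ τ.SameCycle y a := fun h => hxa (hxy.trans h)
  have hk := rank_of_cyc3 (lamR_inj hx hy) (fun i hi => nx_lam hx hy hi) 
    ⟨hne.1.2.2.1, hne.1.2.2.2⟩ ⟨hne.2.1.2.1, hne.2.1.2.2⟩ ⟨hne.2.2.1.1, hne.2.2.1.2⟩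
    hne.1.1 hne.1.2.1 hne.2.1.1 hg
  have hS : ∀ i, τ.SameCycle a i → i ∈ ({a, b, c, x, y} : Set (Fin (p + q))) →
      induced τ {a, b, c, x, y} i = induced τ {a, c, b} i := by
    intro i hi hiS
    rw [induced_inter (f := τ) (S := {a, b, c, x, y}) (A := {j | τ.SameCycle a j}) (i := i)
      (fun s _ h => hi.trans h) hiS (Equiv.Perm.SameCycle.refl _ _)]
    congr 1
    ext s
    constructor
    · rintro ⟨(rfl | rfl | rfl | rfl | rfl), h⟩
      · simp
      · simp
      · simp
      · exact absurd h.symm hxa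
      · exact absurd h.symm hya
    · rintro (rfl | rfl | rfl)
      · exact ⟨by simp, Equiv.Perm.SameCycle.refl _ _⟩
      · exact ⟨by simp, hac⟩
      · exact ⟨by simp, hab⟩
  rw [hS a (Equiv.Perm.SameCycle.refl _ _) (by simp)] at t1
  rw [hS c hac (by simp)] at t2
  rw [hS b hab (by simp)] at t3
  have hA : ∀ j ∈ {j | τ.SameCycle a j}, Nx Fin.val {j | τ.SameCycle a j} j (τ j) := by
    intro j hj
    have : {k | τ.SameCycle a k} = {k | τ.SameCycle j k} := by
      ext k; exact ⟨fun h => hj.symm.trans h, fun h => Equiv.Perm.SameCycle.trans hj h⟩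
    rw [this]
    exact h.1 j
  have hk2 := rank_of_cyc3 (val_injOn _) hA (Equiv.Perm.SameCycle.refl _ _) hac hab hne.1.2.1
    hne.1.1 hne.2.1.1.symm ⟨t1, t2, t3⟩
  rcases h.sides hx hy hxy hxa hac with ⟨sa, sc⟩ | ⟨sa, sc⟩ <;>
  rcases h.sides hx hy hxy hxa hab with ⟨sb, sd⟩ | ⟨sb, sd⟩
  · have l1 := lamR_lt_in hx hy sa.1 sa.2 sd.1 sd.2
    have l2 := lamR_lt_in hx hy sd.1 sd.2 sc.1 sc.2
    have l3 := lamR_lt_in hx hy sc.1 sc.2 sa.1 sa.2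
    omega
  · omega
  · omega
  · have l1 := lamR_lt_out hx hy sa sd
    have l2 := lamR_lt_out hx hy sd sc
    have l3 := lamR_lt_out hx hy sc sa
    omega

theorem DNC.annNC (h : DNC τ) : AnnNC p q τ := ⟨h.std, h.not_AC1, h.not_AC2, h.not_AC3⟩

end Bwd


section Rot
variable {p q : ℕ}

/-- Symmetries of the annular configuration. -/
structure RotSym (p q : ℕ) (g : Equiv.Perm (Fin (p + q))) : Prop where
  ce : g * gammaExt p q * g⁻¹ = gammaExt p q
  ci : g * gammaInt p q * g⁻¹ = gammaInt p q
  ext : ∀ i, g i ∈ extSet p q ↔ i ∈ extSet p q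

theorem int_iff_not_ext (i : Fin (p + q)) : i ∈ intSet p q ↔ ¬ i ∈ extSet p q := by
  simp only [extSet, intSet, Set.mem_ofPred_eq]; omega

theorem RotSym.int {g : Equiv.Perm (Fin (p + q))} (h : RotSym p q g) (i : Fin (p + q)) :
    g i ∈ intSet p q ↔ i ∈ intSet p q := by
  rw [int_iff_not_ext, int_iff_not_ext, h.ext]

theorem RotSym.inv {g : Equiv.Perm (Fin (p + q))} (h : RotSym p q g) : RotSym p q g⁻¹ := by
  refine ⟨?_, ?_, ?_⟩
  · have := h.ce
    conv_lhs => rw [← this]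
    group
  · have := h.ci
    conv_lhs => rw [← this]
    group
  · intro i
    rw [← h.ext]; simp

theorem RotSym.mul {g g' : Equiv.Perm (Fin (p + q))} (h : RotSym p q g) (h' : RotSym p q g') :
    RotSym p q (g * g') := by
  refine ⟨?_, ?_, ?_⟩
  · have e : g * g' * gammaExt p q * (g * g')⁻¹ = g * (g' * gammaExt p q * g'⁻¹) * g⁻¹ := by group
    rw [e, h'.ce, h.ce]
  · have e : g * g' * gammaInt p q * (g * g')⁻¹ = g * (g' * gammaInt p q * g'⁻¹) * g⁻¹ := by group
    rw [e, h'.ci, h.ci]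
  · intro i
    rw [Equiv.Perm.mul_apply, h.ext, h'.ext]

theorem RotSym.one : RotSym p q 1 := ⟨by simp, by simp, by simp⟩

theorem RotSym.pow {g : Equiv.Perm (Fin (p + q))} (h : RotSym p q g) (k : ℕ) : RotSym p q (g ^ k) := by
  induction k with
  | zero => simpa using RotSym.one
  | succ k ih => rw [pow_succ]; exact ih.mul h

theorem gamma_commute : Commute (gammaExt p q) (gammaInt p q) := by
  apply Equiv.Perm.Disjoint.commute
  intro i
  rcases ext_or_int i with h | h
  · exact Or.inr (gammaInt_ext h)
  · exact Or.inl (gammaExt_int h)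

theorem gammaExt_mem (i : Fin (p + q)) : gammaExt p q i ∈ extSet p q ↔ i ∈ extSet p q := by
  rcases ext_or_int i with h | h
  · exact ⟨fun _ => h, fun _ => (nx_ext h).1⟩
  · rw [gammaExt_int h]

theorem gammaInt_mem (i : Fin (p + q)) : gammaInt p q i ∈ extSet p q ↔ i ∈ extSet p q := by
  rcases ext_or_int i with h | h
  · rw [gammaInt_ext h]
  · have h2 : gammaInt p q i ∈ intSet p q := (nx_int h).1
    rw [int_iff_not_ext] at h h2
    exact ⟨fun h' => absurd h' h2, fun h' => absurd h' h⟩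

theorem RotSym.gE : RotSym p q (gammaExt p q) := by
  refine ⟨by simp, ?_, gammaExt_mem⟩
  rw [gamma_commute.eq]; simp

theorem RotSym.gI : RotSym p q (gammaInt p q) := by
  refine ⟨?_, by simp, gammaInt_mem⟩
  rw [← gamma_commute.eq]; simp

theorem formPerm_conj {α : Type*} [DecidableEq α] (g : Equiv.Perm α) (l : List α) :
    (l.map g).formPerm = g * l.formPerm * g⁻¹ := by
  induction l with
  | nil => simp
  | cons a l ih =>
    cases l with
    | nil => simp
    | cons b l =>
      simp only [List.map_cons, List.formPerm_cons_cons] at ih ⊢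
      rw [ih, Equiv.swap_apply_apply]
      group

theorem conj_pow_apply {α : Type*} {g f : Equiv.Perm α} (h : g * f * g⁻¹ = f) (k : ℕ) (x : α) :
    (f ^ k) (g x) = g ((f ^ k) x) := by
  have : g * f ^ k * g⁻¹ = f ^ k := by rw [← conj_pow, h]
  conv_lhs => rw [← this]
  simp

theorem RotSym.lam {g : Equiv.Perm (Fin (p + q))} (h : RotSym p q g) (x y : Fin (p + q)) :
    lamPerm p q (g x) (g y) = g * lamPerm p q x y * g⁻¹ := by
  rw [lamPerm, lamPerm, ← formPerm_conj]
  simp only [List.map_append, List.map_map]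
  congr 3
  · funext k
    exact conj_pow_apply h.ce _ _
  · funext k
    exact conj_pow_apply h.ci _ _

theorem RotSym.gam {g : Equiv.Perm (Fin (p + q))} (h : RotSym p q g) :
    g * gammaAnn p q * g⁻¹ = gammaAnn p q := by
  have e : g * gammaAnn p q * g⁻¹ = (g * gammaExt p q * g⁻¹) * (g * gammaInt p q * g⁻¹) := by
    rw [gammaAnn]; group
  rw [e, h.ce, h.ci, gammaAnn]

theorem RotSym.ac1 {g τ : Equiv.Perm (Fin (p + q))} (h : RotSym p q g) (ht : AC1 p q τ) :
    AC1 p q (g * τ * g⁻¹) := by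
  obtain ⟨a, b, c, d, hne, ⟨a1, a2, a3, a4⟩, ⟨b1, b2, b3, b4⟩⟩ := ht
  have hS : ({g a, g b, g c, g d} : Set (Fin (p + q))) = g '' {a, b, c, d} := by
    simp [Set.image_insert_eq]
  refine ⟨g a, g b, g c, g d, ?_, ?_, ?_⟩
  · have := hne.map g (fun _ _ h => g.injective.ne h); simpa using this
  · rw [hS, ← h.gam]
    refine ⟨?_, ?_, ?_, ?_⟩ <;> rw [induced_conj] <;> congr 1
  · rw [hS]
    refine ⟨?_, ?_, ?_, ?_⟩ <;> rw [induced_conj] <;> congr 1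

theorem RotSym.ac2 {g τ : Equiv.Perm (Fin (p + q))} (h : RotSym p q g) (ht : AC2 p q τ) :
    AC2 p q (g * τ * g⁻¹) := by
  obtain ⟨a, b, c, x, y, hne, hx, hy, ⟨a1, a2, a3⟩, ⟨b1, b2, b3⟩, ⟨c1, c2⟩⟩ := ht
  have hS : ({g a, g b, g c, g x, g y} : Set (Fin (p + q))) = g '' {a, b, c, x, y} := by
    simp [Set.image_insert_eq]
  have hS' : ({g a, g b, g c} : Set (Fin (p + q))) = g '' {a, b, c} := by
    simp [Set.image_insert_eq]
  refine ⟨g a, g b, g c, g x, g y, ?_, (h.ext x).2 hx, (h.int y).2 hy, ?_, ?_, ?_⟩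
  · have := hne.map g (fun _ _ h => g.injective.ne h); simpa using this
  · rw [hS', h.lam]
    refine ⟨?_, ?_, ?_⟩ <;> rw [induced_conj] <;> congr 1
  · rw [hS]
    refine ⟨?_, ?_, ?_⟩ <;> rw [induced_conj] <;> congr 1
  · rw [hS]
    refine ⟨?_, ?_⟩ <;> rw [induced_conj] <;> congr 1

theorem RotSym.ac3 {g τ : Equiv.Perm (Fin (p + q))} (h : RotSym p q g) (ht : AC3 p q τ) :
    AC3 p q (g * τ * g⁻¹) := by
  obtain ⟨a, b, c, d, x, y, hne, hx, hy, ⟨a1, a2, a3, a4⟩, ⟨b1, b2, b3, b4⟩, ⟨c1, c2⟩⟩ := ht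
  have hS : ({g a, g b, g c, g d, g x, g y} : Set (Fin (p + q))) = g '' {a, b, c, d, x, y} := by
    simp [Set.image_insert_eq]
  have hS' : ({g a, g b, g c, g d} : Set (Fin (p + q))) = g '' {a, b, c, d} := by
    simp [Set.image_insert_eq]
  refine ⟨g a, g b, g c, g d, g x, g y, ?_, (h.ext x).2 hx, (h.int y).2 hy, ?_, ?_, ?_⟩
  · have := hne.map g (fun _ _ h => g.injective.ne h); simpa using this
  · rw [hS', h.lam]
    refine ⟨?_, ?_, ?_, ?_⟩ <;> rw [induced_conj] <;> congr 1
  · rw [hS]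
    refine ⟨?_, ?_, ?_, ?_⟩ <;> rw [induced_conj] <;> congr 1
  · rw [hS]
    refine ⟨?_, ?_⟩ <;> rw [induced_conj] <;> congr 1

theorem RotSym.std {g τ : Equiv.Perm (Fin (p + q))} (h : RotSym p q g) (ht : AnnStandard p q τ) :
    AnnStandard p q (g * τ * g⁻¹) := by
  have horb : ∀ A, IsOrbit (g * τ * g⁻¹) A → ∃ B, IsOrbit τ B ∧ A = g '' B := by
    rintro A ⟨a, rfl⟩
    refine ⟨_, ⟨g⁻¹ a, rfl⟩, ?_⟩
    ext b
    constructor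
    · intro hb
      exact ⟨g⁻¹ b, Equiv.Perm.sameCycle_conj.1 hb, by simp⟩
    · rintro ⟨c, hc, rfl⟩
      exact Equiv.Perm.sameCycle_conj.2 (by simpa using hc)
  have hE : ∀ B : Set (Fin (p + q)), g '' B ∩ extSet p q = g '' (B ∩ extSet p q) := by
    intro B
    ext i
    constructor
    · rintro ⟨⟨j, hj, rfl⟩, hi⟩; exact ⟨j, ⟨hj, (h.ext j).1 hi⟩, rfl⟩
    · rintro ⟨j, ⟨hj, hi⟩, rfl⟩; exact ⟨⟨j, hj, rfl⟩, (h.ext j).2 hi⟩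
  have hI : ∀ B : Set (Fin (p + q)), g '' B ∩ intSet p q = g '' (B ∩ intSet p q) := by
    intro B
    ext i
    constructor
    · rintro ⟨⟨j, hj, rfl⟩, hi⟩; exact ⟨j, ⟨hj, (h.int j).1 hi⟩, rfl⟩
    · rintro ⟨j, ⟨hj, hi⟩, rfl⟩; exact ⟨⟨j, hj, rfl⟩, (h.int j).2 hi⟩
  constructor
  · intro A hA
    obtain ⟨B, hB, rfl⟩ := horb A hA
    obtain ⟨h1, h2⟩ := ht.1 B hB
    rw [hE, hI]
    constructor
    · rintro _ ⟨b, hb, rfl⟩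
      rw [induced_conj, h1 b hb]
      conv_rhs => rw [← h.ce]
      rw [induced_conj]
    · rintro _ ⟨b, hb, rfl⟩
      rw [induced_conj, h2 b hb]
      conv_rhs => rw [← h.ci]
      rw [induced_conj]
  · intro A hA
    obtain ⟨B, hB, rfl⟩ := horb A hA
    rw [hE, hI]
    intro n1 n2
    obtain ⟨⟨a, ha, ha'⟩, ⟨b, hb, hb'⟩⟩ := ht.2 B hB n1.of_image n2.of_image
    constructor
    · refine ⟨g a, ⟨⟨a, ha.1, rfl⟩, ?_⟩, ?_⟩
      · simpa [h.int] using ha.2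
      · rintro _ ⟨⟨c, hc, rfl⟩, hc'⟩
        rw [ha' c ⟨hc, by simpa [h.int] using hc'⟩]
    · refine ⟨g b, ⟨⟨b, hb.1, rfl⟩, ?_⟩, ?_⟩
      · simpa [h.ext] using hb.2
      · rintro _ ⟨⟨c, hc, rfl⟩, hc'⟩
        rw [hb' c ⟨hc, by simpa [h.ext] using hc'⟩]

theorem RotSym.annNC {g τ : Equiv.Perm (Fin (p + q))} (h : RotSym p q g) (ht : AnnNC p q τ) :
    AnnNC p q (g * τ * g⁻¹) := by
  have e : g⁻¹ * (g * τ * g⁻¹) * g⁻¹⁻¹ = τ := by group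
  refine ⟨h.std ht.1, fun hc => ht.2.1 ?_, fun hc => ht.2.2.1 ?_, fun hc => ht.2.2.2 ?_⟩
  · have := h.inv.ac1 hc; rwa [e] at this
  · have := h.inv.ac2 hc; rwa [e] at this
  · have := h.inv.ac3 hc; rwa [e] at this

theorem exists_rot {x x' y y' : Fin (p + q)} (hx : x ∈ extSet p q) (hx' : x' ∈ extSet p q)
    (hy : y ∈ intSet p q) (hy' : y' ∈ intSet p q) : ∃ g, RotSym p q g ∧ g x = x' ∧ g y = y' := by
  have fx : ∀ k, (gammaExt p q ^ k) y' = y' := by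
    intro k
    induction k with
    | zero => simp
    | succ k ih => rw [pow_succ, Equiv.Perm.mul_apply, gammaExt_int hy', ih]
  have fy : ∀ k, (gammaInt p q ^ k) x = x := by
    intro k
    induction k with
    | zero => simp
    | succ k ih => rw [pow_succ, Equiv.Perm.mul_apply, gammaInt_ext hx, ih]
  simp only [extSet, intSet, Set.mem_ofPred_eq] at hx hx' hy hy'
  have e1 : ∃ k, (gammaExt p q ^ k) x = x' := by
    refine ⟨if (x : ℕ) ≤ x' then x' - x else x' + p - x, ?_⟩
    ext
    rw [gammaExt_pow_val hx _ (by split_ifs <;> omega)]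
    split_ifs <;> omega
  have e2 : ∃ k, (gammaInt p q ^ k) y = y' := by
    refine ⟨if (y : ℕ) ≤ y' then y' - y else y' + q - y, ?_⟩
    ext
    have := y.2
    have := y'.2
    rw [gammaInt_pow_val hy _ (by split_ifs <;> omega)]
    split_ifs <;> omega
  obtain ⟨k, hk⟩ := e1
  obtain ⟨l, hl⟩ := e2
  refine ⟨gammaExt p q ^ k * gammaInt p q ^ l, (RotSym.gE.pow k).mul (RotSym.gI.pow l), ?_, ?_⟩
  · rw [Equiv.Perm.mul_apply, fy, hk]
  · rw [Equiv.Perm.mul_apply, hl, fx]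

end Rot


section Code
variable {n : ℕ}

/-- Code of a permutation: record block minima and block maxima. -/
def pcode (τ : Equiv.Perm (Fin n)) (i : Fin n) : Bool × Bool :=
  (decide (i ≤ τ⁻¹ i), decide (τ i ≤ i))

theorem pcode_e (τ : Equiv.Perm (Fin n)) (i : Fin n) : (pcode τ i).1 = true ↔ i ≤ τ⁻¹ i := by
  simp [pcode]

theorem pcode_d (τ : Equiv.Perm (Fin n)) (i : Fin n) : (pcode τ i).2 = true ↔ τ i ≤ i := by
  simp [pcode]

theorem DNC.up {τ : Equiv.Perm (Fin n)} (h : DNC τ) {i k : Fin n} (hi : i < τ i)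
    (hk : τ.SameCycle i k) : k ≤ i ∨ τ i ≤ k := by
  rcases (h.1 i).2 with h2 | h2
  · exact h2.2 k hk
  · have := (h2 k hk).1
    have := (h2 i (Equiv.Perm.SameCycle.refl _ _)).1
    omega

theorem DNC.down {τ : Equiv.Perm (Fin n)} (h : DNC τ) {i k : Fin n} (hi : τ i ≤ i)
    (hk : τ.SameCycle i k) : τ i ≤ k ∧ k ≤ i := by
  rcases (h.1 i).2 with h2 | h2
  · have := h2.1
    omega
  · exact h2 k hk

theorem sc_app (τ : Equiv.Perm (Fin n)) (i : Fin n) : τ.SameCycle i (τ i) := by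
  simpa using Equiv.Perm.SameCycle.refl τ i

theorem inv_app (τ : Equiv.Perm (Fin n)) (i : Fin n) : τ⁻¹ (τ i) = i := by simp

theorem dec_aux (a b : Fin n) :
    (decide (a ≤ b)).toNat + (if b ≤ a then 1 else 0) = 1 + if a = b then 1 else 0 := by
  rcases lt_trichotomy a b with h | h | h
  · simp [h.le, h.not_ge, h.ne]
  · simp [h]
  · simp [h.le, h.not_ge, h.ne']

theorem code_inj1 {τ σ : Equiv.Perm (Fin n)} (h : DNC τ) (hc : pcode τ = pcode σ)
    {j : Fin n} (ih : ∀ l < j, τ⁻¹ l < l → τ⁻¹ l = σ⁻¹ l) (h2 : σ⁻¹ j < j) :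
    ¬ τ⁻¹ j < σ⁻¹ j := by
  intro hlt
  obtain ⟨i, rfl⟩ : ∃ i, j = τ i := ⟨τ⁻¹ j, by simp⟩
  set i' := σ⁻¹ (τ i) with hi'
  have e1 : σ i' = τ i := by simp [hi']
  simp only [inv_app] at hlt
  have hd : ¬ τ i' ≤ i' := by
    rw [← pcode_d, hc, pcode_d, e1]; exact not_le.2 h2
  rw [not_le] at hd
  have hup : i < τ i := hlt.trans h2
  rcases lt_trichotomy (τ i') (τ i) with h3 | h3 | h3
  · have := ih _ h3 (by simpa using hd)
    have h4 : σ i' = τ i' := by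
      have : σ⁻¹ (τ i') = i' := by rw [← this]; simp
      conv_lhs => rw [← this]
      simp
    rw [e1] at h4
    exact absurd h4 h3.ne'
  · exact absurd (τ.injective h3) hlt.ne'
  · have := h.2 i i' (τ i) (τ i') hlt h2 h3 (sc_app τ i) (sc_app τ i')
    have := h.up hup this
    omega

theorem code_inj2 {τ σ : Equiv.Perm (Fin n)} (h : DNC τ) (h' : DNC σ) (hc : pcode τ = pcode σ)
    (j : Fin n) : (τ⁻¹ j < j → τ⁻¹ j = σ⁻¹ j) := by
  induction j using WellFoundedLT.induction with
  | ind j ih =>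
    intro hj
    have hj' : σ⁻¹ j < j := by
      rw [← not_le, ← pcode_e, ← hc, pcode_e, not_le]; exact hj
    refine le_antisymm (not_lt.1 ?_) (not_lt.1 (code_inj1 h hc ih hj'))
    refine code_inj1 h' hc.symm ?_ hj
    intro l hl hl'
    refine (ih l hl ?_).symm
    rw [← not_le, ← pcode_e, hc, pcode_e, not_le]; exact hl'

theorem code_inj3 {τ σ : Equiv.Perm (Fin n)} (h : DNC τ) (hc : pcode τ = pcode σ)
    {i : Fin n} (ih : ∀ l < i, τ l ≤ l → τ l = σ l) (h1 : τ i ≤ i) (h2 : σ i ≤ i) :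
    ¬ τ i < σ i := by
  intro hlt
  obtain ⟨i', hi'⟩ : ∃ i', τ i' = σ i := ⟨τ⁻¹ (σ i), by simp⟩
  have hE : σ i ≤ τ⁻¹ (σ i) := by
    rw [← pcode_e, hc, pcode_e]; simpa using h2
  rw [← hi'] at hE hlt h2
  simp only [inv_app] at hE
  have hsc : ¬ τ.SameCycle (τ i) (τ i') := by
    intro hs
    have := (h.down hE (k := τ i) (by simpa using hs.symm)).1
    omega
  rcases lt_trichotomy i' i with h3 | h3 | h3
  · have := ih i' h3 hE
    rw [hi'] at this
    exact absurd (σ.injective this) h3.ne'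
  · subst h3; exact absurd hlt (lt_irrefl _)
  · rcases h2.lt_or_eq with h4 | h4
    · exact hsc (h.2 (τ i) (τ i') i i' hlt h4 h3 (sc_app τ i).symm (sc_app τ i').symm)
    · apply hsc
      rw [h4]; exact (sc_app τ i).symm

theorem code_inj {τ σ : Equiv.Perm (Fin n)} (h : DNC τ) (h' : DNC σ) (hc : pcode τ = pcode σ) :
    τ = σ := by
  have hD : ∀ i, τ i ≤ i ↔ σ i ≤ i := by
    intro i; rw [← pcode_d, hc, pcode_d]
  ext1 i
  induction i using WellFoundedLT.induction with
  | ind i ih =>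
    rcases le_or_gt (τ i) i with h1 | h1
    · have h2 := (hD i).1 h1
      exact le_antisymm (not_lt.1 (code_inj3 h' hc.symm (fun l hl _ => (ih l hl).symm) h2 h1))
        (not_lt.1 (code_inj3 h hc (fun l hl _ => ih l hl) h1 h2))
    · have := code_inj2 h h' hc (τ i) (by simpa using h1)
      rw [inv_app] at this
      conv_rhs => rw [this]
      simp

theorem link_iff {τ : Equiv.Perm (Fin n)} (h : DNC τ) {x y : Fin n} (hxy : (x : ℕ) + 1 = y) :
    τ x = y ↔ (pcode τ x).2 = false ∧ (pcode τ y).1 = false := by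
  rw [← Bool.not_eq_true, ← Bool.not_eq_true, pcode_e, pcode_d, not_le, not_le]
  constructor
  · rintro rfl
    rw [inv_app]
    omega
  · rintro ⟨h1, h2⟩
    obtain ⟨i, rfl⟩ : ∃ i, y = τ i := ⟨τ⁻¹ y, by simp⟩
    rw [inv_app] at h2
    by_contra hne
    have hix : i ≠ x := fun e => hne (by rw [e])
    have h3 : i < x := by omega
    have h4 : τ i < τ x := by omega
    have := h.2 i x (τ i) (τ x) h3 (by omega) h4 (sc_app τ i) (sc_app τ x)
    have := h.up h2 this
    omega

/-- The number of arcs open at height `i`. -/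
def openCnt (τ : Equiv.Perm (Fin n)) (i : ℕ) : ℕ :=
  (Finset.univ.filter fun k : Fin n => (k : ℕ) < i ∧ i ≤ (τ k : ℕ)).card

theorem openCnt_zero (τ : Equiv.Perm (Fin n)) : openCnt τ 0 = 0 := by
  simp [openCnt]

theorem openCnt_top (τ : Equiv.Perm (Fin n)) : openCnt τ n = 0 := by
  simp only [openCnt, Finset.card_eq_zero, Finset.filter_eq_empty_iff]
  intro k _
  have := (τ k).2
  omega

theorem openCnt_pos (τ : Equiv.Perm (Fin n)) (i : Fin n) :
    1 ≤ openCnt τ i + (pcode τ i).1.toNat := by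
  cases he : (pcode τ i).1 with
  | true => simp
  | false =>
    rw [← Bool.not_eq_true, pcode_e, not_le] at he
    simp only [openCnt, Bool.toNat_false, add_zero, Finset.one_le_card]
    exact ⟨τ⁻¹ i, by simpa using he⟩

theorem openCnt_step (τ : Equiv.Perm (Fin n)) (i : Fin n) :
    openCnt τ (i + 1) + (pcode τ i).2.toNat = openCnt τ i + (pcode τ i).1.toNat := by
  have e1 : (Finset.univ.filter fun k : Fin n => (k : ℕ) ≤ i ∧ (i : ℕ) ≤ (τ k : ℕ)).card
      = openCnt τ i + if i ≤ τ i then 1 else 0 := by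
    rw [openCnt]
    split_ifs with h
    · rw [← Finset.card_insert_of_notMem (a := i) (by simp)]
      congr 1
      ext k
      simp only [Finset.mem_filter, Finset.mem_univ, true_and, Finset.mem_insert]
      constructor
      · rintro ⟨h1, h2⟩
        rcases h1.lt_or_eq with h3 | h3
        · exact Or.inr ⟨h3, h2⟩
        · exact Or.inl (Fin.ext h3)
      · rintro (rfl | ⟨h1, h2⟩)
        · exact ⟨le_refl _, h⟩
        · exact ⟨h1.le, h2⟩
    · rw [add_zero]
      congr 1
      ext k
      simp only [Finset.mem_filter, Finset.mem_univ, true_and]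
      constructor
      · rintro ⟨h1, h2⟩
        rcases h1.lt_or_eq with h3 | h3
        · exact ⟨h3, h2⟩
        · rw [Fin.ext h3] at h2; exact absurd h2 h
      · rintro ⟨h1, h2⟩
        exact ⟨h1.le, h2⟩
  have e2 : (Finset.univ.filter fun k : Fin n => (k : ℕ) ≤ i ∧ (i : ℕ) ≤ (τ k : ℕ)).card
      = openCnt τ (i + 1) + if τ⁻¹ i ≤ i then 1 else 0 := by
    rw [openCnt]
    split_ifs with h
    · rw [← Finset.card_insert_of_notMem (a := τ⁻¹ i) (by simp)]
      congr 1
      ext k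
      simp only [Finset.mem_filter, Finset.mem_univ, true_and, Finset.mem_insert]
      constructor
      · rintro ⟨h1, h2⟩
        rcases h2.lt_or_eq with h3 | h3
        · exact Or.inr ⟨by omega, h3⟩
        · left; rw [Fin.ext h3]; simp
      · rintro (rfl | ⟨h1, h2⟩)
        · exact ⟨h, by simp⟩
        · exact ⟨by omega, by omega⟩
    · rw [add_zero]
      congr 1
      ext k
      simp only [Finset.mem_filter, Finset.mem_univ, true_and]
      constructor
      · rintro ⟨h1, h2⟩
        rcases h2.lt_or_eq with h3 | h3
        · exact ⟨by omega, h3⟩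
        · exfalso; apply h; rw [Fin.ext h3, inv_app, ← Fin.ext h3]; exact h1
      · rintro ⟨h1, h2⟩
        exact ⟨by omega, by omega⟩
  rw [e1] at e2
  have e3 : (pcode τ i).2.toNat + (if i ≤ τ i then 1 else 0) = 1 + if τ i = i then 1 else 0 := by
    exact dec_aux (τ i) i
  have e4 : (pcode τ i).1.toNat + (if τ⁻¹ i ≤ i then 1 else 0) = 1 + if τ i = i then 1 else 0 := by
    have : τ i = i ↔ i = τ⁻¹ i := by
      constructor
      · intro h; conv_rhs => rw [← h]
        rw [inv_app]
      · intro h; conv_lhs => rw [h]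
        simp
    simp only [this]
    exact dec_aux i (τ⁻¹ i)
  omega

end Code


section Surj

/-- `k` is the block minimum of `i`, as read from the path `G`, with up-steps `E`. -/
def BlkMin (G E : ℕ → ℕ) (i k : ℕ) : Prop :=
  E k = 1 ∧ k ≤ i ∧ G k + E k = G i + E i ∧
    ∀ l, k < l → l ≤ i → G i + E i ≤ G l + E l ∧ (E l = 1 → G i + E i < G l + E l)

variable {n : ℕ} {G E D : ℕ → ℕ}

theorem blk_exists_aux (hE : ∀ i, E i ≤ 1) (h0 : G 0 = 0)
    (hs : ∀ i < n, 1 ≤ G i + E i ∧ G (i + 1) + D i = G i + E i) (h : ℕ) (hh : 1 ≤ h) (i : ℕ) (hi : i < n)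
    (hle : h ≤ G i + E i) : ∃ k, E k = 1 ∧ k ≤ i ∧ G k + E k = h ∧
      ∀ l, k < l → l ≤ i → h ≤ G l + E l ∧ (E l = 1 → h < G l + E l) := by
  induction i with
  | zero =>
    have := hE 0
    refine ⟨0, by omega, le_refl _, by omega, fun l h1 h2 => by omega⟩
  | succ i ih =>
    by_cases hc : E (i + 1) = 1 ∧ G (i + 1) + E (i + 1) = h
    · exact ⟨i + 1, hc.1, le_refl _, hc.2, fun l h1 h2 => by omega⟩
    · have h1 := hs i (by omega)
      have h2 := hE (i + 1)
      obtain ⟨k, a1, a2, a3, a4⟩ := ih (by omega) (by omega)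
      refine ⟨k, a1, by omega, a3, ?_⟩
      intro l l1 l2
      rcases l2.lt_or_eq with l3 | rfl
      · exact a4 l l1 (by omega)
      · exact ⟨hle, fun h => by omega⟩

theorem blk_exists (hE : ∀ i, E i ≤ 1) (h0 : G 0 = 0)
    (hs : ∀ i < n, 1 ≤ G i + E i ∧ G (i + 1) + D i = G i + E i) (i : ℕ) (hi : i < n) :
    ∃ k, BlkMin G E i k :=
  blk_exists_aux hE h0 hs _ (hs i hi).1 i hi (le_refl _)

theorem BlkMin.unique {i k k' : ℕ} (h : BlkMin G E i k) (h' : BlkMin G E i k') : k = k' := by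
  obtain ⟨a1, a2, a3, a4⟩ := h
  obtain ⟨b1, b2, b3, b4⟩ := h'
  rcases lt_trichotomy k k' with hk | hk | hk
  · have := (a4 k' hk b2).2 b1; omega
  · exact hk
  · have := (b4 k hk a2).2 a1; omega

theorem blk_next (h0 : G n = 0)
    (hs : ∀ i < n, 1 ≤ G i + E i ∧ G (i + 1) + D i = G i + E i) (hD : ∀ i, D i ≤ 1)
    (h : ℕ) (hh : 1 ≤ h) (t i : ℕ) (hi : i + t = n) (hle : h ≤ G i) : ∃ j, i ≤ j ∧ j < n ∧ G j + E j = h ∧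
      ∀ l, i ≤ l → l ≤ j → h ≤ G l + E l ∧ (E l = 1 → h < G l + E l) := by
  induction t generalizing i with
  | zero =>
    rw [add_zero] at hi
    subst hi
    omega
  | succ t ih =>
    have h1 := hs i (by omega)
    have h2 := hD i
    by_cases hc : h ≤ G (i + 1)
    · obtain ⟨j, a1, a2, a3, a4⟩ := ih (i + 1) (by omega) hc
      refine ⟨j, by omega, a2, a3, ?_⟩
      intro l l1 l2
      rcases l1.lt_or_eq with l3 | rfl
      · exact a4 l l3 l2
      · omega
    · refine ⟨i, le_refl _, by omega, by omega, ?_⟩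
      intro l l1 l2
      obtain rfl : l = i := by omega
      omega

theorem BlkMin.idem {i k : ℕ} (h : BlkMin G E i k) : BlkMin G E k k :=
  ⟨h.1, le_refl _, rfl, fun l h1 h2 => by omega⟩

/-- A permutation whose blocks are the fibres of `f`. -/
theorem exists_perm_fibre {n : ℕ} (f : Fin n → ℕ) :
    ∃ τ : Equiv.Perm (Fin n), ∀ i, Nx Fin.val {j | f i = f j} i (τ i) := by
  have hex : ∀ i, ∃ j, Nx Fin.val {j | f i = f j} i j := by
    intro i
    by_cases hc : ∃ j, f i = f j ∧ i < j
    · have hS : (Finset.univ.filter fun j => f i = f j ∧ i < j).Nonempty := by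
        obtain ⟨j, hj⟩ := hc; exact ⟨j, by simpa using hj⟩
      have hm := Finset.min'_mem _ hS
      simp only [Finset.mem_filter, Finset.mem_univ, true_and] at hm
      refine ⟨_, hm.1, Or.inl ⟨hm.2, ?_⟩⟩
      intro k hk
      by_cases hik : i < k
      · right
        exact Finset.min'_le _ k (by simpa using ⟨hk, hik⟩)
      · left; exact not_lt.1 hik
    · have hS : (Finset.univ.filter fun j => f i = f j).Nonempty := ⟨i, by simp⟩
      have hm := Finset.min'_mem _ hS
      simp only [Finset.mem_filter, Finset.mem_univ, true_and] at hm
      refine ⟨_, hm, Or.inr ?_⟩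
      intro k hk
      refine ⟨Finset.min'_le _ k (by simpa using hk), ?_⟩
      by_contra hc'
      exact hc ⟨k, hk, not_le.1 hc'⟩
  choose t ht using hex
  have hinj : Function.Injective t := by
    intro i i' e
    have h1 := ht i
    have h2 := ht i'
    have e1 : f i = f (t i) := h1.1
    have e2 : f i' = f (t i') := h2.1
    have m1 : f i = f i' := by rw [e1, e2, e]
    have a1 := h1.2
    have a2 := h2.2
    rw [← e] at a2
    simp only [Set.mem_ofPred_eq, ← m1] at a1 a2
    apply Fin.ext
    rcases a1 with ⟨a1, b1⟩ | a1 <;> rcases a2 with ⟨a2, b2⟩ | a2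
    · have := b1 i' m1; have := b2 i rfl; omega
    · have := a2 i rfl; omega
    · have := a1 i' m1; omega
    · have := a1 i' m1; have := a2 i rfl; omega
  exact ⟨Equiv.ofBijective t (Finite.injective_iff_bijective.1 hinj), ht⟩

theorem sameCycle_fibre {n : ℕ} {f : Fin n → ℕ} {τ : Equiv.Perm (Fin n)}
    (h : ∀ i, Nx Fin.val {j | f i = f j} i (τ i)) (i j : Fin n) : τ.SameCycle i j ↔ f i = f j := by
  constructor
  · intro hs
    obtain ⟨k, rfl⟩ := hs.exists_nat_pow_eq
    clear hs
    induction k with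
    | zero => simp
    | succ k ih =>
      rw [ih, pow_succ', Equiv.Perm.mul_apply]
      exact (h _).1
  · intro e
    refine Nx.sameCycle (r := Fin.val) (A := {j | f i = f j}) Fin.val_injective.injOn ?_ ?_ ?_
    · intro k hk
      have hk' : f i = f k := hk
      rw [hk']; exact h k
    · exact rfl
    · exact e

theorem code_surj (w : Fin n → Bool × Bool) (G : ℕ → ℕ) (h0 : G 0 = 0) (hn : G n = 0)
    (hs : ∀ i : Fin n, 1 ≤ G i + (w i).1.toNat ∧ G (i + 1) + (w i).2.toNat = G i + (w i).1.toNat) :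
    ∃ τ, DNC τ ∧ pcode τ = w := by
  obtain ⟨E, hEd⟩ : ∃ E : ℕ → ℕ, E = fun i => if h : i < n then (w ⟨i, h⟩).1.toNat else 0 := ⟨_, rfl⟩
  obtain ⟨D, hDd⟩ : ∃ D : ℕ → ℕ, D = fun i => if h : i < n then (w ⟨i, h⟩).2.toNat else 0 := ⟨_, rfl⟩
  have hEv : ∀ i : Fin n, E i = (w i).1.toNat := by intro i; simp [hEd]
  have hDv : ∀ i : Fin n, D i = (w i).2.toNat := by intro i; simp [hDd]
  have hE : ∀ i, E i ≤ 1 := by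
    intro i; rw [hEd]; dsimp only; split_ifs
    · exact Bool.toNat_le _
    · omega
  have hD : ∀ i, D i ≤ 1 := by
    intro i; rw [hDd]; dsimp only; split_ifs
    · exact Bool.toNat_le _
    · omega
  have hs' : ∀ i < n, 1 ≤ G i + E i ∧ G (i + 1) + D i = G i + E i := by
    intro i hi
    have := hs ⟨i, hi⟩
    rw [← hEv, ← hDv] at this
    exact this
  choose m hm using fun i : Fin n => blk_exists hE h0 hs' i i.2
  obtain ⟨τ, hτ⟩ := exists_perm_fibre m
  have hsc := sameCycle_fibre hτ
  have hset : ∀ i, {j | τ.SameCycle i j} = {j | m i = m j} := by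
    intro i; ext j; exact hsc i j
  refine ⟨τ, ⟨?_, ?_⟩, ?_⟩
  · intro i
    rw [hset]; exact hτ i
  · intro a b c d hab hbc hcd hac hbd
    rw [hsc] at hac hbd ⊢
    obtain ⟨a1, a2, a3, a4⟩ := hm a
    obtain ⟨b1, b2, b3, b4⟩ := hm b
    obtain ⟨c1, c2, c3, c4⟩ := hm c
    obtain ⟨d1, d2, d3, d4⟩ := hm d
    rw [← hac] at c1 c2 c3 c4
    rw [← hbd] at d1 d2 d3 d4
    have k1 := (c4 b (by omega) (by omega)).1
    have k2 := (d4 c (by omega) (by omega)).1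
    rcases lt_trichotomy (m a) (m b) with hk | hk | hk
    · have := (c4 (m b) hk (by omega)).2 b1; omega
    · exact hk
    · have := (d4 (m a) hk (by omega)).2 a1; omega
  · funext i
    have hA : (pcode τ i).1 = (w i).1 := by
      rw [Bool.eq_iff_iff, pcode_e]
      have hwe : (w i).1 = true ↔ E i = 1 := by rw [hEv]; cases (w i).1 <;> simp
      rw [hwe]
      have h1 := hτ (τ⁻¹ i)
      have e1 : τ (τ⁻¹ i) = i := by simp
      rw [e1] at h1
      have e2 : m (τ⁻¹ i) = m i := h1.1
      constructor
      · intro hle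
        rcases h1.2 with h2 | h2
        · have := h2.1; omega
        · have hmi := hm i
          have hlt : m i < n := lt_of_le_of_lt hmi.2.1 i.2
          have e3 : m ⟨m i, hlt⟩ = m i := (hm ⟨m i, hlt⟩).unique hmi.idem
          have h3 := (h2 ⟨m i, hlt⟩ (e2.trans e3.symm)).1
          have h4 : (i : ℕ) = m i := le_antisymm h3 hmi.2.1
          rw [h4]; exact hmi.1
      · intro he
        have e3 : m i = i := (hm i).unique ⟨he, le_refl _, rfl, fun l h1 h2 => by omega⟩
        have := (hm (τ⁻¹ i)).2.1
        rw [e2, e3] at this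
        exact this
    have hB : (pcode τ i).2 = (w i).2 := by
      rw [Bool.eq_iff_iff, pcode_d]
      have hwd : (w i).2 = true ↔ D i = 1 := by rw [hDv]; cases (w i).2 <;> simp
      rw [hwd]
      have h1 := hτ i
      have hst := hs' i i.2
      obtain ⟨b1, b2, b3, b4⟩ := hm i
      constructor
      · intro hle
        by_contra hd
        have hd0 : D i = 0 := by have := hD i; omega
        have hin := i.2
        obtain ⟨j, a1, a2, a3, a4⟩ := blk_next hn hs' hD (G i + E i) hst.1 (n - (i + 1)) (i + 1) (by omega) (by omega)
        have hj : m ⟨j, a2⟩ = m i := by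
          refine (hm ⟨j, a2⟩).unique ⟨b1, by dsimp only; omega, by dsimp only; omega, ?_⟩
          dsimp only
          intro l l1 l2
          rw [a3]
          by_cases hl : l ≤ i
          · exact b4 l l1 hl
          · exact a4 l (by omega) l2
        rcases h1.2 with h2 | h2
        · have := h2.1; omega
        · have := (h2 ⟨j, a2⟩ hj.symm).2
          dsimp only at this
          omega
      · intro hd
        by_contra hle
        have hj : m i = m (τ i) := h1.1
        obtain ⟨c1, c2, c3, c4⟩ := hm (τ i)
        rw [← hj] at c1 c2 c3 c4
        have := c4 (i + 1) (by omega) (by omega)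
        have := hE (i + 1)
        omega
    exact Prod.ext hA hB

end Surj


section PathCount

open Classical in
/-- Indicator of a proposition. -/
noncomputable def ind (P : Prop) : ℕ := if P then 1 else 0

theorem ind_pos {P : Prop} (h : P) : ind P = 1 := by simp [ind, h]
theorem ind_neg {P : Prop} (h : ¬ P) : ind P = 0 := by simp [ind, h]
theorem ind_true : ind True = 1 := ind_pos trivial
theorem ind_false : ind False = 0 := ind_neg id
theorem ind_and (P Q : Prop) : ind (P ∧ Q) = ind P * ind Q := by
  by_cases hP : P <;> by_cases hQ : Q <;> simp [ind, hP, hQ]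

/-- `w` encodes a ballot path from height `a` to height `b`. -/
def FPath {n : ℕ} (w : Fin n → Bool × Bool) (a b : ℕ) : Prop :=
  ∃ G : ℕ → ℕ, G 0 = a ∧ G n = b ∧
    ∀ i : Fin n, 1 ≤ G i + (w i).1.toNat ∧ G (i + 1) + (w i).2.toNat = G i + (w i).1.toNat

theorem fpath_nil (w : Fin 0 → Bool × Bool) (a b : ℕ) : FPath w a b ↔ a = b := by
  constructor
  · rintro ⟨G, h1, h2, -⟩; rw [← h1, ← h2]
  · rintro rfl; exact ⟨fun _ => a, rfl, rfl, fun i => i.elim0⟩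

theorem fpath_cons {n : ℕ} (s : Bool × Bool) (w : Fin n → Bool × Bool) (a b : ℕ) :
    FPath (@Fin.cons n (fun _ => Bool × Bool) s w) a b ↔
      1 ≤ a + s.1.toNat ∧ FPath w (a + s.1.toNat - s.2.toNat) b := by
  constructor
  · rintro ⟨G, h1, h2, h3⟩
    have h4 := h3 0
    simp only [Fin.cons_zero, Fin.val_zero, h1, zero_add] at h4
    refine ⟨h4.1, fun i => G (i + 1), ?_, h2, ?_⟩
    · dsimp only; rw [zero_add]; omega
    · intro i
      have := h3 i.succ
      simpa using this
  · rintro ⟨h0, G, h1, h2, h3⟩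
    refine ⟨fun i => if i = 0 then a else G (i - 1), by simp, by simpa using h2, ?_⟩
    intro i
    refine Fin.cases ?_ ?_ i
    · have := Bool.toNat_le s.2
      simp [h1]; omega
    · intro i
      simpa using h3 i

theorem fpath_snoc {n : ℕ} (s : Bool × Bool) (w : Fin n → Bool × Bool) (a b : ℕ) :
    FPath (@Fin.snoc n (fun _ => Bool × Bool) w s) a b ↔
      1 ≤ b + s.2.toNat ∧ FPath w a (b + s.2.toNat - s.1.toNat) := by
  constructor
  · rintro ⟨G, h1, h2, h3⟩
    have h4 := h3 (Fin.last n)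
    simp only [Fin.snoc_last, Fin.val_last, h2] at h4
    refine ⟨by omega, G, h1, by omega, ?_⟩
    intro i
    have := h3 i.castSucc
    simpa using this
  · rintro ⟨h0, G, h1, h2, h3⟩
    refine ⟨fun i => if i ≤ n then G i else b, by simpa using h1, by simp, ?_⟩
    intro i
    refine Fin.lastCases ?_ ?_ i
    · have := Bool.toNat_le s.1
      simp [h2]; omega
    · intro i
      have hi : (i : ℕ) ≤ n := i.2.le
      have hi' : (i : ℕ) + 1 ≤ n := i.2
      simpa [hi, hi'] using h3 i

theorem fpath_append {p q : ℕ} (u : Fin p → Bool × Bool) (v : Fin q → Bool × Bool) (a b c : ℕ) :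
    (∃ G : ℕ → ℕ, G 0 = a ∧ G (p + q) = b ∧ G p = c ∧
      ∀ i : Fin (p + q), 1 ≤ G i + (Fin.append u v i).1.toNat ∧
        G (i + 1) + (Fin.append u v i).2.toNat = G i + (Fin.append u v i).1.toNat) ↔
      FPath u a c ∧ FPath v c b := by
  constructor
  · rintro ⟨G, h1, h2, h3, h4⟩
    constructor
    · refine ⟨G, h1, h3, fun i => ?_⟩
      simpa using h4 (Fin.castAdd q i)
    · refine ⟨fun i => G (p + i), h3, h2, fun i => ?_⟩
      simpa [add_assoc] using h4 (Fin.natAdd p i)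
  · rintro ⟨⟨G, h1, h2, h3⟩, ⟨K, k1, k2, k3⟩⟩
    refine ⟨fun i => if i ≤ p then G i else K (i - p), by simpa using h1, ?_, by simpa using h2, ?_⟩
    · dsimp only
      split_ifs with h
      · have : q = 0 := by omega
        subst this
        rw [add_zero, h2, ← k1, k2]
      · rw [Nat.add_sub_cancel_left, k2]
    · intro i
      refine Fin.addCases ?_ ?_ i
      · intro i
        have hi : (i : ℕ) ≤ p := i.2.le
        have hi' : (i : ℕ) + 1 ≤ p := i.2
        simpa [hi, hi'] using h3 i
      · intro i
        have h5 := k3 i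
        simp only [Fin.append_right, Fin.val_natAdd]
        have e1 : (if p + (i : ℕ) ≤ p then G (p + i) else K (p + i - p)) = K i := by
          split_ifs with h
          · have : (i : ℕ) = 0 := by omega
            rw [this, add_zero, h2, k1]
          · rw [Nat.add_sub_cancel_left]
        have e2 : (if p + (i : ℕ) + 1 ≤ p then G (p + i + 1) else K (p + i + 1 - p)) = K (i + 1) := by
          rw [if_neg (by omega)]
          congr 1; omega
        rw [e1, e2]
        exact h5

/-- Number of ballot paths from `a` to `b` with `n` steps. -/
noncomputable def VC (n a b : ℕ) : ℕ := ∑ w : Fin n → Bool × Bool, ind (FPath w a b)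

/-- Number of ballot paths from `0` to `c` whose last step satisfies the linking condition. -/
noncomputable def LC (n c : ℕ) : ℕ :=
  ∑ w : Fin (n + 1) → Bool × Bool, ind (FPath w 0 c ∧ (w (Fin.last n)).2 = false)

/-- Number of ballot paths from `c` to `0` whose first step satisfies the linking condition. -/
noncomputable def RC (n c : ℕ) : ℕ :=
  ∑ w : Fin (n + 1) → Bool × Bool, ind (FPath w c 0 ∧ (w 0).1 = false)

theorem sum_cons {n : ℕ} (F : (Fin (n + 1) → Bool × Bool) → ℕ) :
    ∑ w, F w = ∑ s : Bool × Bool, ∑ w : Fin n → Bool × Bool, F (@Fin.cons n (fun _ => Bool × Bool) s w) := by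
  rw [← Fintype.sum_prod_type']
  exact (Fintype.sum_equiv (Fin.consEquiv fun _ => Bool × Bool) _ _ (fun x => rfl)).symm

theorem sum_snoc {n : ℕ} (F : (Fin (n + 1) → Bool × Bool) → ℕ) :
    ∑ w, F w = ∑ s : Bool × Bool, ∑ w : Fin n → Bool × Bool, F (@Fin.snoc n (fun _ => Bool × Bool) w s) := by
  rw [← Fintype.sum_prod_type']
  exact (Fintype.sum_equiv (Fin.snocEquiv fun _ => Bool × Bool) _ _ (fun x => rfl)).symm

theorem sum_append {p q : ℕ} (F : (Fin (p + q) → Bool × Bool) → ℕ) :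
    ∑ w, F w = ∑ u : Fin p → Bool × Bool, ∑ v : Fin q → Bool × Bool, F (Fin.append u v) := by
  rw [← Fintype.sum_prod_type']
  exact (Fintype.sum_equiv (Fin.appendEquiv p q) _ _ (fun x => rfl)).symm

theorem VC_zero (a b : ℕ) : VC 0 a b = if a = b then 1 else 0 := by
  by_cases h : a = b <;> simp [VC, fpath_nil, h, ind_true, ind_false]

theorem VC_cons (n a b : ℕ) : VC (n + 1) a b =
    ∑ s : Bool × Bool, if 1 ≤ a + s.1.toNat then VC n (a + s.1.toNat - s.2.toNat) b else 0 := by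
  rw [VC, sum_cons]
  refine Finset.sum_congr rfl fun s _ => ?_
  simp only [fpath_cons]
  split_ifs with h
  · simp [h, VC]
  · simp [h, ind_false]

theorem VC_snoc (n a b : ℕ) : VC (n + 1) a b =
    ∑ s : Bool × Bool, if 1 ≤ b + s.2.toNat then VC n a (b + s.2.toNat - s.1.toNat) else 0 := by
  rw [VC, sum_snoc]
  refine Finset.sum_congr rfl fun s _ => ?_
  simp only [fpath_snoc]
  split_ifs with h
  · simp [h, VC]
  · simp [h, ind_false]

theorem LC_eq (n c : ℕ) : LC n (c + 1) = VC n 0 c + VC n 0 (c + 1) := by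
  rw [LC, sum_snoc]
  simp only [fpath_snoc, Fin.snoc_last, Fintype.sum_prod_type, Fintype.sum_bool]
  simp [VC, ind_false]

theorem RC_eq (n c : ℕ) : RC n (c + 1) = VC n c 0 + VC n (c + 1) 0 := by
  rw [RC, sum_cons]
  simp only [fpath_cons, Fin.cons_zero, Fintype.sum_prod_type, Fintype.sum_bool]
  simp [VC, ind_false]

theorem choose_aux (m k : ℕ) : (2 * (m + 1)).choose (k + 2) =
    (2 * m).choose k + 2 * (2 * m).choose (k + 1) + (2 * m).choose (k + 2) := by
  have : 2 * (m + 1) = 2 * m + 1 + 1 := by ring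
  rw [this, Nat.choose_succ_succ, Nat.choose_succ_succ, Nat.choose_succ_succ (2 * m) (k + 1)]
  ring

theorem ballot_formula (f : ℕ → ℕ → ℕ) (h0 : ∀ b, f 0 b = if b = 0 then 1 else 0)
    (h1 : ∀ n, f (n + 1) 0 = f n 0 + f n 1)
    (h2 : ∀ n b, f (n + 1) (b + 1) = f n b + 2 * f n (b + 1) + f n (b + 2)) (n b : ℕ) :
    f n b + (2 * n).choose (n + b + 1) = (2 * n).choose (n + b) := by
  induction n generalizing b with
  | zero =>
    rw [h0]
    cases b <;> simp
  | succ n ih =>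
    cases b with
    | zero =>
      rw [h1]
      have i0 := ih 0
      have i1 := ih 1
      cases n with
      | zero => simp_all
      | succ n =>
        have c1 := choose_aux (n + 1) n
        have c2 := choose_aux (n + 1) (n + 1)
        have c3 : (2 * (n + 1)).choose n = (2 * (n + 1)).choose (n + 2) := by
          rw [← Nat.choose_symm_of_eq_add]; omega
        simp only [add_zero] at *
        rw [show n + 1 + 1 + 1 = n + 3 from rfl, show n + 1 + 1 = n + 2 from rfl] at *
        rw [show n + 1 + 2 = n + 3 from rfl] at *
        rw [show n + 2 + 1 = n + 3 from rfl] at *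
        omega
    | succ b =>
      rw [h2]
      have i0 := ih b
      have i1 := ih (b + 1)
      have i2 := ih (b + 2)
      have c1 := choose_aux n (n + b)
      have c2 := choose_aux n (n + b + 1)
      have e1 : n + 1 + (b + 1) = n + b + 2 := by ring
      have e2 : n + 1 + (b + 1) + 1 = n + b + 3 := by ring
      have e3 : n + (b + 1) = n + b + 1 := by ring
      have e4 : n + (b + 2) = n + b + 2 := by ring
      rw [e1]
      rw [e3] at i1
      rw [e4] at i2
      rw [show n + b + 1 + 2 = n + b + 2 + 1 by ring] at c2
      rw [show n + b + 1 + 1 = n + b + 2 by ring] at *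
      omega

theorem VC_left (n b : ℕ) : VC n 0 b + (2 * n).choose (n + b + 1) = (2 * n).choose (n + b) := by
  refine ballot_formula (fun n b => VC n 0 b) ?_ ?_ ?_ n b
  · intro b; simp [VC_zero, eq_comm]
  · intro n; rw [VC_snoc]
    simp [Fintype.sum_prod_type]
  · intro n b; rw [VC_snoc]
    simp [Fintype.sum_prod_type]
    ring

theorem VC_right (n b : ℕ) : VC n b 0 + (2 * n).choose (n + b + 1) = (2 * n).choose (n + b) := by
  refine ballot_formula (fun n b => VC n b 0) ?_ ?_ ?_ n b
  · intro b; simp [VC_zero]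
  · intro n; rw [VC_cons]
    simp [Fintype.sum_prod_type]
    try ring
  · intro n b; rw [VC_cons]
    simp [Fintype.sum_prod_type]
    ring

theorem w_formula (m c x y : ℕ) (hx : x + (2 * m).choose (m + c + 1) = (2 * m).choose (m + c))
    (hy : y + (2 * m).choose (m + (c + 1) + 1) = (2 * m).choose (m + (c + 1))) :
    (m + 1) * (x + y) = (c + 1) * (2 * (m + 1)).choose (m + 1 + (c + 1)) := by
  have e := choose_aux m (m + c)
  rw [show m + 1 + (c + 1) = m + c + 2 by ring, e]
  rw [show m + (c + 1) + 1 = m + c + 2 by ring, show m + (c + 1) = m + c + 1 by ring] at hy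
  have r1 := Nat.choose_succ_right_eq (2 * m) (m + c)
  have r2 := Nat.choose_succ_right_eq (2 * m) (m + c + 1)
  rw [show m + c + 1 + 1 = m + c + 2 by ring] at r2
  generalize hA : (2 * m).choose (m + c) = A at *
  generalize hB : (2 * m).choose (m + c + 1) = B at *
  generalize hC : (2 * m).choose (m + c + 2) = C at *
  rcases le_or_gt (m + c + 1) (2 * m) with h | h
  · rw [show 2 * m - (m + c) = m - c by omega] at r1
    rw [show 2 * m - (m + c + 1) = m - c - 1 by omega] at r2
    obtain ⟨t, rfl⟩ : ∃ t, m = t + c + 1 := ⟨m - c - 1, by omega⟩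
    rw [show t + c + 1 - c = t + 1 by omega] at r1
    rw [show t + c + 1 - c - 1 = t by omega] at r2
    zify at *
    have hx' : (x : ℤ) = A - B := by linarith
    have hy' : (y : ℤ) = B - C := by linarith
    rw [hx', hy']
    linarith
  · rw [Nat.choose_eq_zero_of_lt (by omega)] at hB hC
    subst hB hC
    rcases (show m ≤ c by omega).lt_or_eq with h' | rfl
    · rw [Nat.choose_eq_zero_of_lt (by omega)] at hA
      subst hA
      have : x = 0 := by omega
      have : y = 0 := by omega
      subst_vars; simp
    · rw [show m + m = 2 * m by ring, Nat.choose_self] at hA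
      subst hA
      have : x = 1 := by omega
      have : y = 0 := by omega
      subst_vars; simp

theorem LC_formula (m c : ℕ) : (m + 1) * LC m (c + 1) = (c + 1) * (2 * (m + 1)).choose (m + 1 + (c + 1)) := by
  rw [LC_eq]; exact w_formula _ _ _ _ (VC_left _ _) (VC_left _ _)

theorem RC_formula (m c : ℕ) : (m + 1) * RC m (c + 1) = (c + 1) * (2 * (m + 1)).choose (m + 1 + (c + 1)) := by
  rw [RC_eq]; exact w_formula _ _ _ _ (VC_right _ _) (VC_right _ _)

end PathCount


section Final

theorem ite_ind {P Q : Prop} [Decidable P] (h : P ↔ Q) : (if P then 1 else 0) = ind Q := by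
  by_cases hP : P
  · rw [if_pos hP, ind_pos (h.1 hP)]
  · rw [if_neg hP, ind_neg (fun hq => hP (h.2 hq))]

theorem link_count (P Q c : ℕ) :
    ∑ τ : Equiv.Perm (Fin ((P + 1) + (Q + 1))),
      ind (AnnNC (P + 1) (Q + 1) τ ∧ openCnt τ (P + 1) = c ∧
        τ (Fin.castAdd (Q + 1) (Fin.last P)) = Fin.natAdd (P + 1) 0) = LC P c * RC Q c := by
  classical
  set x0 : Fin ((P + 1) + (Q + 1)) := Fin.castAdd (Q + 1) (Fin.last P) with hx0
  set y0 : Fin ((P + 1) + (Q + 1)) := Fin.natAdd (P + 1) 0 with hy0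
  have hxy : (x0 : ℕ) + 1 = y0 := by simp [hx0, hy0]
  have e1 : ∑ τ : Equiv.Perm (Fin ((P + 1) + (Q + 1))),
      ind (AnnNC (P + 1) (Q + 1) τ ∧ openCnt τ (P + 1) = c ∧ τ x0 = y0) =
      (Finset.univ.filter fun τ : Equiv.Perm (Fin ((P + 1) + (Q + 1))) =>
        DNC τ ∧ openCnt τ (P + 1) = c ∧ τ x0 = y0).card := by
    rw [Finset.card_filter]
    refine Finset.sum_congr rfl fun τ _ => ?_
    have hiff : (AnnNC (P + 1) (Q + 1) τ ∧ openCnt τ (P + 1) = c ∧ τ x0 = y0) ↔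
        (DNC τ ∧ openCnt τ (P + 1) = c ∧ τ x0 = y0) := by
      constructor
      · rintro ⟨h1, h2, h3⟩
        exact ⟨DNC_of_AnnNC h1 (by simp [hx0]) (by simp [hy0]) h3, h2, h3⟩
      · rintro ⟨h1, h2, h3⟩
        exact ⟨h1.annNC, h2, h3⟩
    rw [hiff]
    by_cases h : (DNC τ ∧ openCnt τ (P + 1) = c ∧ τ x0 = y0)
    · rw [ind_pos h, if_pos h]
    · rw [ind_neg h, if_neg h]
  have e2 : (Finset.univ.filter fun τ : Equiv.Perm (Fin ((P + 1) + (Q + 1))) =>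
        DNC τ ∧ openCnt τ (P + 1) = c ∧ τ x0 = y0).card =
      (Finset.univ.filter fun w : Fin ((P + 1) + (Q + 1)) → Bool × Bool =>
        (∃ G : ℕ → ℕ, G 0 = 0 ∧ G ((P + 1) + (Q + 1)) = 0 ∧ G (P + 1) = c ∧
          ∀ i : Fin ((P + 1) + (Q + 1)), 1 ≤ G i + (w i).1.toNat ∧
            G (i + 1) + (w i).2.toNat = G i + (w i).1.toNat) ∧
        (w x0).2 = false ∧ (w y0).1 = false).card := by
    refine Finset.card_bij (fun τ _ => pcode τ) ?_ ?_ ?_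
    · intro τ hτ
      simp only [Finset.mem_filter, Finset.mem_univ, true_and] at hτ ⊢
      exact ⟨⟨openCnt τ, openCnt_zero τ, openCnt_top τ, hτ.2.1,
        fun i => ⟨openCnt_pos τ i, openCnt_step τ i⟩⟩, (link_iff hτ.1 hxy).1 hτ.2.2⟩
    · intro τ hτ σ hσ e
      simp only [Finset.mem_filter, Finset.mem_univ, true_and] at hτ hσ
      exact code_inj hτ.1 hσ.1 e
    · intro w hw
      simp only [Finset.mem_filter, Finset.mem_univ, true_and] at hw
      obtain ⟨⟨G, g0, gn, gp, hG⟩, hw2⟩ := hw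
      obtain ⟨τ, hτ, rfl⟩ := code_surj w G g0 gn hG
      refine ⟨τ, ?_, rfl⟩
      simp only [Finset.mem_filter, Finset.mem_univ, true_and]
      refine ⟨hτ, ?_, (link_iff hτ hxy).2 hw2⟩
      have huniq : ∀ k, k ≤ (P + 1) + (Q + 1) → openCnt τ k = G k := by
        intro k
        induction k with
        | zero => intro _; rw [g0, openCnt_zero]
        | succ k ih =>
          intro hk
          have h1 := openCnt_step τ ⟨k, hk⟩
          have h2 := (hG ⟨k, hk⟩).2
          have h3 := ih (by omega)
          dsimp only at h1 h2
          omega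
      rw [huniq _ (by omega), gp]
  rw [e1, e2, Finset.card_filter, sum_append, LC, RC, Finset.sum_mul_sum]
  refine Finset.sum_congr rfl fun u _ => Finset.sum_congr rfl fun v _ => ?_
  rw [← ind_and]
  have hiff := fpath_append u v 0 0 c
  have hx : (Fin.append u v x0) = u (Fin.last P) := by rw [hx0, Fin.append_left]
  have hy : (Fin.append u v y0) = v 0 := by rw [hy0, Fin.append_right]
  rw [hx, hy]
  apply ite_ind
  rw [hiff]
  tauto

variable {p q : ℕ}

theorem openCnt_eq (τ : Equiv.Perm (Fin (p + q))) :
    openCnt τ p = ∑ x, ind (x ∈ extSet p q ∧ τ x ∈ intSet p q) := by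
  classical
  rw [openCnt, Finset.card_filter]
  refine Finset.sum_congr rfl fun x _ => ?_
  exact ite_ind Iff.rfl

theorem openCnt_conj {g : Equiv.Perm (Fin (p + q))} (h : RotSym p q g) (τ : Equiv.Perm (Fin (p + q))) :
    openCnt (g * τ * g⁻¹) p = openCnt τ p := by
  rw [openCnt_eq, openCnt_eq]
  refine (Fintype.sum_equiv g _ _ fun x => ?_).symm
  simp [h.ext, h.int]

theorem link_inv {x x' y y' : Fin (p + q)} (hx : x ∈ extSet p q) (hx' : x' ∈ extSet p q)
    (hy : y ∈ intSet p q) (hy' : y' ∈ intSet p q) (c : ℕ) :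
    ∑ τ : Equiv.Perm (Fin (p + q)), ind (AnnNC p q τ ∧ openCnt τ p = c ∧ τ x = y) =
    ∑ τ : Equiv.Perm (Fin (p + q)), ind (AnnNC p q τ ∧ openCnt τ p = c ∧ τ x' = y') := by
  obtain ⟨g, hg, e1, e2⟩ := exists_rot hx hx' hy hy'
  refine Fintype.sum_equiv (MulAut.conj g).toEquiv _ _ fun τ => ?_
  have e : (MulAut.conj g).toEquiv τ = g * τ * g⁻¹ := rfl
  rw [e, openCnt_conj hg]
  congr 1
  apply propext
  have e3 : (g * τ * g⁻¹) x' = y' ↔ τ x = y := by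
    rw [← e1, ← e2]; simp
  have e4 : AnnNC p q (g * τ * g⁻¹) ↔ AnnNC p q τ := by
    constructor
    · intro h
      have := hg.inv.annNC h
      have e : g⁻¹ * (g * τ * g⁻¹) * g⁻¹⁻¹ = τ := by group
      rwa [e] at this
    · exact hg.annNC
  rw [e3, e4]

theorem sum_ext : ∑ x : Fin (p + q), ind (x ∈ extSet p q) = p := by
  rw [Fin.sum_univ_add]
  have h1 : ∀ i : Fin p, ind (Fin.castAdd q i ∈ extSet p q) = 1 := fun i =>
    ind_pos (by simp [extSet])
  have h2 : ∀ i : Fin q, ind (Fin.natAdd p i ∈ extSet p q) = 0 := fun i =>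
    ind_neg (by simp [extSet])
  simp [h1, h2]

theorem sum_int : ∑ x : Fin (p + q), ind (x ∈ intSet p q) = q := by
  rw [Fin.sum_univ_add]
  have h1 : ∀ i : Fin p, ind (Fin.castAdd q i ∈ intSet p q) = 0 := fun i =>
    ind_neg (by simp [intSet])
  have h2 : ∀ i : Fin q, ind (Fin.natAdd p i ∈ intSet p q) = 1 := fun i =>
    ind_pos (by simp [intSet])
  simp [h1, h2]

theorem sum_ind_eq {α : Type*} [Fintype α] (P : α → Prop) (a : α) :
    ∑ y, ind (P y ∧ a = y) = ind (P a) := by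
  rw [Finset.sum_eq_single a]
  · simp
  · intro b _ hb
    exact ind_neg fun h => hb h.2.symm
  · simp

/-- Number of annular non-crossing permutations with `c` crossing arcs. -/
noncomputable def NN (p q c : ℕ) : ℕ :=
  ∑ τ : Equiv.Perm (Fin (p + q)), ind (AnnNC p q τ ∧ openCnt τ p = c)

theorem double_count (c K : ℕ)
    (hK : ∀ x ∈ extSet p q, ∀ y ∈ intSet p q,
      ∑ τ : Equiv.Perm (Fin (p + q)), ind (AnnNC p q τ ∧ openCnt τ p = c ∧ τ x = y) = K) :
    c * NN p q c = p * q * K := by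
  have e1 : c * NN p q c = ∑ τ : Equiv.Perm (Fin (p + q)), ∑ x : Fin (p + q), ∑ y : Fin (p + q),
      ind (x ∈ extSet p q) * (ind (y ∈ intSet p q) *
        ind (AnnNC p q τ ∧ openCnt τ p = c ∧ τ x = y)) := by
    rw [NN, Finset.mul_sum]
    refine Finset.sum_congr rfl fun τ _ => ?_
    have e2 : c * ind (AnnNC p q τ ∧ openCnt τ p = c) =
        ind (AnnNC p q τ ∧ openCnt τ p = c) * openCnt τ p := by
      by_cases h : AnnNC p q τ ∧ openCnt τ p = c
      · rw [ind_pos h, h.2]; ring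
      · rw [ind_neg h]; simp
    rw [e2]
    conv_lhs => rw [openCnt_eq τ, ← openCnt_eq τ]
    have e3 : openCnt τ p = ∑ x, ind (x ∈ extSet p q) * ∑ y, ind (y ∈ intSet p q ∧ τ x = y) := by
      rw [openCnt_eq]
      refine Finset.sum_congr rfl fun x _ => ?_
      rw [sum_ind_eq (fun y => y ∈ intSet p q), ind_and]
    conv_lhs => rhs; rw [e3]
    rw [Finset.mul_sum]
    refine Finset.sum_congr rfl fun x _ => ?_
    rw [Finset.mul_sum, Finset.mul_sum]
    refine Finset.sum_congr rfl fun y _ => ?_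
    simp only [ind_and]
    ring
  rw [e1, Finset.sum_comm]
  have e4 : ∀ x : Fin (p + q), ∑ τ : Equiv.Perm (Fin (p + q)), ∑ y : Fin (p + q),
      ind (x ∈ extSet p q) * (ind (y ∈ intSet p q) *
        ind (AnnNC p q τ ∧ openCnt τ p = c ∧ τ x = y)) =
      ind (x ∈ extSet p q) * (q * K) := by
    intro x
    by_cases hx : x ∈ extSet p q
    · rw [Finset.sum_comm]
      simp only [ind_pos hx, one_mul]
      conv_rhs => rw [← sum_int (p := p) (q := q), Finset.sum_mul]
      refine Finset.sum_congr rfl fun y _ => ?_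
      rw [← Finset.mul_sum]
      by_cases hy : y ∈ intSet p q
      · rw [hK x hx y hy]
      · rw [ind_neg hy]; simp
    · simp [ind_neg hx]
  rw [Finset.sum_congr rfl fun x _ => e4 x, ← Finset.sum_mul, sum_ext]
  ring

theorem NN_formula (hp : 0 < p) (hq : 0 < q) (c : ℕ) :
    NN p q (c + 1) = (c + 1) * ((2 * p).choose (p + (c + 1)) * (2 * q).choose (q + (c + 1))) := by
  obtain ⟨P, rfl⟩ : ∃ P, p = P + 1 := ⟨p - 1, by omega⟩
  obtain ⟨Q, rfl⟩ : ∃ Q, q = Q + 1 := ⟨q - 1, by omega⟩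
  have h := double_count (p := P + 1) (q := Q + 1) (c + 1) (LC P (c + 1) * RC Q (c + 1)) (by
    intro x hx y hy
    rw [← link_count]
    exact link_inv hx (by simp [extSet]) hy (by simp [intSet]) _)
  have hL := LC_formula P c
  have hR := RC_formula Q c
  apply Nat.eq_of_mul_eq_mul_left (show 0 < c + 1 by omega)
  calc (c + 1) * NN (P + 1) (Q + 1) (c + 1)
      = ((P + 1) * LC P (c + 1)) * ((Q + 1) * RC Q (c + 1)) := by rw [h]; ring
    _ = _ := by rw [hL, hR]; ring

theorem connected_iff (τ : Equiv.Perm (Fin (p + q))) : AnnConnected p q τ ↔ openCnt τ p ≠ 0 := by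
  constructor
  · rintro ⟨A, ⟨a0, rfl⟩, ⟨a, ha, hae⟩, ⟨b, hb, hbi⟩⟩ h0
    have hab : τ.SameCycle a b := Equiv.Perm.SameCycle.trans (Equiv.Perm.SameCycle.symm ha) hb
    obtain ⟨k, rfl⟩ := hab.exists_nat_pow_eq
    have hclosed : ∀ x ∈ extSet p q, τ x ∈ extSet p q := by
      intro x hx
      by_contra hc
      have : x ∈ (Finset.univ.filter fun k : Fin (p + q) => (k : ℕ) < p ∧ p ≤ (τ k : ℕ)) := by
        simp only [Finset.mem_filter, Finset.mem_univ, true_and]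
        exact ⟨hx, (int_iff_not_ext _).2 hc⟩
      rw [Finset.card_eq_zero.1 h0] at this
      simp at this
    have hall : ∀ k : ℕ, (τ ^ k) a ∈ extSet p q := by
      intro k
      induction k with
      | zero => simpa using hae
      | succ k ih => rw [pow_succ', Equiv.Perm.mul_apply]; exact hclosed _ ih
    exact (int_iff_not_ext _).1 hbi (hall k)
  · intro h
    obtain ⟨x, hx⟩ := Finset.card_ne_zero.1 h
    simp only [Finset.mem_filter, Finset.mem_univ, true_and] at hx
    exact ⟨_, ⟨x, rfl⟩, ⟨x, Equiv.Perm.SameCycle.refl _ _, hx.1⟩, ⟨τ x, sc_app τ x, hx.2⟩⟩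

theorem openCnt_le (τ : Equiv.Perm (Fin (p + q))) : openCnt τ p ≤ p := by
  rw [openCnt_eq]
  calc _ ≤ ∑ x : Fin (p + q), ind (x ∈ extSet p q) := by
        refine Finset.sum_le_sum fun x _ => ?_
        rw [ind_and]
        have : ind (τ x ∈ intSet p q) ≤ 1 := by unfold ind; split_ifs <;> omega
        calc _ ≤ ind (x ∈ extSet p q) * 1 := Nat.mul_le_mul_left _ this
          _ = _ := mul_one _
    _ = p := sum_ext

theorem total_eq : Set.ncard {τ : Equiv.Perm (Fin (p + q)) | AnnNC p q τ ∧ AnnConnected p q τ} =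
    ∑ c ∈ Finset.range p, NN p q (c + 1) := by
  classical
  have e1 : Set.ncard {τ : Equiv.Perm (Fin (p + q)) | AnnNC p q τ ∧ AnnConnected p q τ} =
      ∑ τ : Equiv.Perm (Fin (p + q)), ind (AnnNC p q τ ∧ openCnt τ p ≠ 0) := by
    rw [Set.ncard_eq_toFinset_card', Set.toFinset_ofPred, Finset.card_filter]
    refine Finset.sum_congr rfl fun τ _ => ?_
    rw [← connected_iff]
    exact ite_ind Iff.rfl
  rw [e1]
  simp only [NN]
  rw [Finset.sum_comm]
  refine Finset.sum_congr rfl fun τ _ => ?_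
  have hle := openCnt_le τ
  by_cases h : AnnNC p q τ ∧ openCnt τ p ≠ 0
  · rw [ind_pos h, Finset.sum_eq_single (openCnt τ p - 1)]
    · rw [ind_pos ⟨h.1, by omega⟩]
    · intro b _ hb
      exact ind_neg fun h' => hb (by omega)
    · intro hn
      rw [Finset.mem_range] at hn
      have := h.2
      omega
  · rw [ind_neg h]
    symm
    refine Finset.sum_eq_zero fun c _ => ind_neg fun h' => h ⟨h'.1, by omega⟩

theorem choose_step (p k : ℕ) : ((2 * p).choose (p + (k + 1)) : ℤ) * (p + k + 1) =
    ((2 * p).choose (p + k) : ℤ) * (p - k) := by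
  have h := Nat.choose_succ_right_eq (2 * p) (p + k)
  rcases le_or_gt k p with hk | hk
  · rw [show 2 * p - (p + k) = p - k by omega] at h
    zify [hk] at h
    exact_mod_cast h
  · rw [Nat.choose_eq_zero_of_lt (show 2 * p < p + k by omega),
      Nat.choose_eq_zero_of_lt (show 2 * p < p + (k + 1) by omega)]
    simp

theorem telescope (p q k : ℕ) :
    2 * ((p : ℤ) + q) * ∑ c ∈ Finset.range k,
      (((c + 1) * ((2 * p).choose (p + (c + 1)) * (2 * q).choose (q + (c + 1))) : ℕ) : ℤ) +
      (p - k) * (q - k) * ((2 * p).choose (p + k) * (2 * q).choose (q + k)) =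
    p * q * ((2 * p).choose p * (2 * q).choose q) := by
  induction k with
  | zero => simp
  | succ k ih =>
    rw [← ih, Finset.sum_range_succ]
    have h1 := choose_step p k
    have h2 := choose_step q k
    have h3 : ((2 * p).choose (p + (k + 1)) : ℤ) * (p + k + 1) * (((2 * q).choose (q + (k + 1)) : ℤ) * (q + k + 1)) =
      ((2 * p).choose (p + k) : ℤ) * (p - k) * (((2 * q).choose (q + k) : ℤ) * (q - k)) := by
      rw [h1, h2]
    push_cast at h3 ⊢
    linear_combination h3

theorem choose_half (p : ℕ) (hp : 0 < p) : (2 * p).choose p = 2 * (2 * p - 1).choose p := by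
  obtain ⟨P, rfl⟩ : ∃ P, p = P + 1 := ⟨p - 1, by omega⟩
  rw [show 2 * (P + 1) - 1 = 2 * P + 1 by omega, show 2 * (P + 1) = (2 * P + 1) + 1 by ring,
    Nat.choose_succ_succ, Nat.choose_symm_half]
  ring

end Final

theorem stmt_3 (p q : ℕ) (hp : 0 < p) (hq : 0 < q) :
    (p + q) * Set.ncard {τ : Equiv.Perm (Fin (p + q)) | AnnNC p q τ ∧ AnnConnected p q τ} =
      2 * p * q * Nat.choose (2 * p - 1) p * Nat.choose (2 * q - 1) q := by
  rw [total_eq, Finset.sum_congr rfl fun c _ => NN_formula hp hq c]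
  have h := telescope p q p
  rw [sub_self, zero_mul, zero_mul, add_zero, choose_half p hp, choose_half q hq] at h
  zify
  push_cast at h ⊢
  have h2 : (2 : ℤ) ≠ 0 := by norm_num
  apply mul_left_cancel₀ h2
  linear_combination h
end
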